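/- arXiv:2501.18570 — 3 statements merged into one kernel-verified Lean document; each statement's English description precedes it below -/
import Mathlib

section
/- Fix an integer k ≥ 3. Let p_n denote the probability that k independent uniformly random spanning trees of K_n have at least one common edge. Then for all n ≥ 4, C(n,2)(2/n)^k − (n(n−1)(n−2)/2)(3/n²)^k − (n(n−1)(n−2)(n−3)/8)(4/n²)^k ≤ p_n ≤ C(n,2)(2/n)^k. Consequently p_n = C(n,2)(2/n)^k − O(n^{4−2k}), and in particular p_n → 0 as n → ∞. -/
/-- `p_n`: the probability that `k` independent uniformly random spanning trees of
`K_n` have at least one common edge, i.e. the number of ordered `k`-tuples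
`(T₁, …, T_k)` of spanning trees of `K_n` with `E(T₁) ∩ ⋯ ∩ E(T_k) ≠ ∅`, divided by
the number `n^(k(n-2))` of such tuples. -/
noncomputable def probCommonEdgeExists (k n : ℕ) : ℝ :=
  (Nat.card {f : Fin k → SimpleGraph (Fin n) //
      (∀ i, (f i).IsTree) ∧ ∃ e, ∀ i, e ∈ (f i).edgeSet} : ℝ) /
    (n : ℝ) ^ (k * (n - 2))

namespace TreeCount
open Finset SimpleGraph
open scoped Classical in
/-- component of a vertex -/
noncomputable def cmp {V : Type} [Fintype V] (F : SimpleGraph V) (w : V) : Finset V :=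
  univ.filter fun x => F.Reachable w x

/-- size of the component of a vertex -/
noncomputable def sz {V : Type} [Fintype V] (F : SimpleGraph V) (w : V) : ℕ := (cmp F w).card

/-- number of components -/
noncomputable def nc {V : Type} [Fintype V] (F : SimpleGraph V) : ℝ := ∑ w, (1 : ℝ) / sz F w

/-- product of component sizes -/
noncomputable def pr {V : Type} [Fintype V] (F : SimpleGraph V) : ℝ :=
  ∏ w, ((sz F w : ℝ) ^ ((1 : ℝ) / sz F w))

open scoped Classical in
/-- number of darts -/
noncomputable def nd {V : Type} [Fintype V] (F : SimpleGraph V) : ℝ :=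
  ∑ u, ∑ v, if F.Adj u v then (1 : ℝ) else 0

open scoped Classical in
/-- trees containing a graph -/
noncomputable def Tr {V : Type} [Fintype V] (F : SimpleGraph V) : Finset (SimpleGraph V) :=
  univ.filter fun T => T.IsTree ∧ F ≤ T

set_option linter.unusedSectionVars false

variable {V : Type} [Fintype V]

lemma mem_cmp (F : SimpleGraph V) (w x : V) : x ∈ cmp F w ↔ F.Reachable w x := by
  simp [cmp]

lemma mem_Tr (F T : SimpleGraph V) : T ∈ Tr F ↔ T.IsTree ∧ F ≤ T := by
  simp [Tr]

lemma sz_pos (F : SimpleGraph V) (w : V) : 0 < sz F w :=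
  card_pos.mpr ⟨w, by rw [mem_cmp]⟩

lemma cmp_eq (F : SimpleGraph V) {w x : V} (h : F.Reachable w x) : cmp F x = cmp F w := by
  ext y; simp only [mem_cmp]
  exact ⟨fun h' => h.trans h', fun h' => h.symm.trans h'⟩

lemma sz_eq (F : SimpleGraph V) {w x : V} (h : F.Reachable w x) : sz F x = sz F w := by
  rw [sz, cmp_eq F h, sz]

lemma reach_sup_edge (F : SimpleGraph V) (u v x y : V) :
    (F ⊔ edge u v).Reachable x y ↔ F.Reachable x y ∨
      (F.Reachable x u ∧ F.Reachable v y) ∨ (F.Reachable x v ∧ F.Reachable u y) := by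
  constructor
  · rintro ⟨p⟩
    induction p with
    | nil => left; rfl
    | cons h p ih =>
      rename_i a b c
      rw [sup_adj, edge_adj] at h
      rcases h with h | ⟨⟨rfl, rfl⟩ | ⟨rfl, rfl⟩, -⟩
      · have := h.reachable
        rcases ih with ih | ⟨i1, i2⟩ | ⟨i1, i2⟩
        · exact Or.inl (this.trans ih)
        · exact Or.inr (Or.inl ⟨this.trans i1, i2⟩)
        · exact Or.inr (Or.inr ⟨this.trans i1, i2⟩)
      · rcases ih with ih | ⟨i1, i2⟩ | ⟨i1, i2⟩
        · exact Or.inr (Or.inl ⟨by rfl, ih⟩)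
        · exact Or.inr (Or.inl ⟨by rfl, i2⟩)
        · exact Or.inl i2
      · rcases ih with ih | ⟨i1, i2⟩ | ⟨i1, i2⟩
        · exact Or.inr (Or.inr ⟨by rfl, ih⟩)
        · exact Or.inl i2
        · exact Or.inr (Or.inr ⟨by rfl, i2⟩)
  · have hm : ∀ {a b}, F.Reachable a b → (F ⊔ edge u v).Reachable a b :=
      fun h => h.mono le_sup_left
    have huv : (F ⊔ edge u v).Reachable u v := by
      by_cases h : u = v
      · subst h; rfl
      · apply Adj.reachable; rw [sup_adj, edge_adj]; right; simp [h]
    rintro (h | ⟨h1, h2⟩ | ⟨h1, h2⟩)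
    · exact hm h
    · exact (hm h1).trans (huv.trans (hm h2))
    · exact (hm h1).trans (huv.symm.trans (hm h2))

lemma cmp_disj (F : SimpleGraph V) {u v : V} (h : ¬ F.Reachable u v) :
    Disjoint (cmp F u) (cmp F v) := by
  rw [Finset.disjoint_left]
  intro x hx hy
  rw [mem_cmp] at hx hy
  exact h (hx.trans hy.symm)

lemma sz_sup_in (F : SimpleGraph V) {u v : V} (h : ¬ F.Reachable u v) (w : V)
    (hw : F.Reachable u w ∨ F.Reachable v w) :
    sz (F ⊔ edge u v) w = sz F u + sz F v := by
  classical
  rw [sz, sz, sz, ← card_union_of_disjoint (cmp_disj F h)]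
  congr 1
  ext y
  simp only [mem_union, mem_cmp, reach_sup_edge]
  have t : ∀ {a b c}, F.Reachable a b → F.Reachable b c → F.Reachable a c := fun h h' => h.trans h'
  have s : ∀ {a b}, F.Reachable a b → F.Reachable b a := fun h => h.symm
  rcases hw with hw | hw
  · constructor
    · rintro (h1 | ⟨h1, h2⟩ | ⟨h1, h2⟩)
      · exact Or.inl (t hw h1)
      · exact Or.inr h2
      · exact Or.inl h2
    · rintro (h1 | h1)
      · exact Or.inl (t (s hw) h1)
      · exact Or.inr (Or.inl ⟨s hw, h1⟩)
  · constructor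
    · rintro (h1 | ⟨h1, h2⟩ | ⟨h1, h2⟩)
      · exact Or.inr (t hw h1)
      · exact Or.inr h2
      · exact Or.inl h2
    · rintro (h1 | h1)
      · exact Or.inr (Or.inr ⟨s hw, h1⟩)
      · exact Or.inl (t (s hw) h1)

lemma sz_sup_out (F : SimpleGraph V) {u v : V} (w : V)
    (hu : ¬ F.Reachable u w) (hv : ¬ F.Reachable v w) :
    sz (F ⊔ edge u v) w = sz F w := by
  rw [sz, sz]
  congr 1
  ext y
  simp only [mem_cmp, reach_sup_edge]
  constructor
  · rintro (h1 | ⟨h1, h2⟩ | ⟨h1, h2⟩)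
    · exact h1
    · exact absurd h1.symm hu
    · exact absurd h1.symm hv
  · exact Or.inl

lemma prod_split {M : Type} [CommMonoid M] (F : SimpleGraph V) {u v : V}
    (h : ¬ F.Reachable u v) (f : ℕ → M) :
    ∃ R : M, ∏ w, f (sz F w) = f (sz F u) ^ sz F u * f (sz F v) ^ sz F v * R ∧
      ∏ w, f (sz (F ⊔ edge u v) w) = f (sz F u + sz F v) ^ (sz F u + sz F v) * R := by
  classical
  refine ⟨∏ w ∈ (cmp F u ∪ cmp F v)ᶜ, f (sz F w), ?_, ?_⟩
  · rw [← prod_mul_prod_compl (cmp F u ∪ cmp F v), prod_union (cmp_disj F h)]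
    congr 2
    · rw [prod_congr rfl (g := fun _ => f (sz F u)), prod_const]; · rfl
      intro x hx; rw [mem_cmp] at hx; rw [sz_eq F hx]
    · rw [prod_congr rfl (g := fun _ => f (sz F v)), prod_const]; · rfl
      intro x hx; rw [mem_cmp] at hx; rw [sz_eq F hx]
  · rw [← prod_mul_prod_compl (cmp F u ∪ cmp F v)]
    congr 1
    · rw [prod_congr rfl (g := fun _ => f (sz F u + sz F v)), prod_const,
        card_union_of_disjoint (cmp_disj F h)]; · rfl
      intro x hx; rw [mem_union, mem_cmp, mem_cmp] at hx; rw [sz_sup_in F h x hx]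
    · apply prod_congr rfl
      intro x hx
      rw [mem_compl, mem_union, mem_cmp, mem_cmp, not_or] at hx
      rw [sz_sup_out F x hx.1 hx.2]

lemma nc_sup (F : SimpleGraph V) {u v : V} (h : ¬ F.Reachable u v) :
    nc (F ⊔ edge u v) = nc F - 1 := by
  obtain ⟨R, h1, h2⟩ := prod_split F h (fun m => Multiplicative.ofAdd ((1 : ℝ) / m))
  have h1' := congrArg Multiplicative.toAdd h1
  have h2' := congrArg Multiplicative.toAdd h2
  simp only [toAdd_prod, toAdd_mul, toAdd_pow, toAdd_ofAdd, nsmul_eq_mul] at h1' h2'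
  have hu : (sz F u : ℝ) ≠ 0 := by exact_mod_cast (sz_pos F u).ne'
  have hv : (sz F v : ℝ) ≠ 0 := by exact_mod_cast (sz_pos F v).ne'
  have huv : ((sz F u + sz F v : ℕ) : ℝ) ≠ 0 := by
    have := sz_pos F u
    exact_mod_cast (by omega)
  rw [mul_one_div_cancel huv] at h2'
  rw [mul_one_div_cancel hu, mul_one_div_cancel hv] at h1'
  rw [nc, nc, h1', h2']; ring

lemma rpow_self {m : ℕ} (hm : 0 < m) : ((m : ℝ) ^ ((1 : ℝ) / m)) ^ m = m := by
  rw [one_div, Real.rpow_inv_natCast_pow (by positivity) hm.ne']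

lemma pr_sup (F : SimpleGraph V) {u v : V} (h : ¬ F.Reachable u v) :
    pr (F ⊔ edge u v) = pr F * (1 / sz F u + 1 / sz F v) := by
  obtain ⟨R, h1, h2⟩ := prod_split F h (fun m => (m : ℝ) ^ ((1 : ℝ) / m))
  have pu := sz_pos F u
  have pv := sz_pos F v
  rw [rpow_self pu, rpow_self pv] at h1
  rw [rpow_self (by omega)] at h2
  rw [pr, pr, h1, h2]
  have hu : (sz F u : ℝ) ≠ 0 := by exact_mod_cast pu.ne'
  have hv : (sz F v : ℝ) ≠ 0 := by exact_mod_cast pv.ne'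
  push_cast
  field_simp
  ring

lemma nd_sup (F : SimpleGraph V) {u v : V} (h : ¬ F.Reachable u v) :
    nd (F ⊔ edge u v) = nd F + 2 := by
  classical
  have huv : u ≠ v := by rintro rfl; exact h (by rfl)
  have hn : ¬ F.Adj u v := fun h' => h h'.reachable
  have hn' : ¬ F.Adj v u := fun h' => h h'.symm.reachable
  have key : ∀ x y, (if (F ⊔ edge u v).Adj x y then (1 : ℝ) else 0) =
      (if F.Adj x y then (1 : ℝ) else 0) + ((if x = u then (if y = v then 1 else 0) else 0) +
        (if x = v then (if y = u then 1 else 0) else 0)) := by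
    intro x y
    simp only [sup_adj, edge_adj]
    by_cases h1 : x = u <;> by_cases h2 : y = v <;> by_cases h3 : x = v <;> by_cases h4 : y = u <;>
      simp_all
  have : nd (F ⊔ edge u v) = ∑ x, ∑ y, ((if F.Adj x y then (1 : ℝ) else 0) +
      ((if x = u then (if y = v then 1 else 0) else 0) +
        (if x = v then (if y = u then 1 else 0) else 0))) := by
    unfold nd
    refine sum_congr rfl fun x _ => sum_congr rfl fun y _ => ?_
    rw [← key]
    congr
  rw [this]
  simp only [sum_add_distrib]
  have e1 : ∑ x : V, ∑ y : V, (if x = u then (if y = v then (1 : ℝ) else 0) else 0) = 1 := by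
    rw [sum_eq_single u] <;> simp +contextual
  have e2 : ∑ x : V, ∑ y : V, (if x = v then (if y = u then (1 : ℝ) else 0) else 0) = 1 := by
    rw [sum_eq_single v] <;> simp +contextual
  rw [e1, e2, nd]
  norm_num

lemma nd_tree {T : SimpleGraph V} (h : T.IsTree) : nd T = 2 * ((Fintype.card V : ℝ) - 1) := by
  classical
  have h1 := h.card_edgeFinset
  have h2 := T.sum_degrees_eq_twice_card_edges
  have : nd T = ((∑ v, T.degree v : ℕ) : ℝ) := by
    push_cast
    unfold nd
    apply sum_congr rfl
    intro u _
    rw [← card_neighborFinset_eq_degree, neighborFinset_eq_filter, sum_boole]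
  rw [this, h2, ← h1]; push_cast; ring

open scoped Classical in
lemma sum_nonreach (F : SimpleGraph V) :
    ∑ u, ∑ v, (if F.Reachable u v then (0 : ℝ) else 1 / sz F u + 1 / sz F v) =
      2 * ((Fintype.card V : ℝ) * nc F - Fintype.card V) := by
  have h1 : ∑ u, ∑ v, (if F.Reachable u v then (0 : ℝ) else 1 / sz F u) =
      (Fintype.card V : ℝ) * nc F - Fintype.card V := by
    have : ∀ u, ∑ v, (if F.Reachable u v then (0 : ℝ) else 1 / sz F u) =
        (Fintype.card V : ℝ) * (1 / sz F u) - 1 := by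
      intro u
      have e : ∀ v, (if F.Reachable u v then (0 : ℝ) else 1 / sz F u) =
        1 / sz F u - (if F.Reachable u v then 1 / (sz F u : ℝ) else 0) := by
        intro v; split_ifs <;> simp
      simp only [e, sum_sub_distrib, sum_const, card_univ, nsmul_eq_mul]
      congr 1
      rw [← sum_filter, sum_const, nsmul_eq_mul]
      have hu : (sz F u : ℝ) ≠ 0 := by exact_mod_cast (sz_pos F u).ne'
      exact mul_one_div_cancel hu
    simp only [this, sum_sub_distrib, ← mul_sum]
    simp [nc]
  have h2 : ∑ u, ∑ v, (if F.Reachable u v then (0 : ℝ) else 1 / sz F v) =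
      (Fintype.card V : ℝ) * nc F - Fintype.card V := by
    rw [← h1, sum_comm]
    simp only [reachable_comm]
  rw [two_mul]
  nth_rw 1 [← h1]
  rw [← h2, ← sum_add_distrib]
  apply sum_congr rfl; intro u _
  rw [← sum_add_distrib]
  apply sum_congr rfl; intro v _
  split_ifs <;> simp

lemma edge_sup_le {F T : SimpleGraph V} {u v : V} (h : u ≠ v) :
    F ⊔ edge u v ≤ T ↔ F ≤ T ∧ T.Adj u v := by
  rw [sup_le_iff, edge_le_iff]; simp [h]

open scoped Classical in
lemma double_count {F : SimpleGraph V} (hinv : nd F + 2 * nc F = 2 * Fintype.card V) :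
    ((Tr F).card : ℝ) * (2 * (nc F - 1)) =
      ∑ u, ∑ v, (if F.Reachable u v then (0 : ℝ) else ((Tr (F ⊔ edge u v)).card : ℝ)) := by
  have h1 : ∀ T ∈ Tr F, ∑ u, ∑ v, (if T.Adj u v ∧ ¬ F.Reachable u v then (1 : ℝ) else 0) =
      2 * (nc F - 1) := by
    intro T hT
    rw [mem_Tr] at hT
    have : 2 * (nc F - 1) = nd T - nd F := by rw [nd_tree hT.1]; linarith
    rw [this, nd, nd, ← sum_sub_distrib]
    apply sum_congr rfl; intro u _
    rw [← sum_sub_distrib]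
    apply sum_congr rfl; intro v _
    by_cases hF : F.Adj u v
    · simp [hF, hT.2 hF, hF.reachable]
    · by_cases hTa : T.Adj u v
      · have : ¬ F.Reachable u v := by
          intro hr
          have hac := hT.1.isAcyclic.anti ((edge_sup_le hTa.ne).2 ⟨hT.2, hTa⟩)
          rw [isAcyclic_sup_fromEdgeSet_iff] at hac
          rcases hac.2 hr with h | h
          · exact hTa.ne h
          · exact hF h
        simp [hF, hTa, this]
      · simp [hF, hTa]
  rw [← nsmul_eq_mul, ← sum_const, ← sum_congr rfl h1, sum_comm]
  apply sum_congr rfl; intro u _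
  rw [sum_comm]
  apply sum_congr rfl; intro v _
  split_ifs with h
  · simp [h]
  · simp only [h, not_false_eq_true, and_true]
    rw [← sum_filter, sum_const, nsmul_eq_mul, mul_one]
    congr 2
    have huv : u ≠ v := by rintro rfl; exact h (by rfl)
    ext T
    simp only [mem_filter, mem_Tr, edge_sup_le huv]
    tauto

lemma sz_le (F : SimpleGraph V) (w : V) : sz F w ≤ Fintype.card V := card_le_univ _

lemma tree_of_nc_one [Nonempty V] {F : SimpleGraph V} (h : nc F = 1) (w : V) :
    sz F w = Fintype.card V := by
  by_contra hne
  have hlt : sz F w < Fintype.card V := lt_of_le_of_ne (sz_le F w) hne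
  have : ∑ w : V, (1 : ℝ) / Fintype.card V < nc F := by
    apply sum_lt_sum
    · intro x _
      have := sz_pos F x
      have h2 := sz_le F x
      gcongr
    · refine ⟨w, mem_univ _, ?_⟩
      have := sz_pos F w
      gcongr
  rw [h, sum_const, card_univ, nsmul_eq_mul, mul_one_div_cancel] at this
  · exact lt_irrefl _ this
  · exact_mod_cast Fintype.card_ne_zero

lemma count_main [Nonempty V] (m : ℕ) : ∀ (F : SimpleGraph V), F.IsAcyclic →
    nd F + 2 * nc F = 2 * Fintype.card V → nc F = m + 1 →
    ((Tr F).card : ℝ) * Fintype.card V = (Fintype.card V : ℝ) ^ m * pr F := by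
  classical
  induction m with
  | zero =>
    intro F hac _ hn
    have hs := tree_of_nc_one (F := F) (by simpa using hn)
    have htree : F.IsTree := by
      refine ⟨⟨fun u v => ?_⟩, hac⟩
      have : cmp F u = univ := (card_eq_iff_eq_univ _).1 (hs u)
      rw [← mem_cmp, this]; exact mem_univ _
    have h1 : Tr F = {F} := by
      ext T
      rw [mem_Tr, mem_singleton]
      constructor
      · rintro ⟨h1, h2⟩
        exact le_antisymm
          (((isTree_iff_minimal_connected.1 h1).2 htree.connected h2)) h2
      · rintro rfl; exact ⟨htree, le_rfl⟩
    rw [h1, pr]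
    simp only [hs, prod_const, card_univ]
    rw [rpow_self Fintype.card_pos]; simp
  | succ m ih =>
    intro F hac hinv hn
    have hd := double_count hinv
    have hN : (Fintype.card V : ℝ) ≠ 0 := by exact_mod_cast Fintype.card_ne_zero
    have h2 : ∀ u v, (if F.Reachable u v then (0 : ℝ) else ((Tr (F ⊔ edge u v)).card : ℝ)) *
        Fintype.card V = (Fintype.card V : ℝ) ^ m * pr F *
        (if F.Reachable u v then (0 : ℝ) else 1 / sz F u + 1 / sz F v) := by
      intro u v
      split_ifs with h
      · simp
      · rw [ih (F ⊔ edge u v) (hac.sup_edge_of_not_reachable h) (by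
          rw [nd_sup F h, nc_sup F h]; linarith) (by rw [nc_sup F h, hn]; push_cast; ring),
          pr_sup F h]; ring
    have h3 := congrArg (· * (Fintype.card V : ℝ)) hd
    simp only [sum_mul, h2] at h3
    simp only [← mul_sum] at h3
    rw [sum_nonreach, hn] at h3
    push_cast at h3
    have hm : (2 * ((m : ℝ) + 1)) ≠ 0 := by positivity
    apply mul_right_cancel₀ hm
    rw [pow_succ]
    linear_combination h3

lemma sz_bot (w : V) : sz (⊥ : SimpleGraph V) w = 1 := by
  rw [sz, card_eq_one]
  refine ⟨w, ?_⟩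
  ext x
  rw [mem_cmp, mem_singleton, reachable_bot, eq_comm]

lemma nc_bot : nc (⊥ : SimpleGraph V) = Fintype.card V := by
  simp [nc, sz_bot]

lemma pr_bot : pr (⊥ : SimpleGraph V) = 1 := by
  simp [pr, sz_bot]

lemma nd_bot : nd (⊥ : SimpleGraph V) = 0 := by
  simp [nd]

lemma nreach_bot {u v : V} (h : u ≠ v) : ¬ (⊥ : SimpleGraph V).Reachable u v := by
  rwa [reachable_bot]

lemma card_one (h2 : 2 ≤ Fintype.card V) {u v : V} (h : u ≠ v) :
    ((Tr (⊥ ⊔ edge u v)).card : ℝ) =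
      (Fintype.card V : ℝ) ^ (Fintype.card V - 2) * (2 / Fintype.card V) := by
  have : Nonempty V := ⟨u⟩
  have hN : (Fintype.card V : ℝ) ≠ 0 := by exact_mod_cast Fintype.card_ne_zero
  have hr := nreach_bot h
  have := count_main (Fintype.card V - 2) (⊥ ⊔ edge u v)
    (isAcyclic_bot.sup_edge_of_not_reachable hr)
    (by rw [nd_sup _ hr, nc_sup _ hr, nd_bot, nc_bot]; ring)
    (by rw [nc_sup _ hr, nc_bot]; push_cast [h2]; ring)
  rw [pr_sup _ hr, pr_bot, sz_bot, sz_bot] at this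
  field_simp
  rw [this]; norm_num

lemma card_two (h3 : 3 ≤ Fintype.card V) {u v x y : V} (h : u ≠ v)
    (hr' : ¬ (⊥ ⊔ edge u v).Reachable x y) :
    ((Tr (⊥ ⊔ edge u v ⊔ edge x y)).card : ℝ) =
      (Fintype.card V : ℝ) ^ (Fintype.card V - 2) *
      (2 * (1 / sz (⊥ ⊔ edge u v) x + 1 / sz (⊥ ⊔ edge u v) y) / (Fintype.card V : ℝ) ^ 2) := by
  have : Nonempty V := ⟨u⟩
  have hN : (Fintype.card V : ℝ) ≠ 0 := by exact_mod_cast Fintype.card_ne_zero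
  have hr := nreach_bot h
  have := count_main (Fintype.card V - 3) (⊥ ⊔ edge u v ⊔ edge x y)
    ((isAcyclic_bot.sup_edge_of_not_reachable hr).sup_edge_of_not_reachable hr')
    (by rw [nd_sup _ hr', nc_sup _ hr', nd_sup _ hr, nc_sup _ hr, nd_bot, nc_bot]; ring)
    (by rw [nc_sup _ hr', nc_sup _ hr, nc_bot]; push_cast [h3]; ring)
  rw [pr_sup _ hr', pr_sup _ hr, pr_bot, sz_bot, sz_bot] at this
  have e : Fintype.card V - 2 = (Fintype.card V - 3) + 1 := by omega
  rw [e, pow_succ]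
  apply mul_right_cancel₀ hN
  rw [this]
  field_simp
  norm_num
  ring

lemma reach_one {u v x y : V} : (⊥ ⊔ edge u v).Reachable x y ↔
    x = y ∨ (x = u ∧ y = v) ∨ (x = v ∧ y = u) := by
  rw [reach_sup_edge]
  simp only [reachable_bot]
  tauto

lemma sz_one_in {u v w : V} (h : u ≠ v) (hw : w = u ∨ w = v) : sz (⊥ ⊔ edge u v) w = 2 := by
  rw [sz_sup_in _ (nreach_bot h), sz_bot, sz_bot]
  simp only [reachable_bot]; tauto

lemma sz_one_out {u v w : V} (hu : w ≠ u) (hv : w ≠ v) : sz (⊥ ⊔ edge u v) w = 1 := by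
  rw [sz_sup_out, sz_bot]
  · rw [reachable_bot]; exact hu.symm
  · rw [reachable_bot]; exact hv.symm

lemma card_two_adj (h3 : 3 ≤ Fintype.card V) {u v x y : V} (h : u ≠ v)
    (hx : x = u ∨ x = v) (hu : y ≠ u) (hv : y ≠ v) :
    ((Tr (⊥ ⊔ edge u v ⊔ edge x y)).card : ℝ) =
      (Fintype.card V : ℝ) ^ (Fintype.card V - 2) * (3 / (Fintype.card V : ℝ) ^ 2) := by
  rw [card_two h3 h, sz_one_in h hx, sz_one_out hu hv]
  · norm_num
  · rw [reach_one]; rintro (rfl | h | h) <;> tauto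

lemma card_two_disj (h3 : 3 ≤ Fintype.card V) {u v x y : V} (h : u ≠ v) (hxy : x ≠ y)
    (hxu : x ≠ u) (hxv : x ≠ v) (hu : y ≠ u) (hv : y ≠ v) :
    ((Tr (⊥ ⊔ edge u v ⊔ edge x y)).card : ℝ) =
      (Fintype.card V : ℝ) ^ (Fintype.card V - 2) * (4 / (Fintype.card V : ℝ) ^ 2) := by
  rw [card_two h3 h, sz_one_out hxu hxv, sz_one_out hu hv]
  · norm_num
  · rw [reach_one]; tauto

/-- tuples of trees containing a graph -/
noncomputable def Tup (k : ℕ) (F : SimpleGraph V) : Finset (Fin k → SimpleGraph V) :=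
  Fintype.piFinset fun _ => Tr F

lemma mem_Tup {k : ℕ} (F : SimpleGraph V) (f : Fin k → SimpleGraph V) :
    f ∈ Tup k F ↔ f ∈ Tup k (⊥ : SimpleGraph V) ∧ F ≤ ⨅ i, f i := by
  simp only [Tup, Fintype.mem_piFinset, mem_Tr, bot_le, and_true, le_iInf_iff, forall_and]

lemma card_Tup (k : ℕ) (F : SimpleGraph V) : (Tup k F).card = (Tr F).card ^ k := by
  simp [Tup]

/-- the four-vertex weight -/
def Dist4 (u v x y : V) : Prop := u ≠ v ∧ x ≠ y ∧ ¬ (x = u ∧ y = v) ∧ ¬ (x = v ∧ y = u)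

open scoped Classical in
/-- ordered pairs of darts on distinct edges -/
noncomputable def nq (G : SimpleGraph V) : ℝ :=
  ∑ u, ∑ v, ∑ x, ∑ y, if Dist4 u v x y ∧ G.Adj u v ∧ G.Adj x y then (1 : ℝ) else 0

lemma nq_eq (G : SimpleGraph V) : nq G = nd G * (nd G - 2) := by
  classical
  have h1 : ∀ u v, ∑ x, ∑ y, (if Dist4 u v x y ∧ G.Adj u v ∧ G.Adj x y then (1 : ℝ) else 0) =
      (if G.Adj u v then (1 : ℝ) else 0) * (nd G - 2) := by
    intro u v
    split_ifs with h
    · have key : ∀ x y, (if Dist4 u v x y ∧ G.Adj u v ∧ G.Adj x y then (1 : ℝ) else 0) =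
          (if G.Adj x y then (1 : ℝ) else 0) - ((if x = u then (if y = v then 1 else 0) else 0) +
          (if x = v then (if y = u then 1 else 0) else 0)) := by
        intro x y
        have hne := h.ne
        have hs := h.symm
        unfold Dist4
        by_cases h0 : x = y
        · subst h0
          by_cases h1 : x = u <;> by_cases h3 : x = v <;> simp_all
        by_cases h1 : x = u <;> by_cases h2 : y = v <;> by_cases h3 : x = v <;>
          by_cases h4 : y = u <;> simp_all
      have e1 : ∑ x : V, ∑ y : V, (if x = u then (if y = v then (1 : ℝ) else 0) else 0) = 1 := by
        rw [sum_eq_single u] <;> simp +contextual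
      have e2 : ∑ x : V, ∑ y : V, (if x = v then (if y = u then (1 : ℝ) else 0) else 0) = 1 := by
        rw [sum_eq_single v] <;> simp +contextual
      simp only [key, sum_sub_distrib, sum_add_distrib]
      rw [e1, e2, nd]; norm_num
    · simp [h]
  have : nq G = ∑ u, ∑ v, (if G.Adj u v then (1 : ℝ) else 0) * (nd G - 2) := by
    rw [nq]
    refine sum_congr rfl fun u _ => sum_congr rfl fun v _ => ?_
    rw [← h1]
  rw [this]
  simp only [← sum_mul]
  rw [nd]

lemma nd_even (G : SimpleGraph V) : ∃ m : ℕ, nd G = 2 * m ∧ (m = 0 ↔ ¬ ∃ e, e ∈ G.edgeSet) := by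
  classical
  refine ⟨G.edgeFinset.card, ?_, ?_⟩
  · have h2 := G.sum_degrees_eq_twice_card_edges
    have : nd G = ((∑ v, G.degree v : ℕ) : ℝ) := by
      push_cast
      unfold nd
      apply sum_congr rfl
      intro u _
      rw [← card_neighborFinset_eq_degree, neighborFinset_eq_filter, sum_boole]
    rw [this, h2]; push_cast; ring
  · rw [card_eq_zero, Finset.eq_empty_iff_forall_notMem]
    simp only [mem_edgeFinset, not_exists]

open scoped Classical in
lemma pointwise (G : SimpleGraph V) :
    nd G / 2 - nq G / 8 ≤ (if ∃ e, e ∈ G.edgeSet then (1 : ℝ) else 0) ∧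
    (if ∃ e, e ∈ G.edgeSet then (1 : ℝ) else 0) ≤ nd G / 2 := by
  obtain ⟨m, h1, h2⟩ := nd_even G
  rw [nq_eq, h1]
  split_ifs with h
  · have hm : m ≠ 0 := fun h' => (h2.1 h') h
    rcases (by omega : m = 1 ∨ 2 ≤ m) with rfl | hm
    · norm_num
    · have : (2 : ℝ) ≤ m := by exact_mod_cast hm
      constructor <;> nlinarith
  · have : m = 0 := h2.2 h
    subst this; norm_num

open scoped Classical in
lemma sum_nd (k : ℕ) : ∑ f ∈ Tup k (⊥ : SimpleGraph V), nd (⨅ i, f i) =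
    ∑ u : V, ∑ v : V, if u = v then (0 : ℝ) else ((Tup k (⊥ ⊔ edge u v)).card : ℝ) := by
  unfold nd
  rw [sum_comm]
  refine sum_congr rfl fun u _ => ?_
  rw [sum_comm]
  refine sum_congr rfl fun v _ => ?_
  split_ifs with h
  · subst h; simp
  · rw [sum_boole]
    congr 2
    ext f
    rw [mem_filter, mem_Tup (⊥ ⊔ edge u v), edge_sup_le h]
    simp

open scoped Classical in
lemma sum_nq (k : ℕ) : ∑ f ∈ Tup k (⊥ : SimpleGraph V), nq (⨅ i, f i) =
    ∑ u : V, ∑ v : V, ∑ x : V, ∑ y : V,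
      if Dist4 u v x y then ((Tup k (⊥ ⊔ edge u v ⊔ edge x y)).card : ℝ) else 0 := by
  unfold nq
  rw [sum_comm]
  refine sum_congr rfl fun u _ => ?_
  rw [sum_comm]
  refine sum_congr rfl fun v _ => ?_
  rw [sum_comm]
  refine sum_congr rfl fun x _ => ?_
  rw [sum_comm]
  refine sum_congr rfl fun y _ => ?_
  split_ifs with h
  · rw [sum_boole]
    congr 2
    ext f
    rw [mem_filter, mem_Tup (⊥ ⊔ edge u v ⊔ edge x y), edge_sup_le h.2.1, edge_sup_le h.1]
    simp [h]
  · simp [h]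

open scoped Classical in
lemma sum_weight {u v : V} (h : u ≠ v) (α β : ℝ) :
    ∑ x : V, ∑ y : V, (if Dist4 u v x y then
      (if x = u ∨ x = v ∨ y = u ∨ y = v then α else β) else 0) =
    4 * ((Fintype.card V : ℝ) - 2) * α +
      ((Fintype.card V : ℝ) - 2) * ((Fintype.card V : ℝ) - 3) * β := by
  let i : V → ℝ := fun x => (if x = u then 1 else 0) + (if x = v then 1 else 0)
  have hi : ∑ x, i x = 2 := by
    simp only [i, sum_add_distrib, sum_ite_eq', mem_univ, if_true]; norm_num
  have hj : ∑ x, (1 - i x) = (Fintype.card V : ℝ) - 2 := by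
    rw [sum_sub_distrib, hi]; simp
  have key : ∀ x y, (if Dist4 u v x y then
      (if x = u ∨ x = v ∨ y = u ∨ y = v then α else β) else 0) =
      β * ((1 - i x) * (1 - i y)) - β * (if x = y then (1 - i x) else 0) +
        (α * (i x * (1 - i y)) + α * ((1 - i x) * i y)) := by
    intro x y
    simp only [i]
    unfold Dist4
    by_cases h0 : x = y
    · subst h0
      by_cases h1 : x = u <;> by_cases h3 : x = v <;> simp_all
    by_cases h1 : x = u <;> by_cases h2 : y = v <;> by_cases h3 : x = v <;>
          by_cases h4 : y = u <;> simp_all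
  simp only [key, sum_add_distrib, sum_sub_distrib, ← mul_sum, sum_ite_eq, mem_univ, if_true]
  simp only [← sum_mul, hi]
  simp only [sum_sub_distrib, hi, mul_sub]
  simp
  ring

lemma sum_nd_val (k : ℕ) (h2 : 2 ≤ Fintype.card V) :
    ∑ f ∈ Tup k (⊥ : SimpleGraph V), nd (⨅ i, f i) =
      (Fintype.card V : ℝ) * ((Fintype.card V : ℝ) - 1) *
      ((Fintype.card V : ℝ) ^ (Fintype.card V - 2) * (2 / Fintype.card V)) ^ k := by
  classical
  rw [sum_nd]
  set c := ((Fintype.card V : ℝ) ^ (Fintype.card V - 2) * (2 / Fintype.card V)) ^ k with hc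
  have : ∀ u v : V, (if u = v then (0 : ℝ) else ((Tup k (⊥ ⊔ edge u v)).card : ℝ)) =
      c - if u = v then c else 0 := by
    intro u v
    split_ifs with h
    · simp
    · rw [card_Tup, Nat.cast_pow, card_one h2 h]; simp [hc]
  simp only [this, sum_sub_distrib]
  simp
  ring

lemma sum_nq_val (k : ℕ) (h3 : 3 ≤ Fintype.card V) :
    ∑ f ∈ Tup k (⊥ : SimpleGraph V), nq (⨅ i, f i) =
      (Fintype.card V : ℝ) * ((Fintype.card V : ℝ) - 1) *
      (4 * ((Fintype.card V : ℝ) - 2) *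
        ((Fintype.card V : ℝ) ^ (Fintype.card V - 2) * (3 / (Fintype.card V : ℝ) ^ 2)) ^ k +
      ((Fintype.card V : ℝ) - 2) * ((Fintype.card V : ℝ) - 3) *
        ((Fintype.card V : ℝ) ^ (Fintype.card V - 2) * (4 / (Fintype.card V : ℝ) ^ 2)) ^ k) := by
  classical
  rw [sum_nq]
  set α := ((Fintype.card V : ℝ) ^ (Fintype.card V - 2) * (3 / (Fintype.card V : ℝ) ^ 2)) ^ k
    with hα
  set β := ((Fintype.card V : ℝ) ^ (Fintype.card V - 2) * (4 / (Fintype.card V : ℝ) ^ 2)) ^ k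
    with hβ
  set c := 4 * ((Fintype.card V : ℝ) - 2) * α +
      ((Fintype.card V : ℝ) - 2) * ((Fintype.card V : ℝ) - 3) * β with hc
  have : ∀ u v : V, (∑ x : V, ∑ y : V,
      if Dist4 u v x y then ((Tup k (⊥ ⊔ edge u v ⊔ edge x y)).card : ℝ) else 0) =
      c - if u = v then c else 0 := by
    intro u v
    by_cases huv : u = v
    · simp [huv, Dist4]
    · rw [if_neg huv, sub_zero, hc, ← sum_weight huv α β]
      refine sum_congr rfl fun x _ => sum_congr rfl fun y _ => ?_
      split_ifs with hd hs
      · rw [card_Tup, Nat.cast_pow, hα]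
        congr 1
        obtain ⟨-, d1, d2, d3⟩ := hd
        by_cases hx : x = u ∨ x = v
        · apply card_two_adj h3 huv hx
          · rintro rfl; rcases hx with rfl | rfl
            · exact d1 rfl
            · exact d3 ⟨rfl, rfl⟩
          · rintro rfl; rcases hx with rfl | rfl
            · exact d2 ⟨rfl, rfl⟩
            · exact d1 rfl
        · rw [edge_comm x y]
          exact card_two_adj h3 huv (by tauto) (by tauto) (by tauto)
      · rw [card_Tup, Nat.cast_pow, hβ]
        congr 1
        apply card_two_disj h3 huv hd.2.1 <;> tauto
      · rfl
  simp only [this, sum_sub_distrib]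
  simp
  ring

lemma mem_edgeSet_iInf {k : ℕ} (hk : 0 < k) (f : Fin k → SimpleGraph V) (e : Sym2 V) :
    e ∈ (⨅ i, f i).edgeSet ↔ ∀ i, e ∈ (f i).edgeSet := by
  induction e with
  | h a b =>
    simp only [mem_edgeSet, iInf_adj]
    exact ⟨fun h => h.1, fun h => ⟨h, (h ⟨0, hk⟩).ne⟩⟩

open scoped Classical in
lemma card_eq (n : ℕ) {k : ℕ} (hk : 0 < k) :
    (Nat.card {f : Fin k → SimpleGraph (Fin n) //
      (∀ i, (f i).IsTree) ∧ ∃ e, ∀ i, e ∈ (f i).edgeSet} : ℝ) =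
    ∑ f ∈ Tup k (⊥ : SimpleGraph (Fin n)),
      (if ∃ e, e ∈ (⨅ i, f i).edgeSet then (1 : ℝ) else 0) := by
  rw [sum_boole, Nat.card_eq_fintype_card, Fintype.card_subtype]
  congr 2
  ext f
  simp only [mem_filter, mem_univ, true_and, Tup, Fintype.mem_piFinset, mem_Tr, bot_le, and_true,
    mem_edgeSet_iInf hk]

lemma bounds {k : ℕ} (hk : 0 < k) (n : ℕ) (hn : 4 ≤ n) :
    (n : ℝ) * ((n : ℝ) - 1) / 2 * (2 / n) ^ k -
              (n : ℝ) * ((n : ℝ) - 1) * ((n : ℝ) - 2) / 2 * (3 / (n : ℝ) ^ 2) ^ k -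
              (n : ℝ) * ((n : ℝ) - 1) * ((n : ℝ) - 2) * ((n : ℝ) - 3) / 8 *
                (4 / (n : ℝ) ^ 2) ^ k ≤
            probCommonEdgeExists k n ∧
          probCommonEdgeExists k n ≤ (n : ℝ) * ((n : ℝ) - 1) / 2 * (2 / n) ^ k := by
  classical
  have hD : (0 : ℝ) < (n : ℝ) ^ (k * (n - 2)) := by
    have : (0 : ℝ) < n := by exact_mod_cast (by omega)
    positivity
  have h1 := sum_nd_val (V := Fin n) k (by simp; omega)
  have h2 := sum_nq_val (V := Fin n) k (by simp; omega)
  simp only [Fintype.card_fin, mul_pow, ← pow_mul, mul_comm (n - 2) k] at h1 h2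
  rw [probCommonEdgeExists, card_eq n hk, le_div_iff₀ hD, div_le_iff₀ hD]
  constructor
  · refine le_trans (le_of_eq ?_) (sum_le_sum fun f _ => (pointwise (⨅ i, f i)).1)
    rw [sum_sub_distrib, ← sum_div, ← sum_div, h1, h2]
    ring
  · refine le_trans (sum_le_sum fun f _ => (pointwise (⨅ i, f i)).2) (le_of_eq ?_)
    rw [← sum_div, h1]
    ring

end TreeCount

/-- Fix `k ≥ 3`.  For all `n ≥ 4`,
`C(n,2)(2/n)^k − (n(n−1)(n−2)/2)(3/n²)^k − (n(n−1)(n−2)(n−3)/8)(4/n²)^k ≤ p_n ≤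
C(n,2)(2/n)^k`.  Consequently `p_n = C(n,2)(2/n)^k − O(n^(4−2k))`, and in particular
`p_n → 0` as `n → ∞`. -/
theorem probability_common_edge_k_trees (k : ℕ) (hk : 3 ≤ k) :
    (∀ n : ℕ, 4 ≤ n →
        (n : ℝ) * ((n : ℝ) - 1) / 2 * (2 / n) ^ k -
              (n : ℝ) * ((n : ℝ) - 1) * ((n : ℝ) - 2) / 2 * (3 / (n : ℝ) ^ 2) ^ k -
              (n : ℝ) * ((n : ℝ) - 1) * ((n : ℝ) - 2) * ((n : ℝ) - 3) / 8 *
                (4 / (n : ℝ) ^ 2) ^ k ≤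
            probCommonEdgeExists k n ∧
          probCommonEdgeExists k n ≤ (n : ℝ) * ((n : ℝ) - 1) / 2 * (2 / n) ^ k) ∧
      (∃ C : ℝ, 0 < C ∧ ∀ n : ℕ, 4 ≤ n →
        |probCommonEdgeExists k n - (n : ℝ) * ((n : ℝ) - 1) / 2 * (2 / n) ^ k| ≤
          C * (n : ℝ) ^ ((4 : ℤ) - 2 * k)) ∧
      Filter.Tendsto (fun n => probCommonEdgeExists k n) Filter.atTop (nhds 0) := by
  have hk0 : 0 < k := by omega
  refine ⟨TreeCount.bounds hk0, ⟨3 ^ k / 2 + 4 ^ k / 8, by positivity, ?_⟩, ?_⟩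
  · intro n hn
    obtain ⟨h1, h2⟩ := TreeCount.bounds hk0 n hn
    have hn' : (4 : ℝ) ≤ n := by exact_mod_cast hn
    have hn0 : (n : ℝ) ≠ 0 := by positivity
    have e : (n : ℝ) ^ ((4 : ℤ) - 2 * k) = (n : ℝ) ^ 4 / ((n : ℝ) ^ 2) ^ k := by
      rw [zpow_sub₀ hn0, ← pow_mul]
      norm_cast
    rw [e, abs_le]
    have hp : (0 : ℝ) ≤ (3 ^ k / 2 + 4 ^ k / 8) * ((n : ℝ) ^ 4 / ((n : ℝ) ^ 2) ^ k) := by positivity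
    have b1 : (n : ℝ) * ((n : ℝ) - 1) * ((n : ℝ) - 2) / 2 * (3 / (n : ℝ) ^ 2) ^ k ≤
        3 ^ k / 2 * ((n : ℝ) ^ 4 / ((n : ℝ) ^ 2) ^ k) := by
      have : (n : ℝ) * ((n : ℝ) - 1) * ((n : ℝ) - 2) ≤ (n : ℝ) ^ 4 := by
        have : (n : ℝ) * ((n : ℝ) - 1) * ((n : ℝ) - 2) ≤ n * n * n := by
          gcongr <;> linarith
        nlinarith [pow_pos (by linarith : (0 : ℝ) < n) 3]
      rw [div_pow]
      calc _ ≤ (n : ℝ) ^ 4 / 2 * (3 ^ k / ((n : ℝ) ^ 2) ^ k) := by gcongr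
        _ = _ := by ring
    have b2 : (n : ℝ) * ((n : ℝ) - 1) * ((n : ℝ) - 2) * ((n : ℝ) - 3) / 8 *
        (4 / (n : ℝ) ^ 2) ^ k ≤ 4 ^ k / 8 * ((n : ℝ) ^ 4 / ((n : ℝ) ^ 2) ^ k) := by
      have : (n : ℝ) * ((n : ℝ) - 1) * ((n : ℝ) - 2) * ((n : ℝ) - 3) ≤ (n : ℝ) ^ 4 := by
        have : (n : ℝ) * ((n : ℝ) - 1) * ((n : ℝ) - 2) * ((n : ℝ) - 3) ≤ n * n * n * n := by
          gcongr <;> nlinarith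
        linarith [(by ring : (n : ℝ) * n * n * n = n ^ 4)]
      rw [div_pow]
      calc _ ≤ (n : ℝ) ^ 4 / 8 * (4 ^ k / ((n : ℝ) ^ 2) ^ k) := by gcongr
        _ = _ := by ring
    constructor
    · rw [add_mul]; linarith
    · linarith
  · have hlim : Filter.Tendsto (fun n : ℕ => (2 : ℝ) ^ k / n) Filter.atTop (nhds 0) :=
      tendsto_const_div_atTop_nhds_zero_nat _
    refine tendsto_of_tendsto_of_tendsto_of_le_of_le' tendsto_const_nhds hlim ?_ ?_
    · filter_upwards with n
      unfold probCommonEdgeExists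
      positivity
    · filter_upwards [Filter.eventually_ge_atTop 4] with n hn
      refine (TreeCount.bounds hk0 n hn).2.trans ?_
      have hn' : (4 : ℝ) ≤ n := by exact_mod_cast hn
      have hn0 : (0 : ℝ) < n := by linarith
      have h3 : (n : ℝ) ^ 3 ≤ (n : ℝ) ^ k := pow_le_pow_right₀ (by linarith) hk
      rw [div_pow, mul_div_assoc', div_le_div_iff₀ (by positivity) hn0]
      have : (n : ℝ) * ((n : ℝ) - 1) / 2 * n ≤ (n : ℝ) ^ k := by
        refine le_trans ?_ h3
        nlinarith [mul_pos hn0 hn0]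
      calc _ = 2 ^ k * ((n : ℝ) * ((n : ℝ) - 1) / 2 * n) := by ring
        _ ≤ _ := by gcongr
end

section
/- Fix a real number p with 0 < p ≤ 1. Then E[p^{−X_n}] = Σ_{m=0}^{n−1} p^{−m} P(X_n = m) converges to e^{2/p − 2} as n → ∞. -/
/-- `P(Xₙ = m)`: the number of ordered pairs `(T₁, T₂)` of spanning trees of `K_n`
with exactly `m` common edges, divided by the number `n^(2(n-2))` of such pairs. -/
noncomputable def probCommonEdgesEq (n m : ℕ) : ℝ :=
  (Nat.card {p : SimpleGraph (Fin n) × SimpleGraph (Fin n) //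
      p.1.IsTree ∧ p.2.IsTree ∧ Nat.card (p.1 ⊓ p.2).edgeSet = m} : ℝ) /
    (n : ℝ) ^ (2 * (n - 2))

namespace ExpMoment

open scoped Classical
open Finset SimpleGraph

noncomputable section

set_option linter.unusedSectionVars false

/-- number of edges -/
def ec {V : Type} (F : SimpleGraph V) : ℕ := Nat.card F.edgeSet

/-- vertex set of the component of `v` -/
def comp {V : Type} [Fintype V] (F : SimpleGraph V) (v : V) : Finset V :=
  univ.filter (fun w => F.Reachable v w)

/-- size of the component of `v` -/
def cs {V : Type} [Fintype V] (F : SimpleGraph V) (v : V) : ℝ := ((comp F v).card : ℝ)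

/-- product of the component sizes -/
def W {V : Type} [Fintype V] (F : SimpleGraph V) : ℝ :=
  ∏ A ∈ univ.image (comp F), (A.card : ℝ)

variable {V : Type} [Fintype V]

lemma mem_comp (F : SimpleGraph V) (v w : V) : w ∈ comp F v ↔ F.Reachable v w := by
  simp [comp]

lemma cs_pos (F : SimpleGraph V) (v : V) : 0 < cs F v := by
  unfold cs
  have : 0 < (comp F v).card := Finset.card_pos.mpr ⟨v, by simp [mem_comp]⟩
  exact_mod_cast this

lemma cs_ge_one (F : SimpleGraph V) (v : V) : 1 ≤ cs F v := by
  unfold cs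
  have : 0 < (comp F v).card := Finset.card_pos.mpr ⟨v, by simp [mem_comp]⟩
  exact_mod_cast this

lemma comp_eq_iff (F : SimpleGraph V) (x y : V) : comp F x = comp F y ↔ F.Reachable x y := by
  constructor
  · intro h
    have : y ∈ comp F y := by simp [mem_comp]
    rw [← h, mem_comp] at this
    exact this
  · intro h
    ext z
    simp only [mem_comp]
    exact ⟨fun hz => h.symm.trans hz, fun hz => h.trans hz⟩

lemma cs_congr {F : SimpleGraph V} {x y : V} (h : F.Reachable x y) : cs F x = cs F y := by
  unfold cs; rw [(comp_eq_iff F x y).2 h]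

lemma reach_sup (F : SimpleGraph V) (u v x y : V) :
    (F ⊔ edge u v).Reachable x y ↔ F.Reachable x y ∨ (F.Reachable x u ∧ F.Reachable v y) ∨
      (F.Reachable x v ∧ F.Reachable u y) := by
  constructor
  · intro h
    rw [reachable_iff_reflTransGen] at h
    induction h with
    | refl => left; rfl
    | @tail b c _ hbc ih =>
      have hbc' : F.Adj b c ∨ (b = u ∧ c = v) ∨ (b = v ∧ c = u) := by
        rcases hbc with h | h
        · exact Or.inl h
        · right
          rw [edge_adj] at h
          exact h.1
      rcases hbc' with h | ⟨rfl, rfl⟩ | ⟨rfl, rfl⟩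
      · have hr := h.reachable
        rcases ih with ih | ⟨h1, h2⟩ | ⟨h1, h2⟩
        · exact Or.inl (ih.trans hr)
        · exact Or.inr (Or.inl ⟨h1, h2.trans hr⟩)
        · exact Or.inr (Or.inr ⟨h1, h2.trans hr⟩)
      · rcases ih with ih | ⟨h1, h2⟩ | ⟨h1, h2⟩
        · exact Or.inr (Or.inl ⟨ih, Reachable.refl _⟩)
        · exact Or.inr (Or.inl ⟨h1, Reachable.refl _⟩)
        · exact Or.inl h1
      · rcases ih with ih | ⟨h1, h2⟩ | ⟨h1, h2⟩
        · exact Or.inr (Or.inr ⟨ih, Reachable.refl _⟩)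
        · exact Or.inl h1
        · exact Or.inr (Or.inr ⟨h1, Reachable.refl _⟩)
  · have huv : (F ⊔ edge u v).Reachable u v := by
      by_cases h : u = v
      · subst h; rfl
      · apply Adj.reachable
        right
        rw [edge_adj]
        exact ⟨Or.inl ⟨rfl, rfl⟩, h⟩
    have hm : ∀ a b, F.Reachable a b → (F ⊔ edge u v).Reachable a b :=
      fun a b h => h.mono le_sup_left
    rintro (h | ⟨h1, h2⟩ | ⟨h1, h2⟩)
    · exact hm _ _ h
    · exact (hm _ _ h1).trans (huv.trans (hm _ _ h2))
    · exact (hm _ _ h1).trans (huv.symm.trans (hm _ _ h2))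

lemma comp_sup_mem {F : SimpleGraph V} {u v x : V} (hx : F.Reachable u x ∨ F.Reachable v x) :
    comp (F ⊔ edge u v) x = comp F u ∪ comp F v := by
  ext y
  rw [mem_comp, reach_sup, mem_union, mem_comp, mem_comp]
  constructor
  · rintro (h | ⟨h1, h2⟩ | ⟨h1, h2⟩)
    · rcases hx with hx | hx
      · exact Or.inl (hx.trans h)
      · exact Or.inr (hx.trans h)
    · exact Or.inr h2
    · exact Or.inl h2
  · rcases hx with hx | hx
    · rintro (h | h)
      · exact Or.inl (hx.symm.trans h)
      · exact Or.inr (Or.inl ⟨hx.symm, h⟩)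
    · rintro (h | h)
      · exact Or.inr (Or.inr ⟨hx.symm, h⟩)
      · exact Or.inl (hx.symm.trans h)

lemma comp_sup_not_mem {F : SimpleGraph V} {u v x : V} (hu : ¬ F.Reachable u x)
    (hv : ¬ F.Reachable v x) : comp (F ⊔ edge u v) x = comp F x := by
  ext y
  rw [mem_comp, reach_sup, mem_comp]
  constructor
  · rintro (h | ⟨h1, h2⟩ | ⟨h1, h2⟩)
    · exact h
    · exact absurd h1.symm hu
    · exact absurd h1.symm hv
  · exact Or.inl

lemma disj_comp {F : SimpleGraph V} {u v : V} (h : ¬ F.Reachable u v) :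
    Disjoint (comp F u) (comp F v) := by
  rw [Finset.disjoint_left]
  intro x hx hy
  rw [mem_comp] at hx hy
  exact h (hx.trans hy.symm)

lemma image_sup {F : SimpleGraph V} {u v : V} :
    univ.image (comp (F ⊔ edge u v)) =
      insert (comp F u ∪ comp F v) (((univ.image (comp F)).erase (comp F u)).erase (comp F v)) := by
  ext A
  simp only [mem_image, mem_univ, true_and, mem_insert, mem_erase]
  constructor
  · rintro ⟨x, rfl⟩
    by_cases hx : F.Reachable u x ∨ F.Reachable v x
    · left; exact comp_sup_mem hx
    · push Not at hx
      right
      rw [comp_sup_not_mem hx.1 hx.2]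
      refine ⟨?_, ?_, x, rfl⟩
      · intro h; exact hx.2 ((comp_eq_iff _ _ _).1 h).symm
      · intro h; exact hx.1 ((comp_eq_iff _ _ _).1 h).symm
  · rintro (rfl | ⟨h1, h2, x, rfl⟩)
    · exact ⟨u, comp_sup_mem (Or.inl (Reachable.refl _))⟩
    · refine ⟨x, comp_sup_not_mem ?_ ?_⟩
      · intro h; exact h2 ((comp_eq_iff _ _ _).2 h.symm)
      · intro h; exact h1 ((comp_eq_iff _ _ _).2 h.symm)

lemma W_sup {F : SimpleGraph V} {u v : V} (h : ¬ F.Reachable u v) :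
    W (F ⊔ edge u v) = W F * (1 / cs F u + 1 / cs F v) := by
  have hu := cs_pos F u
  have hv := cs_pos F v
  have hne : comp F v ≠ comp F u := fun e => h ((comp_eq_iff _ _ _).1 e).symm
  have h1 : comp F u ∈ univ.image (comp F) := mem_image_of_mem _ (mem_univ _)
  have h2 : comp F v ∈ (univ.image (comp F)).erase (comp F u) :=
    mem_erase.2 ⟨hne, mem_image_of_mem _ (mem_univ _)⟩
  have hW : W F = cs F u * (cs F v *
      ∏ A ∈ ((univ.image (comp F)).erase (comp F u)).erase (comp F v), (A.card : ℝ)) := by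
    unfold W cs
    rw [Finset.mul_prod_erase _ (fun A : Finset V => (A.card : ℝ)) h2,
      Finset.mul_prod_erase _ (fun A : Finset V => (A.card : ℝ)) h1]
  have hnot : comp F u ∪ comp F v ∉
      ((univ.image (comp F)).erase (comp F u)).erase (comp F v) := by
    intro hm
    simp only [mem_image, mem_univ, true_and, mem_erase] at hm
    obtain ⟨-, h3, x, hx⟩ := hm
    have hux : u ∈ comp F x := by rw [hx]; simp [mem_comp]
    rw [mem_comp] at hux
    exact h3 (hx ▸ (comp_eq_iff _ _ _).2 hux)
  have hW' : W (F ⊔ edge u v) = (cs F u + cs F v) *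
      ∏ A ∈ ((univ.image (comp F)).erase (comp F u)).erase (comp F v), (A.card : ℝ) := by
    unfold W
    rw [image_sup, Finset.prod_insert hnot, Finset.card_union_of_disjoint (disj_comp h)]
    push_cast
    rfl
  rw [hW', hW]
  field_simp
  ring

lemma cs_sup_mem {F : SimpleGraph V} {u v x : V} (h : ¬ F.Reachable u v)
    (hx : F.Reachable u x ∨ F.Reachable v x) :
    cs (F ⊔ edge u v) x = cs F u + cs F v := by
  unfold cs
  rw [comp_sup_mem hx, Finset.card_union_of_disjoint (disj_comp h)]
  push_cast; rfl

lemma sum_comp (F : SimpleGraph V) (u : V) : ∑ x ∈ comp F u, 1 / cs F x = 1 := by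
  have : ∀ x ∈ comp F u, 1 / cs F x = 1 / cs F u := by
    intro x hx
    rw [cs_congr ((mem_comp _ _ _).1 hx)]
  rw [Finset.sum_congr rfl this, Finset.sum_const, nsmul_eq_mul]
  have := cs_pos F u
  change cs F u * (1 / cs F u) = 1
  field_simp

lemma sum_inv_sup {F : SimpleGraph V} {u v : V} (h : ¬ F.Reachable u v) :
    ∑ x, 1 / cs (F ⊔ edge u v) x = ∑ x, 1 / cs F x - 1 := by
  rw [← Finset.sum_add_sum_compl (comp F u ∪ comp F v) (fun x => 1 / cs (F ⊔ edge u v) x),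
    ← Finset.sum_add_sum_compl (comp F u ∪ comp F v) (fun x => 1 / cs F x),
    Finset.sum_union (disj_comp h) (f := fun x => 1 / cs F x), sum_comp, sum_comp]
  have e1 : ∑ x ∈ comp F u ∪ comp F v, 1 / cs (F ⊔ edge u v) x = 1 := by
    have : ∀ x ∈ comp F u ∪ comp F v, 1 / cs (F ⊔ edge u v) x = 1 / (cs F u + cs F v) := by
      intro x hx
      rw [mem_union, mem_comp, mem_comp] at hx
      rw [cs_sup_mem h hx]
    rw [Finset.sum_congr rfl this, Finset.sum_const, nsmul_eq_mul,
      Finset.card_union_of_disjoint (disj_comp h)]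
    have h1 := cs_pos F u
    have h2 := cs_pos F v
    push_cast
    change (cs F u + cs F v) * (1 / (cs F u + cs F v)) = 1
    field_simp
  have e2 : ∑ x ∈ (comp F u ∪ comp F v)ᶜ, 1 / cs (F ⊔ edge u v) x =
      ∑ x ∈ (comp F u ∪ comp F v)ᶜ, 1 / cs F x := by
    apply Finset.sum_congr rfl
    intro x hx
    rw [mem_compl, mem_union, mem_comp, mem_comp] at hx
    push Not at hx
    unfold cs
    rw [comp_sup_not_mem hx.1 hx.2]
  rw [e1, e2]; ring

lemma ec_sup {F : SimpleGraph V} {u v : V} (h : ¬ F.Reachable u v) :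
    ec (F ⊔ edge u v) = ec F + 1 := by
  have hne : u ≠ v := by rintro rfl; exact h (Reachable.refl _)
  have hn : ¬ F.Adj u v := fun h' => h h'.reachable
  unfold ec
  rw [Nat.card_eq_fintype_card, Nat.card_eq_fintype_card, card_edgeSet, card_edgeSet]
  convert F.card_edgeFinset_sup_edge hn hne

/-- deleting an edge -/
def del (F : SimpleGraph V) (u v : V) : SimpleGraph V := F \ edge u v

lemma del_sup {F : SimpleGraph V} {u v : V} (h : F.Adj u v) : del F u v ⊔ edge u v = F := by
  unfold del
  rw [sdiff_sup_cancel]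
  rw [edge_le_iff]
  exact Or.inr h

lemma sup_del {F : SimpleGraph V} {u v : V} (h : ¬ F.Adj u v) : del (F ⊔ edge u v) u v = F := by
  unfold del
  ext x y
  simp only [sdiff_adj, sup_adj, edge_adj]
  constructor
  · tauto
  · intro hxy
    refine ⟨Or.inl hxy, ?_⟩
    rintro ⟨⟨rfl, rfl⟩ | ⟨rfl, rfl⟩, -⟩
    · exact h hxy
    · exact h hxy.symm

lemma not_reach_del {F : SimpleGraph V} (hF : F.IsAcyclic) {u v : V} (h : F.Adj u v) :
    ¬ (del F u v).Reachable u v := by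
  have := (isAcyclic_iff_forall_adj_isBridge.1 hF) h
  rw [isBridge_iff] at this
  have e : del F u v = F.deleteEdges {s(u, v)} := by
    unfold del
    ext x y
    simp [edge_adj]
    intro hxy
    have := hxy.ne
    tauto
  rw [e]; exact this

lemma del_acyclic {F : SimpleGraph V} (hF : F.IsAcyclic) (u v : V) : (del F u v).IsAcyclic :=
  hF.anti sdiff_le

lemma ec_del {F : SimpleGraph V} (hF : F.IsAcyclic) {u v : V} (h : F.Adj u v) :
    ec F = ec (del F u v) + 1 := by
  conv_lhs => rw [← del_sup h]
  exact ec_sup (not_reach_del hF h)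

lemma sup_acyclic {F : SimpleGraph V} (hF : F.IsAcyclic) {u v : V} (h : ¬ F.Reachable u v) :
    (F ⊔ edge u v).IsAcyclic := hF.sup_edge_of_not_reachable h

lemma sum_inv (k : ℕ) : ∀ F : SimpleGraph V, F.IsAcyclic → ec F = k →
    ∑ x, 1 / cs F x = (Fintype.card V : ℝ) - k := by
  induction k with
  | zero =>
    intro F hF hk
    have hb : F = ⊥ := by
      unfold ec at hk
      rw [Nat.card_eq_fintype_card, card_edgeSet, Finset.card_eq_zero, edgeFinset_eq_empty] at hk
      exact hk
    subst hb
    have : ∀ x : V, cs (⊥ : SimpleGraph V) x = 1 := by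
      intro x
      have : comp (⊥ : SimpleGraph V) x = {x} := by
        ext y; simp [mem_comp, reachable_bot, eq_comm]
      simp [cs, this]
    simp [this]
  | succ k ih =>
    intro F hF hk
    have : F ≠ ⊥ := by
      rintro rfl
      simp [ec] at hk
    obtain ⟨u, v, huv⟩ := ne_bot_iff_exists_adj.1 this
    have h1 := not_reach_del hF huv
    have h2 := sum_inv_sup h1
    have h3 := ih (del F u v) (del_acyclic hF u v) (by have := ec_del hF huv; omega)
    rw [del_sup huv, h3] at h2
    rw [h2]; push_cast; ring

lemma pair_sum (F : SimpleGraph V) (g : V → V → ℝ) :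
    ∑ u, ∑ v, (if ¬ F.Reachable u v then g u v else 0) =
      ∑ u, ∑ v, g u v - ∑ u, ∑ v ∈ comp F u, g u v := by
  rw [← Finset.sum_sub_distrib]
  apply Finset.sum_congr rfl
  intro u _
  rw [comp, Finset.sum_filter, ← Finset.sum_sub_distrib]
  apply Finset.sum_congr rfl
  intro v _
  split_ifs <;> simp

lemma pair_sum1 (F : SimpleGraph V) :
    ∑ u, ∑ v, (if ¬ F.Reachable u v then (1 / cs F u + 1 / cs F v) else 0) =
      2 * (Fintype.card V : ℝ) * (∑ x, 1 / cs F x - 1) := by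
  rw [pair_sum]
  have h1 : ∀ u, ∑ v ∈ comp F u, (1 / cs F u + 1 / cs F v) = 2 := by
    intro u
    rw [Finset.sum_add_distrib, sum_comp, Finset.sum_const, nsmul_eq_mul]
    have := cs_pos F u
    change cs F u * (1 / cs F u) + 1 = 2
    field_simp; norm_num
  simp only [h1, Finset.sum_add_distrib, Finset.sum_const, nsmul_eq_mul, Finset.card_univ,
    ← Finset.mul_sum]
  ring

lemma pair_sum2 (F : SimpleGraph V) :
    ∑ u, ∑ v, (if ¬ F.Reachable u v then (1 / cs F u + 1 / cs F v) ^ 2 else 0) =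
      2 * (Fintype.card V : ℝ) * (∑ x, (1 / cs F x) ^ 2) + 2 * (∑ x, 1 / cs F x) ^ 2
        - 4 * ∑ x, 1 / cs F x := by
  rw [pair_sum]
  have h1 : ∀ u, ∑ v ∈ comp F u, (1 / cs F u + 1 / cs F v) ^ 2 = 4 * (1 / cs F u) := by
    intro u
    have : ∀ v ∈ comp F u, (1 / cs F u + 1 / cs F v) ^ 2 = 4 * (1 / cs F u) ^ 2 := by
      intro v hv
      rw [cs_congr ((mem_comp _ _ _).1 hv)]
      ring
    rw [Finset.sum_congr rfl this, Finset.sum_const, nsmul_eq_mul]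
    have := cs_pos F u
    change cs F u * (4 * (1 / cs F u) ^ 2) = _
    field_simp
  have h2 : ∀ u v, (1 / cs F u + 1 / cs F v) ^ 2 =
      (1 / cs F u) ^ 2 + (1 / cs F v) ^ 2 + 2 * ((1 / cs F u) * (1 / cs F v)) := by
    intro u v; ring
  simp only [h1]
  simp only [h2, Finset.sum_add_distrib, Finset.sum_const, nsmul_eq_mul, Finset.card_univ,
    ← Finset.mul_sum, ← Finset.sum_mul]
  ring

lemma adj_sum (G : SimpleGraph V) :
    ∑ u, ∑ v, (if G.Adj u v then (1 : ℝ) else 0) = 2 * (ec G : ℝ) := by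
  have h := G.sum_degrees_eq_twice_card_edges
  have he : ec G = G.edgeFinset.card := by
    unfold ec
    rw [Nat.card_eq_fintype_card, card_edgeSet]
  rw [he]
  have : (∑ v, G.degree v : ℝ) = 2 * (G.edgeFinset.card : ℝ) := by exact_mod_cast h
  rw [← this]
  apply Finset.sum_congr rfl
  intro u _
  rw [← card_neighborFinset_eq_degree, neighborFinset_eq_filter]
  simp

/-- number of spanning trees containing `F` -/
def N (F : SimpleGraph V) : ℝ := ∑ T : SimpleGraph V, if F ≤ T ∧ T.IsTree then (1 : ℝ) else 0

lemma ec_tree {T : SimpleGraph V} (hT : T.IsTree) : ec T + 1 = Fintype.card V := by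
  unfold ec
  rw [Nat.card_eq_fintype_card, card_edgeSet]
  exact hT.card_edgeFinset

lemma N_step (F : SimpleGraph V) :
    ∑ u, ∑ v, (if ¬ F.Reachable u v then N (F ⊔ edge u v) else 0) =
      2 * ((Fintype.card V : ℝ) - 1 - ec F) * N F := by
  have h1 : ∀ u v, (if ¬ F.Reachable u v then N (F ⊔ edge u v) else 0) =
      ∑ T : SimpleGraph V, if F ≤ T ∧ T.IsTree then
        ((if T.Adj u v then (1 : ℝ) else 0) - (if F.Adj u v then (1 : ℝ) else 0)) else 0 := by
    intro u v
    by_cases hr : F.Reachable u v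
    · rw [if_neg (not_not.2 hr)]
      symm
      apply Finset.sum_eq_zero
      intro T _
      by_cases hT : F ≤ T ∧ T.IsTree
      · rw [if_pos hT]
        by_cases ha : F.Adj u v
        · rw [if_pos ha, if_pos (hT.1 ha)]; simp
        · rw [if_neg ha, if_neg]; · simp
          intro hTa
          apply not_reach_del hT.2.isAcyclic hTa
          apply hr.mono
          unfold del
          intro x y hxy
          rw [sdiff_adj]
          refine ⟨hT.1 hxy, ?_⟩
          rw [edge_adj]
          rintro ⟨⟨rfl, rfl⟩ | ⟨rfl, rfl⟩, -⟩
          · exact ha hxy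
          · exact ha hxy.symm
      · rw [if_neg hT]
    · rw [if_pos hr]
      unfold N
      apply Finset.sum_congr rfl
      intro T _
      have hne : u ≠ v := by rintro rfl; exact hr (Reachable.refl _)
      have ha : ¬ F.Adj u v := fun h => hr h.reachable
      have hs : F ⊔ edge u v ≤ T ↔ F ≤ T ∧ T.Adj u v := by
        rw [sup_le_iff, edge_le_iff]
        simp [hne]
      rw [hs, if_neg ha]
      by_cases hT : T.Adj u v <;> simp [hT]
  simp only [h1]
  have h2 : ∀ u, ∑ v, ∑ T : SimpleGraph V, (if F ≤ T ∧ T.IsTree then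
        ((if T.Adj u v then (1 : ℝ) else 0) - (if F.Adj u v then (1 : ℝ) else 0)) else 0) =
      ∑ T : SimpleGraph V, ∑ v, (if F ≤ T ∧ T.IsTree then
        ((if T.Adj u v then (1 : ℝ) else 0) - (if F.Adj u v then (1 : ℝ) else 0)) else 0) :=
    fun u => Finset.sum_comm
  simp only [h2]
  rw [Finset.sum_comm]
  unfold N
  rw [Finset.mul_sum]
  apply Finset.sum_congr rfl
  intro T _
  by_cases hT : F ≤ T ∧ T.IsTree
  · simp only [if_pos hT, Finset.sum_sub_distrib, adj_sum]
    have := ec_tree hT.2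
    rw [← this]; push_cast; ring
  · simp [if_neg hT]

lemma N_formula (hV : 0 < Fintype.card V) (d : ℕ) : ∀ F : SimpleGraph V, F.IsAcyclic →
    ec F + 1 + d = Fintype.card V →
    N F * (Fintype.card V : ℝ) ^ (ec F + 2) = (Fintype.card V : ℝ) ^ (Fintype.card V) * W F := by
  have hn : (0 : ℝ) < Fintype.card V := by exact_mod_cast hV
  induction d with
  | zero =>
    intro F hF hk
    have hs := sum_inv _ F hF rfl
    have hs' : ∑ x, 1 / cs F x = 1 := by
      rw [hs, ← hk]; push_cast; ring
    have hle : ∀ x, cs F x ≤ Fintype.card V := by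
      intro x
      unfold cs
      exact_mod_cast Finset.card_le_univ _
    have hall : ∀ x, cs F x = Fintype.card V := by
      have h0 : ∑ x : V, (1 / cs F x - 1 / (Fintype.card V : ℝ)) = 0 := by
        rw [Finset.sum_sub_distrib, hs']
        simp [hn.ne']
      have h1 := (Finset.sum_eq_zero_iff_of_nonneg (fun x _ => by
        have := one_div_le_one_div_of_le (cs_pos F x) (hle x)
        linarith)).1 h0
      intro x
      have := h1 x (mem_univ _)
      have hc := cs_pos F x
      field_simp at this
      linarith
    have hcomp : ∀ x, comp F x = univ := by
      intro x
      rw [← Finset.card_eq_iff_eq_univ]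
      have := hall x
      unfold cs at this
      exact_mod_cast this
    have : Nonempty V := Fintype.card_pos_iff.1 hV
    have hconn : F.Connected := by
      rw [connected_iff]
      refine ⟨fun x y => ?_, inferInstance⟩
      rw [← mem_comp, hcomp]; exact mem_univ _
    have hFt : F.IsTree := ⟨hconn, hF⟩
    have hN : N F = 1 := by
      unfold N
      rw [Finset.sum_eq_single F]
      · simp [hFt]
      · intro T _ hT
        rw [if_neg]
        rintro ⟨hle, hTt⟩
        have hmin := (isTree_iff_minimal_connected.1 hTt)
        exact hT (le_antisymm (hmin.2 hconn hle) hle)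
      · intro h; exact absurd (mem_univ _) h
    have hW : W F = Fintype.card V := by
      unfold W
      have : univ.image (comp F) = {univ} := by
        ext A
        simp only [mem_image, mem_univ, true_and, mem_singleton, hcomp]
        constructor
        · rintro ⟨_, rfl⟩; rfl
        · rintro rfl; exact ⟨Classical.arbitrary V, rfl⟩
      rw [this]; simp
    rw [hN, hW, ← pow_succ, one_mul]
    congr 1; omega
  | succ d ih =>
    intro F hF hk
    have hst := N_step F
    have hs := sum_inv _ F hF rfl
    have hp := pair_sum1 F
    have h1 : ∀ u v, (if ¬ F.Reachable u v then N (F ⊔ edge u v) else 0) =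
        (Fintype.card V : ℝ) ^ (Fintype.card V) * W F / (Fintype.card V : ℝ) ^ (ec F + 3) *
        (if ¬ F.Reachable u v then (1 / cs F u + 1 / cs F v) else 0) := by
      intro u v
      by_cases hr : F.Reachable u v
      · simp [hr]
      · rw [if_pos hr, if_pos hr]
        have := ih (F ⊔ edge u v) (sup_acyclic hF hr) (by rw [ec_sup hr]; omega)
        rw [W_sup hr, ec_sup hr] at this
        rw [div_mul_eq_mul_div, eq_div_iff (by positivity), ← mul_assoc] at *
        exact this
    simp only [h1, ← Finset.mul_sum] at hst
    rw [hp, hs] at hst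
    have hd : (Fintype.card V : ℝ) - 1 - ec F = d + 1 := by
      rw [← hk]; push_cast; ring
    have hd' : (Fintype.card V : ℝ) - ec F - 1 = d + 1 := by linarith
    rw [hd, hd'] at hst
    have hd0 : (0 : ℝ) < d + 1 := by positivity
    have hN : N F = (Fintype.card V : ℝ) ^ (Fintype.card V) * W F /
        (Fintype.card V : ℝ) ^ (ec F + 3) * Fintype.card V := by
      have h3 : (2 * ((d : ℝ) + 1)) ≠ 0 := by positivity
      apply mul_left_cancel₀ h3
      rw [← hst]; ring
    rw [hN]
    field_simp
    ring

/-- weighted forest sum -/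
def A (V : Type) [Fintype V] (k : ℕ) : ℝ :=
  ∑ F : SimpleGraph V, if F.IsAcyclic ∧ ec F = k then W F ^ 2 else 0

lemma A_step (k : ℕ) : 2 * ((k : ℝ) + 1) * A V (k + 1) =
    ∑ F : SimpleGraph V, if F.IsAcyclic ∧ ec F = k then W F ^ 2 *
      (∑ u, ∑ v, (if ¬ F.Reachable u v then (1 / cs F u + 1 / cs F v) ^ 2 else 0)) else 0 := by
  have hL : 2 * ((k : ℝ) + 1) * A V (k + 1) = ∑ u : V, ∑ v : V, ∑ F : SimpleGraph V,
      if (F.IsAcyclic ∧ ec F = k + 1) ∧ F.Adj u v then W F ^ 2 else 0 := by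
    have h2 : ∀ u : V, ∑ v : V, ∑ F : SimpleGraph V,
        (if (F.IsAcyclic ∧ ec F = k + 1) ∧ F.Adj u v then W F ^ 2 else 0) =
        ∑ F : SimpleGraph V, ∑ v : V,
        (if (F.IsAcyclic ∧ ec F = k + 1) ∧ F.Adj u v then W F ^ 2 else 0) :=
      fun u => Finset.sum_comm
    simp only [h2]
    rw [Finset.sum_comm, A, Finset.mul_sum]
    apply Finset.sum_congr rfl
    intro F _
    by_cases hF : F.IsAcyclic ∧ ec F = k + 1
    · have := adj_sum F
      rw [hF.2] at this
      rw [if_pos hF]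
      push_cast at this
      rw [← this, Finset.sum_mul]
      apply Finset.sum_congr rfl
      intro u _
      rw [Finset.sum_mul]
      apply Finset.sum_congr rfl
      intro v _
      by_cases h : F.Adj u v <;> simp [h, hF]
    · simp [hF]
  have hR : (∑ F : SimpleGraph V, if F.IsAcyclic ∧ ec F = k then W F ^ 2 *
      (∑ u, ∑ v, (if ¬ F.Reachable u v then (1 / cs F u + 1 / cs F v) ^ 2 else 0)) else 0) =
      ∑ u : V, ∑ v : V, ∑ F : SimpleGraph V,
      if (F.IsAcyclic ∧ ec F = k) ∧ ¬ F.Reachable u v then W (F ⊔ edge u v) ^ 2 else 0 := by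
    have h2 : ∀ u : V, ∑ v : V, ∑ F : SimpleGraph V,
        (if (F.IsAcyclic ∧ ec F = k) ∧ ¬ F.Reachable u v then W (F ⊔ edge u v) ^ 2 else 0) =
        ∑ F : SimpleGraph V, ∑ v : V,
        (if (F.IsAcyclic ∧ ec F = k) ∧ ¬ F.Reachable u v then W (F ⊔ edge u v) ^ 2 else 0) :=
      fun u => Finset.sum_comm
    simp only [h2]
    rw [Finset.sum_comm (s := (univ : Finset V)) (t := (univ : Finset (SimpleGraph V)))]
    apply Finset.sum_congr rfl
    intro F _
    by_cases hF : F.IsAcyclic ∧ ec F = k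
    · rw [if_pos hF, Finset.mul_sum]
      apply Finset.sum_congr rfl
      intro u _
      rw [Finset.mul_sum]
      apply Finset.sum_congr rfl
      intro v _
      by_cases h : F.Reachable u v
      · simp [h]
      · rw [if_pos h, if_pos ⟨hF, h⟩, W_sup h]; ring
    · simp [hF]
  rw [hL, hR]
  apply Finset.sum_congr rfl
  intro u _
  apply Finset.sum_congr rfl
  intro v _
  rw [← Finset.sum_filter, ← Finset.sum_filter]
  refine Finset.sum_nbij' (fun F => del F u v) (fun F => F ⊔ edge u v) ?_ ?_ ?_ ?_ ?_
  · intro F hF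
    simp only [mem_filter, mem_univ, true_and] at hF ⊢
    obtain ⟨⟨h1, h2⟩, h3⟩ := hF
    have := ec_del h1 h3
    exact ⟨⟨del_acyclic h1 u v, by omega⟩, not_reach_del h1 h3⟩
  · intro F hF
    simp only [mem_filter, mem_univ, true_and] at hF ⊢
    obtain ⟨⟨h1, h2⟩, h3⟩ := hF
    refine ⟨⟨sup_acyclic h1 h3, by rw [ec_sup h3, h2]⟩, Or.inr ?_⟩
    rw [edge_adj]
    refine ⟨Or.inl ⟨rfl, rfl⟩, ?_⟩
    rintro rfl
    exact h3 (Reachable.refl _)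
  · intro F hF
    simp only [mem_filter, mem_univ, true_and] at hF
    exact del_sup hF.2
  · intro F hF
    simp only [mem_filter, mem_univ, true_and] at hF
    exact sup_del (fun h => hF.2 h.reachable)
  · intro F hF
    simp only [mem_filter, mem_univ, true_and] at hF
    simp only [del_sup hF.2]

lemma A_nonneg (k : ℕ) : 0 ≤ A V k := by
  unfold A
  apply Finset.sum_nonneg
  intro F _
  split_ifs <;> positivity

lemma A_upper (k : ℕ) : ((k : ℝ) + 1) * A V (k + 1) ≤ 2 * (Fintype.card V : ℝ) ^ 2 * A V k := by
  have h : 2 * ((k : ℝ) + 1) * A V (k + 1) ≤ 4 * (Fintype.card V : ℝ) ^ 2 * A V k := by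
    rw [A_step]
    unfold A
    rw [Finset.mul_sum]
    apply Finset.sum_le_sum
    intro F _
    by_cases hF : F.IsAcyclic ∧ ec F = k
    · rw [if_pos hF, if_pos hF, pair_sum2, mul_comm]
      apply mul_le_mul_of_nonneg_right _ (sq_nonneg _)
      have hb : ∀ x, 1 / cs F x ≤ 1 := fun x => by
        rw [div_le_one (cs_pos F x)]; exact cs_ge_one F x
      have h0 : ∀ x, 0 ≤ 1 / cs F x := fun x => by have := cs_pos F x; positivity
      have h1 : ∑ x, 1 / cs F x ≤ Fintype.card V := by
        calc ∑ x, 1 / cs F x ≤ ∑ x : V, (1 : ℝ) := Finset.sum_le_sum fun x _ => hb x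
          _ = _ := by simp
      have h2 : ∑ x, (1 / cs F x) ^ 2 ≤ (Fintype.card V : ℝ) := by
        calc ∑ x, (1 / cs F x) ^ 2 ≤ ∑ x : V, (1 : ℝ) :=
              Finset.sum_le_sum fun x _ => pow_le_one₀ (h0 x) (hb x)
          _ = _ := by simp
      have h3 : 0 ≤ ∑ x, 1 / cs F x := Finset.sum_nonneg fun x _ => h0 x
      have hn : (0 : ℝ) ≤ Fintype.card V := by positivity
      nlinarith [mul_le_mul_of_nonneg_left h2 hn, mul_le_mul h1 h1 h3 hn]
    · rw [if_neg hF, if_neg hF]; simp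
  linarith

lemma A_lower (k : ℕ) :
    ((Fintype.card V : ℝ) * (Fintype.card V - 2 * k) + (Fintype.card V - k : ℝ) ^ 2
      - 2 * (Fintype.card V - k : ℝ)) * A V k ≤ ((k : ℝ) + 1) * A V (k + 1) := by
  have h : 2 * ((Fintype.card V : ℝ) * (Fintype.card V - 2 * k) + (Fintype.card V - k : ℝ) ^ 2
      - 2 * (Fintype.card V - k : ℝ)) * A V k ≤ 2 * ((k : ℝ) + 1) * A V (k + 1) := by
    rw [A_step]
    unfold A
    rw [Finset.mul_sum]
    apply Finset.sum_le_sum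
    intro F _
    by_cases hF : F.IsAcyclic ∧ ec F = k
    · rw [if_pos hF, if_pos hF, pair_sum2, mul_comm]
      apply mul_le_mul_of_nonneg_left _ (sq_nonneg _)
      have hs := sum_inv k F hF.1 hF.2
      have h2 : (Fintype.card V - 2 * k : ℝ) ≤ ∑ x, (1 / cs F x) ^ 2 := by
        calc (Fintype.card V - 2 * k : ℝ) = ∑ x : V, (2 * (1 / cs F x) - 1) := by
              rw [Finset.sum_sub_distrib, ← Finset.mul_sum, hs]; simp; ring
          _ ≤ _ := Finset.sum_le_sum fun x _ => by nlinarith [sq_nonneg (1 / cs F x - 1)]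
      rw [hs]
      have hn : (0 : ℝ) ≤ Fintype.card V := by positivity
      nlinarith [mul_le_mul_of_nonneg_left h2 hn]
    · rw [if_neg hF, if_neg hF]; simp
  linarith

lemma ec_eq (F : SimpleGraph V) : ec F = F.edgeFinset.card := by
  unfold ec
  rw [Nat.card_eq_fintype_card, card_edgeSet]

lemma ec_mono {F G : SimpleGraph V} (h : F ≤ G) : ec F ≤ ec G := by
  rw [ec_eq, ec_eq]
  exact Finset.card_le_card (edgeFinset_mono h)

lemma ec_lt (hV : 0 < Fintype.card V) {F : SimpleGraph V} (hF : F.IsAcyclic) :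
    ec F < Fintype.card V := by
  have hs := sum_inv _ F hF rfl
  have : Nonempty V := Fintype.card_pos_iff.1 hV
  have hp : 0 < ∑ x, 1 / cs F x :=
    Finset.sum_pos (fun x _ => by have := cs_pos F x; positivity) univ_nonempty
  rw [hs] at hp
  have : (ec F : ℝ) < Fintype.card V := by linarith
  exact_mod_cast this

lemma A_zero_of_ge (hV : 0 < Fintype.card V) {k : ℕ} (hk : Fintype.card V ≤ k) : A V k = 0 := by
  unfold A
  apply Finset.sum_eq_zero
  intro F _
  rw [if_neg]
  rintro ⟨h1, h2⟩
  have := ec_lt hV h1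
  omega

lemma A_bot : A V 0 = 1 := by
  unfold A
  rw [Finset.sum_eq_single ⊥]
  · have h1 : ec (⊥ : SimpleGraph V) = 0 := by rw [ec_eq]; simp
    rw [if_pos ⟨isAcyclic_bot, h1⟩]
    have : W (⊥ : SimpleGraph V) = 1 := by
      unfold W
      apply Finset.prod_eq_one
      intro B hB
      simp only [mem_image, mem_univ, true_and] at hB
      obtain ⟨x, rfl⟩ := hB
      have : comp (⊥ : SimpleGraph V) x = {x} := by
        ext y; simp [mem_comp, reachable_bot, eq_comm]
      simp [this]
    rw [this]; norm_num
  · intro F _ hF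
    rw [if_neg]
    rintro ⟨-, h⟩
    rw [ec_eq, Finset.card_eq_zero, edgeFinset_eq_empty] at h
    exact hF h
  · intro h; exact absurd (mem_univ _) h

lemma binom (t : ℝ) (H : SimpleGraph V) :
    (t + 1) ^ ec H = ∑ F : SimpleGraph V, if F ≤ H then t ^ ec F else 0 := by
  rw [ec_eq, ← Finset.sum_pow_mul_eq_add_pow, ← Finset.sum_filter]
  simp only [one_pow, mul_one]
  symm
  refine Finset.sum_nbij' (fun F => F.edgeFinset)
    (fun s => fromEdgeSet (s : Set (Sym2 V))) ?_ ?_ ?_ ?_ ?_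
  · intro F hF
    simp only [mem_filter, mem_univ, true_and] at hF
    rw [mem_powerset]
    exact edgeFinset_mono hF
  · intro s hs
    rw [mem_powerset] at hs
    simp only [mem_filter, mem_univ, true_and]
    intro x y hxy
    rw [fromEdgeSet_adj] at hxy
    have := hs hxy.1
    simpa using this
  · intro F _
    simp
  · intro s hs
    rw [mem_powerset] at hs
    ext e
    simp only [mem_edgeFinset, edgeSet_fromEdgeSet]
    constructor
    · intro h; exact h.1
    · intro h
      refine ⟨h, ?_⟩
      have := hs h
      exact H.not_isDiag_of_mem_edgeFinset this
  · intro F _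
    rw [ec_eq]

lemma card_pairs (m : ℕ) : (Nat.card {p : SimpleGraph V × SimpleGraph V //
      p.1.IsTree ∧ p.2.IsTree ∧ Nat.card (p.1 ⊓ p.2).edgeSet = m} : ℝ) =
    ∑ T₁ : SimpleGraph V, ∑ T₂ : SimpleGraph V,
      if T₁.IsTree ∧ T₂.IsTree ∧ ec (T₁ ⊓ T₂) = m then (1 : ℝ) else 0 := by
  rw [Nat.card_eq_fintype_card, Fintype.card_subtype, ← Finset.sum_product', ← Finset.sum_filter,
    Finset.sum_const, nsmul_eq_mul, mul_one]
  rfl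

lemma moment (t : ℝ) : ∑ m ∈ range (Fintype.card V), (t + 1) ^ m *
    (Nat.card {p : SimpleGraph V × SimpleGraph V //
      p.1.IsTree ∧ p.2.IsTree ∧ Nat.card (p.1 ⊓ p.2).edgeSet = m} : ℝ) =
    ∑ F : SimpleGraph V, t ^ ec F * N F ^ 2 := by
  have h1 : ∑ m ∈ range (Fintype.card V), (t + 1) ^ m *
    (Nat.card {p : SimpleGraph V × SimpleGraph V //
      p.1.IsTree ∧ p.2.IsTree ∧ Nat.card (p.1 ⊓ p.2).edgeSet = m} : ℝ) =
      ∑ T₁ : SimpleGraph V, ∑ T₂ : SimpleGraph V,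
      if T₁.IsTree ∧ T₂.IsTree then (t + 1) ^ ec (T₁ ⊓ T₂) else 0 := by
    simp only [card_pairs, Finset.mul_sum]
    rw [Finset.sum_comm]
    apply Finset.sum_congr rfl
    intro T₁ _
    rw [Finset.sum_comm]
    apply Finset.sum_congr rfl
    intro T₂ _
    by_cases hT : T₁.IsTree ∧ T₂.IsTree
    · rw [if_pos hT, Finset.sum_eq_single (ec (T₁ ⊓ T₂))]
      · simp [hT]
      · intro m _ hm
        rw [if_neg]; · simp
        rintro ⟨-, -, h⟩; exact hm h.symm
      · intro h
        exfalso; apply h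
        rw [mem_range]
        have h1 := ec_tree hT.1
        have h2 : ec (T₁ ⊓ T₂) ≤ ec T₁ := ec_mono inf_le_left
        omega
    · rw [if_neg hT]
      apply Finset.sum_eq_zero
      intro m _
      rw [if_neg]; · simp
      rintro ⟨a, b, -⟩; exact hT ⟨a, b⟩
  rw [h1]
  have h2 : ∀ T₁ T₂ : SimpleGraph V,
      (if T₁.IsTree ∧ T₂.IsTree then (t + 1) ^ ec (T₁ ⊓ T₂) else 0) =
      ∑ F : SimpleGraph V, t ^ ec F * ((if F ≤ T₁ ∧ T₁.IsTree then (1 : ℝ) else 0) *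
        (if F ≤ T₂ ∧ T₂.IsTree then (1 : ℝ) else 0)) := by
    intro T₁ T₂
    rw [binom]
    by_cases h1 : T₁.IsTree
    · by_cases h2 : T₂.IsTree
      · rw [if_pos ⟨h1, h2⟩]
        apply Finset.sum_congr rfl
        intro F _
        rw [le_inf_iff]
        by_cases a : F ≤ T₁ <;> by_cases b : F ≤ T₂ <;> simp [a, b, h1, h2]
      · simp [h2]
    · simp [h1]
  simp only [h2]
  have h3 : ∀ T₁ : SimpleGraph V, ∑ T₂ : SimpleGraph V, ∑ F : SimpleGraph V,
      t ^ ec F * ((if F ≤ T₁ ∧ T₁.IsTree then (1 : ℝ) else 0) *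
        (if F ≤ T₂ ∧ T₂.IsTree then (1 : ℝ) else 0)) =
      ∑ F : SimpleGraph V, ∑ T₂ : SimpleGraph V,
      t ^ ec F * ((if F ≤ T₁ ∧ T₁.IsTree then (1 : ℝ) else 0) *
        (if F ≤ T₂ ∧ T₂.IsTree then (1 : ℝ) else 0)) := fun T₁ => Finset.sum_comm
  simp only [h3]
  rw [Finset.sum_comm]
  apply Finset.sum_congr rfl
  intro F _
  simp only [← Finset.mul_sum]
  rw [sq, N, Finset.sum_mul]

lemma moment2 (t : ℝ) (hV : 2 ≤ Fintype.card V) :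
    (∑ F : SimpleGraph V, t ^ ec F * N F ^ 2) /
      (Fintype.card V : ℝ) ^ (2 * (Fintype.card V - 2)) =
    ∑ k ∈ range (Fintype.card V), t ^ k * (A V k / ((Fintype.card V : ℝ) ^ 2) ^ k) := by
  have hn : (0 : ℝ) < Fintype.card V := by
    have : 0 < Fintype.card V := by omega
    exact_mod_cast this
  have hR : ∑ k ∈ range (Fintype.card V), t ^ k * (A V k / ((Fintype.card V : ℝ) ^ 2) ^ k) =
      ∑ F : SimpleGraph V, ∑ k ∈ range (Fintype.card V),
        if F.IsAcyclic ∧ ec F = k then t ^ k * (W F ^ 2 / ((Fintype.card V : ℝ) ^ 2) ^ k) else 0 := by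
    rw [Finset.sum_comm]
    apply Finset.sum_congr rfl
    intro k _
    rw [A, Finset.sum_div, Finset.mul_sum]
    apply Finset.sum_congr rfl
    intro F _
    split_ifs <;> simp
  rw [hR, Finset.sum_div]
  apply Finset.sum_congr rfl
  intro F _
  by_cases hF : F.IsAcyclic
  · have hlt := ec_lt (by omega) hF
    rw [Finset.sum_eq_single (ec F)]
    · rw [if_pos ⟨hF, rfl⟩]
      have hN := N_formula (by omega) (Fintype.card V - 1 - ec F) F hF (by omega)
      obtain ⟨j, hj⟩ := Nat.exists_eq_add_of_le hV
      rw [mul_div_assoc]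
      congr 1
      have e1 : (Fintype.card V : ℝ) ^ (Fintype.card V) =
          (Fintype.card V : ℝ) ^ 2 * (Fintype.card V : ℝ) ^ (Fintype.card V - 2) := by
        rw [← pow_add]; congr 1; omega
      have h3 : N F * (Fintype.card V : ℝ) ^ ec F =
          (Fintype.card V : ℝ) ^ (Fintype.card V - 2) * W F := by
        have h4 : ((Fintype.card V : ℝ) ^ 2) ≠ 0 := by positivity
        apply mul_left_cancel₀ h4
        rw [e1, pow_add] at hN
        linarith
      rw [div_eq_div_iff (by positivity) (by positivity)]
      calc N F ^ 2 * ((Fintype.card V : ℝ) ^ 2) ^ ec F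
          = (N F * (Fintype.card V : ℝ) ^ ec F) ^ 2 := by ring
        _ = W F ^ 2 * (Fintype.card V : ℝ) ^ (2 * (Fintype.card V - 2)) := by rw [h3]; ring
    · intro k _ hk
      rw [if_neg]
      rintro ⟨-, h⟩; exact hk h.symm
    · intro h; exact absurd (mem_range.2 hlt) h
  · have : N F = 0 := by
      unfold N
      apply Finset.sum_eq_zero
      intro T _
      rw [if_neg]
      rintro ⟨h1, h2⟩
      exact hF (h2.isAcyclic.anti h1)
    simp [this, hF]

/-- normalized factorial moment -/
def a (n k : ℕ) : ℝ := A (Fin n) k / ((n : ℝ) ^ 2) ^ k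

lemma a_nonneg (n k : ℕ) : 0 ≤ a n k := by
  unfold a
  have := A_nonneg (V := Fin n) k
  positivity

lemma a_zero (n : ℕ) : a n 0 = 1 := by
  simp [a, A_bot]

lemma a_upper (n k : ℕ) (hn : 0 < n) : a n (k + 1) ≤ 2 / (k + 1) * a n k := by
  have h := A_upper (V := Fin n) k
  rw [Fintype.card_fin] at h
  have hn' : (0 : ℝ) < n := by exact_mod_cast hn
  unfold a
  rw [div_le_iff₀ (by positivity)]
  have e : 2 / ((k : ℝ) + 1) * (A (Fin n) k / ((n : ℝ) ^ 2) ^ k) * ((n : ℝ) ^ 2) ^ (k + 1) =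
      2 * (n : ℝ) ^ 2 * A (Fin n) k / (k + 1) := by
    field_simp
    ring
  rw [e, le_div_iff₀ (by positivity)]
  linarith

lemma a_lower (n k : ℕ) (hn : 0 < n) :
    ((1 - 2 * (k * (1 / (n : ℝ)))) + (1 - k * (1 / (n : ℝ))) ^ 2
      - 2 * ((1 - k * (1 / (n : ℝ))) * (1 / (n : ℝ)))) / (k + 1) * a n k ≤ a n (k + 1) := by
  have h := A_lower (V := Fin n) k
  rw [Fintype.card_fin] at h
  have hn' : (0 : ℝ) < n := by exact_mod_cast hn
  unfold a
  rw [le_div_iff₀ (by positivity)]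
  have e : ((1 - 2 * (k * (1 / (n : ℝ)))) + (1 - k * (1 / (n : ℝ))) ^ 2
      - 2 * ((1 - k * (1 / (n : ℝ))) * (1 / (n : ℝ)))) / (k + 1) *
      (A (Fin n) k / ((n : ℝ) ^ 2) ^ k) * ((n : ℝ) ^ 2) ^ (k + 1) =
      ((n : ℝ) * (n - 2 * k) + (n - k : ℝ) ^ 2 - 2 * (n - k : ℝ)) * A (Fin n) k / (k + 1) := by
    field_simp
    ring
  rw [e, div_le_iff₀ (by positivity)]
  linarith

lemma a_bound (n k : ℕ) (hn : 0 < n) : a n k ≤ 2 ^ k / (k.factorial : ℝ) := by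
  induction k with
  | zero => simp [a_zero]
  | succ k ih =>
    calc a n (k + 1) ≤ 2 / (k + 1) * a n k := a_upper n k hn
      _ ≤ 2 / (k + 1) * (2 ^ k / (k.factorial : ℝ)) := by gcongr
      _ = _ := by
        rw [Nat.factorial_succ]; push_cast
        field_simp
        ring

lemma a_tendsto (k : ℕ) :
    Filter.Tendsto (fun n => a n k) Filter.atTop (nhds (2 ^ k / (k.factorial : ℝ))) := by
  induction k with
  | zero => simp [a_zero]
  | succ k ih =>
    have hz : Filter.Tendsto (fun n : ℕ => 1 / (n : ℝ)) Filter.atTop (nhds 0) :=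
      tendsto_one_div_atTop_nhds_zero_nat
    have e : (2 : ℝ) ^ (k + 1) / ((k + 1).factorial : ℝ) = 2 / (k + 1) * (2 ^ k / k.factorial) := by
      rw [Nat.factorial_succ]; push_cast
      field_simp
      ring
    have hU : Filter.Tendsto (fun n : ℕ => 2 / ((k : ℝ) + 1) * a n k) Filter.atTop
        (nhds (2 ^ (k + 1) / ((k + 1).factorial : ℝ))) := by
      rw [e]; exact ih.const_mul _
    have hL : Filter.Tendsto (fun n : ℕ => ((1 - 2 * (k * (1 / (n : ℝ)))) +
        (1 - k * (1 / (n : ℝ))) ^ 2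
        - 2 * ((1 - k * (1 / (n : ℝ))) * (1 / (n : ℝ)))) / ((k : ℝ) + 1) * a n k) Filter.atTop
        (nhds (2 ^ (k + 1) / ((k + 1).factorial : ℝ))) := by
      rw [e]
      refine Filter.Tendsto.mul ?_ ih
      have hk := hz.const_mul (k : ℝ)
      have h1 := (hk.const_mul 2).const_sub 1
      have h2 := (hk.const_sub 1).pow 2
      have h3 := ((hk.const_sub 1).mul hz).const_mul 2
      have h4 := ((h1.add h2).sub h3).div_const ((k : ℝ) + 1)
      convert h4 using 2
      norm_num
    refine tendsto_of_tendsto_of_tendsto_of_le_of_le' hL hU ?_ ?_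
    · filter_upwards [Filter.eventually_gt_atTop 0] with n hn using a_lower n k hn
    · filter_upwards [Filter.eventually_gt_atTop 0] with n hn using a_upper n k hn

lemma sum_eq_tsum (p : ℝ) (hp : 0 < p) (n : ℕ) (hn : 2 ≤ n) :
    ∑ m ∈ Finset.range n, p ^ (-(m : ℤ)) * probCommonEdgesEq n m =
      ∑' k, (1 / p - 1) ^ k * a n k := by
  have h1 := moment (V := Fin n) (1 / p - 1)
  have h2 := moment2 (V := Fin n) (1 / p - 1) (by simpa using hn)
  rw [← h1, Fintype.card_fin, Finset.sum_div] at h2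
  rw [tsum_eq_sum (s := range n)]
  · unfold a
    rw [← h2]
    apply Finset.sum_congr rfl
    intro m _
    unfold probCommonEdgesEq
    rw [mul_div_assoc]
    congr 1
    simp
  · intro k hk
    rw [mem_range, not_lt] at hk
    unfold a
    rw [A_zero_of_ge (by simp; omega) (by simpa using hk)]
    simp

end

end ExpMoment

/-- For a fixed real `0 < p ≤ 1`, the expectation
`E[p^(−Xₙ)] = Σ_{m=0}^{n−1} p^(−m) P(Xₙ = m)` converges to `e^(2/p − 2)` as `n → ∞`. -/
theorem exponential_moment_limit (p : ℝ) (hp : 0 < p) (hp1 : p ≤ 1) :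
    Filter.Tendsto
      (fun n => ∑ m ∈ Finset.range n, p ^ (-(m : ℤ)) * probCommonEdgesEq n m)
      Filter.atTop (nhds (Real.exp (2 / p - 2))) := by
  have ht : 0 ≤ 1 / p - 1 := by
    have := (one_le_div hp).2 hp1
    linarith
  have hS : HasSum (fun k : ℕ => (1 / p - 1) ^ k * (2 ^ k / (k.factorial : ℝ)))
      (Real.exp (2 / p - 2)) := by
    have h := NormedSpace.expSeries_div_hasSum_exp (𝔸 := ℝ) (2 / p - 2)
    rw [← Real.exp_eq_exp_ℝ] at h
    have e : (fun k : ℕ => (1 / p - 1) ^ k * (2 ^ k / (k.factorial : ℝ))) =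
        fun k : ℕ => (2 / p - 2) ^ k / (k.factorial : ℝ) := by
      funext k
      have : 2 / p - 2 = (1 / p - 1) * 2 := by ring
      rw [this, mul_pow]; ring
    rw [e]
    exact h
  have hT : Filter.Tendsto (fun n : ℕ => ∑' k, (1 / p - 1) ^ k * ExpMoment.a n k) Filter.atTop
      (nhds (∑' k : ℕ, (1 / p - 1) ^ k * (2 ^ k / (k.factorial : ℝ)))) := by
    refine tendsto_tsum_of_dominated_convergence hS.summable
      (fun k => (ExpMoment.a_tendsto k).const_mul _) ?_
    filter_upwards [Filter.eventually_gt_atTop 0] with n hn k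
    have h0 := ExpMoment.a_nonneg n k
    rw [Real.norm_of_nonneg (by positivity)]
    exact mul_le_mul_of_nonneg_left (ExpMoment.a_bound n k hn) (by positivity)
  rw [hS.tsum_eq] at hT
  refine hT.congr' ?_
  filter_upwards [Filter.eventually_ge_atTop 2] with n hn
  exact (ExpMoment.sum_eq_tsum p hp n hn).symm
end

section
/- Fix a real number p with 0 < p < 1 and a nonnegative integer m. Let G ~ G(n,p) be the Erdős–Rényi random graph on vertex set {1,…,n}, and let X be the number of common edges of two independent uniformly random spanning trees of G, with X defined to be 0 when G is disconnected. Then P(X = m) → e^{−2/p} (2/p)^m / m! as n → ∞; that is, X converges in distribution to a Poisson distribution with expected value 2/p. -/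
open Classical in
/-- `P(X = m)` for the Erdős–Rényi random graph `G ~ G(n,p)`: each graph `G` on
`{1,…,n}` carries probability `p^(e(G)) (1−p)^(C(n,2)−e(G))`; conditioned on a
connected `G`, the probability that two independent uniformly random spanning trees of
`G` have exactly `m` common edges is the number of ordered pairs of spanning trees with
`m` common edges divided by the square of the number of spanning trees; on the event
that `G` is disconnected, `X` is declared to be `0`. -/
noncomputable def erdosRenyiProbCommonEdgesEq (n : ℕ) (p : ℝ) (m : ℕ) : ℝ :=
  ∑ G : SimpleGraph (Fin n),
    p ^ Nat.card G.edgeSet * (1 - p) ^ (n.choose 2 - Nat.card G.edgeSet) *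
      (if G.Connected then
          (Nat.card {q : SimpleGraph (Fin n) × SimpleGraph (Fin n) //
              q.1 ≤ G ∧ q.2 ≤ G ∧ q.1.IsTree ∧ q.2.IsTree ∧
                Nat.card (q.1 ⊓ q.2).edgeSet = m} : ℝ) /
            (Nat.card {T : SimpleGraph (Fin n) // T ≤ G ∧ T.IsTree} : ℝ) ^ 2
        else if m = 0 then 1 else 0)

namespace ERP
open Finset
open scoped Classical

variable {n : ℕ}

/-- number of edges -/
noncomputable def ec (G : SimpleGraph (Fin n)) : ℕ := Nat.card G.edgeSet

/-- number of spanning trees of the complete graph containing `F` -/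
noncomputable def tc (F : SimpleGraph (Fin n)) : ℕ :=
  (univ.filter fun T : SimpleGraph (Fin n) => T.IsTree ∧ F ≤ T).card

/-- the vertex set of the component of `u` -/
noncomputable def cls (F : SimpleGraph (Fin n)) (u : Fin n) : Finset (Fin n) :=
  univ.filter fun x => F.Reachable u x

/-- the partition into components -/
noncomputable def parts (F : SimpleGraph (Fin n)) : Finset (Finset (Fin n)) :=
  univ.image (cls F)

lemma ec_eq (G : SimpleGraph (Fin n)) : ec G = G.edgeFinset.card := by
  rw [ec, Nat.card_eq_fintype_card, SimpleGraph.edgeFinset_card]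

lemma mem_cls {F : SimpleGraph (Fin n)} {u x : Fin n} : x ∈ cls F u ↔ F.Reachable u x := by
  simp [cls]

lemma cls_eq_iff {F : SimpleGraph (Fin n)} {u x : Fin n} :
    cls F u = cls F x ↔ F.Reachable u x := by
  constructor
  · intro h
    rw [← mem_cls, h, mem_cls]
  · intro h
    ext y
    rw [mem_cls, mem_cls]
    exact ⟨fun k => h.symm.trans k, fun k => h.trans k⟩

lemma cls_disj {F : SimpleGraph (Fin n)} {u x : Fin n} (h : ¬ F.Reachable u x) :
    Disjoint (cls F u) (cls F x) := by
  rw [Finset.disjoint_left]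
  intro y hy hy'
  rw [mem_cls] at hy hy'
  exact h (hy.trans hy'.symm)

lemma cls_card_pos (F : SimpleGraph (Fin n)) (u : Fin n) : 0 < (cls F u).card :=
  Finset.card_pos.2 ⟨u, mem_cls.2 (SimpleGraph.Reachable.refl u)⟩

lemma sum_inv_cls (F : SimpleGraph (Fin n)) :
    ∑ u, (1 : ℝ) / (cls F u).card = (parts F).card := by
  rw [Finset.sum_comp (fun C : Finset (Fin n) => (1 : ℝ) / C.card) (cls F)]
  have : ∀ C ∈ univ.image (cls F), #{a | cls F a = C} • ((1 : ℝ) / C.card) = 1 := by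
    intro C hC
    obtain ⟨u, -, rfl⟩ := Finset.mem_image.1 hC
    have h1 : (univ.filter fun a => cls F a = cls F u) = cls F u := by
      ext a
      simp only [mem_filter, mem_univ, true_and, cls_eq_iff, mem_cls]
      exact ⟨fun h => h.symm, fun h => h.symm⟩
    rw [h1]
    have := cls_card_pos F u
    rw [nsmul_eq_mul]
    field_simp
  rw [Finset.sum_congr rfl this]
  simp [parts]

lemma reach_sup {F : SimpleGraph (Fin n)} {u v x y : Fin n} (huv : u ≠ v) :
    (F ⊔ SimpleGraph.edge u v).Reachable x y ↔ F.Reachable x y ∨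
      (F.Reachable x u ∧ F.Reachable v y) ∨ (F.Reachable x v ∧ F.Reachable u y) := by
  constructor
  · rintro ⟨w⟩
    induction w with
    | nil => exact Or.inl (SimpleGraph.Reachable.refl _)
    | @cons a b c hab w ih =>
      rw [SimpleGraph.sup_adj, SimpleGraph.edge_adj] at hab
      rcases hab with hab | ⟨⟨rfl, rfl⟩ | ⟨rfl, rfl⟩, -⟩
      · have := hab.reachable
        rcases ih with h | ⟨h, h'⟩ | ⟨h, h'⟩
        · exact Or.inl (this.trans h)
        · exact Or.inr (Or.inl ⟨this.trans h, h'⟩)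
        · exact Or.inr (Or.inr ⟨this.trans h, h'⟩)
      · rcases ih with h | ⟨h, h'⟩ | ⟨h, h'⟩
        · exact Or.inr (Or.inl ⟨SimpleGraph.Reachable.refl _, h⟩)
        · exact Or.inr (Or.inl ⟨SimpleGraph.Reachable.refl _, h'⟩)
        · exact Or.inl h'
      · rcases ih with h | ⟨h, h'⟩ | ⟨h, h'⟩
        · exact Or.inr (Or.inr ⟨SimpleGraph.Reachable.refl _, h⟩)
        · exact Or.inl h'
        · exact Or.inr (Or.inr ⟨SimpleGraph.Reachable.refl _, h'⟩)
  · have hle : F ≤ F ⊔ SimpleGraph.edge u v := le_sup_left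
    have he : (F ⊔ SimpleGraph.edge u v).Reachable u v :=
      SimpleGraph.Adj.reachable (by simp [SimpleGraph.edge_adj, huv])
    rintro (h | ⟨h, h'⟩ | ⟨h, h'⟩)
    · exact h.mono hle
    · exact (h.mono hle).trans (he.trans (h'.mono hle))
    · exact (h.mono hle).trans (he.symm.trans (h'.mono hle))

lemma cls_sup {F : SimpleGraph (Fin n)} {u v : Fin n} (h : ¬ F.Reachable u v) (w : Fin n) :
    cls (F ⊔ SimpleGraph.edge u v) w =
      if F.Reachable w u ∨ F.Reachable w v then cls F u ∪ cls F v else cls F w := by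
  have huv : u ≠ v := by rintro rfl; exact h (SimpleGraph.Reachable.refl _)
  ext y
  rw [mem_cls, reach_sup huv]
  split_ifs with hw
  · rw [mem_union, mem_cls, mem_cls]
    rcases hw with hw | hw
    · constructor
      · rintro (k | ⟨k, k'⟩ | ⟨k, k'⟩)
        · exact Or.inl (hw.symm.trans k)
        · exact Or.inr k'
        · exact Or.inl k'
      · rintro (k | k)
        · exact Or.inl (hw.trans k)
        · exact Or.inr (Or.inl ⟨hw, k⟩)
    · constructor
      · rintro (k | ⟨k, k'⟩ | ⟨k, k'⟩)
        · exact Or.inr (hw.symm.trans k)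
        · exact Or.inr k'
        · exact Or.inl k'
      · rintro (k | k)
        · exact Or.inr (Or.inr ⟨hw, k⟩)
        · exact Or.inl (hw.trans k)
  · rw [mem_cls]
    tauto

lemma parts_sup {F : SimpleGraph (Fin n)} {u v : Fin n} (h : ¬ F.Reachable u v) :
    parts (F ⊔ SimpleGraph.edge u v) =
      insert (cls F u ∪ cls F v) (((parts F).erase (cls F u)).erase (cls F v)) := by
  ext C
  simp only [parts, mem_image, mem_univ, true_and, mem_insert, mem_erase]
  constructor
  · rintro ⟨w, rfl⟩
    rw [cls_sup h]
    split_ifs with hw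
    · exact Or.inl rfl
    · push Not at hw
      exact Or.inr ⟨fun k => hw.2 (cls_eq_iff.1 k), fun k => hw.1 (cls_eq_iff.1 k), w, rfl⟩
  · rintro (rfl | ⟨h1, h2, w, rfl⟩)
    · exact ⟨u, by rw [cls_sup h, if_pos (Or.inl (SimpleGraph.Reachable.refl _))]⟩
    · refine ⟨w, ?_⟩
      rw [cls_sup h, if_neg]
      rw [Ne, cls_eq_iff] at h1 h2
      tauto

lemma union_notMem {F : SimpleGraph (Fin n)} {u v : Fin n} (h : ¬ F.Reachable u v) :
    cls F u ∪ cls F v ∉ ((parts F).erase (cls F u)).erase (cls F v) := by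
  simp only [parts, mem_image, mem_univ, true_and, mem_erase, not_and, not_exists]
  rintro - - w hw
  have h1 : u ∈ cls F w := by
    rw [hw]; exact mem_union_left _ (mem_cls.2 (SimpleGraph.Reachable.refl _))
  have h2 : v ∈ cls F w := by
    rw [hw]; exact mem_union_right _ (mem_cls.2 (SimpleGraph.Reachable.refl _))
  rw [mem_cls] at h1 h2
  exact h (h1.symm.trans h2)

/-- the product weight of a forest -/
noncomputable def wt (F : SimpleGraph (Fin n)) : ℝ := ∏ C ∈ parts F, ((n : ℝ) * C.card)

lemma cls_mem_parts (F : SimpleGraph (Fin n)) (u : Fin n) : cls F u ∈ parts F :=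
  Finset.mem_image_of_mem _ (mem_univ _)

lemma wt_sup {F : SimpleGraph (Fin n)} {u v : Fin n} (h : ¬ F.Reachable u v) :
    wt (F ⊔ SimpleGraph.edge u v) * n =
      wt F * (1 / (cls F u).card + 1 / (cls F v).card) := by
  have hne : cls F v ≠ cls F u := fun k => h (cls_eq_iff.1 k).symm
  have hv : cls F v ∈ (parts F).erase (cls F u) := mem_erase.2 ⟨hne, cls_mem_parts F v⟩
  rw [wt, wt, parts_sup h, Finset.prod_insert (union_notMem h),
    ← Finset.mul_prod_erase _ _ (cls_mem_parts F u), ← Finset.mul_prod_erase _ _ hv,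
    Finset.card_union_of_disjoint (cls_disj h)]
  have h1 := cls_card_pos F u
  have h2 := cls_card_pos F v
  push_cast
  field_simp
  ring

lemma card_parts_sup {F : SimpleGraph (Fin n)} {u v : Fin n} (h : ¬ F.Reachable u v) :
    (parts (F ⊔ SimpleGraph.edge u v)).card + 1 = (parts F).card := by
  have hne : cls F v ≠ cls F u := fun k => h (cls_eq_iff.1 k).symm
  have hv : cls F v ∈ (parts F).erase (cls F u) := mem_erase.2 ⟨hne, cls_mem_parts F v⟩
  rw [parts_sup h, Finset.card_insert_of_notMem (union_notMem h),
    Finset.card_erase_add_one hv, Finset.card_erase_add_one (cls_mem_parts F u)]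

lemma ec_sup {F : SimpleGraph (Fin n)} {u v : Fin n} (h : u ≠ v) (h' : ¬ F.Adj u v) :
    ec (F ⊔ SimpleGraph.edge u v) = ec F + 1 := by
  rw [ec_eq, ec_eq]
  convert F.card_edgeFinset_sup_edge h' h

lemma card_adj (G : SimpleGraph (Fin n)) :
    (univ.filter fun q : Fin n × Fin n => G.Adj q.1 q.2).card = 2 * ec G := by
  rw [ec_eq, ← G.sum_degrees_eq_twice_card_edges, Finset.card_filter, Fintype.sum_prod_type]
  refine Finset.sum_congr rfl fun u _ => ?_
  rw [← Finset.card_filter, ← SimpleGraph.card_neighborFinset_eq_degree]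
  congr 1
  ext; simp

lemma tree_ec {T : SimpleGraph (Fin n)} (h : T.IsTree) : ec T + 1 = n := by
  simpa [ec] using (SimpleGraph.isTree_iff_connected_and_card.1 h).2

/-- double counting of pairs (tree, extra ordered edge) -/
lemma double_count (F : SimpleGraph (Fin n)) (hF : F.IsAcyclic) :
    (2 * ((n : ℝ) - 1 - ec F)) * tc F =
      ∑ q : Fin n × Fin n, if F.Reachable q.1 q.2 then (0 : ℝ)
        else (tc (F ⊔ SimpleGraph.edge q.1 q.2) : ℝ) := by
  have key : ∀ T : SimpleGraph (Fin n), T.IsTree ∧ F ≤ T →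
      (2 * ((n : ℝ) - 1 - ec F)) =
        ∑ q : Fin n × Fin n, if F.Reachable q.1 q.2 then (0 : ℝ) else
          if T.Adj q.1 q.2 then 1 else 0 := by
    rintro T ⟨hT, hle⟩
    have h1 : ∀ q : Fin n × Fin n, (if F.Reachable q.1 q.2 then (0 : ℝ) else
          if T.Adj q.1 q.2 then 1 else 0) =
          (if T.Adj q.1 q.2 then 1 else 0) - (if F.Adj q.1 q.2 then 1 else 0) := by
      rintro ⟨u, v⟩
      by_cases hr : F.Reachable u v
      · by_cases hT1 : T.Adj u v
        · have : F.Adj u v := by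
            have hac : (F ⊔ SimpleGraph.edge u v).IsAcyclic := by
              apply hT.isAcyclic.anti
              exact sup_le hle ((SimpleGraph.edge_le_iff _).2 (Or.inr hT1))
            exact ((SimpleGraph.isAcyclic_sup_fromEdgeSet_iff.1 hac).2 hr).resolve_left hT1.ne
          simp [hr, hT1, this]
        · have : ¬ F.Adj u v := fun k => hT1 (hle k)
          simp [hT1, this]
      · have : ¬ F.Adj u v := fun k => hr k.reachable
        simp [hr, this]
    rw [Finset.sum_congr rfl fun q _ => h1 q, Finset.sum_sub_distrib, Finset.sum_boole,
      Finset.sum_boole, card_adj, card_adj]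
    have := tree_ec hT
    have h2 : (n : ℝ) = ec T + 1 := by exact_mod_cast this.symm
    rw [h2]; push_cast; ring
  have h2 : (2 * ((n : ℝ) - 1 - ec F)) * tc F =
      ∑ T ∈ univ.filter (fun T : SimpleGraph (Fin n) => T.IsTree ∧ F ≤ T),
        ∑ q : Fin n × Fin n, if F.Reachable q.1 q.2 then (0 : ℝ) else
          if T.Adj q.1 q.2 then 1 else 0 := by
    rw [← Finset.sum_congr rfl fun T hT => key T (Finset.mem_filter.1 hT).2]
    rw [Finset.sum_const, nsmul_eq_mul, mul_comm, tc]
  rw [h2, Finset.sum_comm]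
  refine Finset.sum_congr rfl fun q _ => ?_
  split_ifs with hr
  · simp
  · rw [Finset.sum_boole, tc, Finset.filter_filter]
    congr 2
    ext T
    simp only [mem_filter, mem_univ, true_and, sup_le_iff, SimpleGraph.edge_le_iff]
    have : q.1 ≠ q.2 := fun k => hr (k ▸ SimpleGraph.Reachable.refl _)
    tauto

lemma sum_nonreach (F : SimpleGraph (Fin n)) :
    ∑ q : Fin n × Fin n, (if F.Reachable q.1 q.2 then (0 : ℝ)
        else (1 / (cls F q.1).card + 1 / (cls F q.2).card)) =
      2 * n * ((parts F).card - 1) := by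
  have h1 : ∑ q : Fin n × Fin n, (if F.Reachable q.1 q.2 then (0 : ℝ)
        else (1 / (cls F q.1).card)) = n * ((parts F).card - 1) := by
    rw [Fintype.sum_prod_type]
    have : ∀ u : Fin n, ∑ v : Fin n, (if F.Reachable u v then (0 : ℝ)
        else (1 / (cls F u).card)) = n * (1 / (cls F u).card) - 1 := by
      intro u
      have h0 : ∀ v : Fin n, (if F.Reachable u v then (0 : ℝ) else (1 / (cls F u).card)) =
          1 / (cls F u).card - (if F.Reachable u v then 1 else 0) * (1 / (cls F u).card) := by
        intro v; split_ifs <;> simp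
      rw [Finset.sum_congr rfl fun v _ => h0 v, Finset.sum_sub_distrib, ← Finset.sum_mul,
        Finset.sum_boole]
      have := cls_card_pos F u
      have h3 : (univ.filter fun x => F.Reachable u x) = cls F u := rfl
      rw [h3]
      simp only [sum_const, card_univ, Fintype.card_fin, nsmul_eq_mul]
      field_simp
    rw [Finset.sum_congr rfl fun u _ => this u, Finset.sum_sub_distrib, ← Finset.mul_sum,
      sum_inv_cls]
    simp
    ring
  have h2 : ∑ q : Fin n × Fin n, (if F.Reachable q.1 q.2 then (0 : ℝ)
        else (1 / (cls F q.2).card)) = n * ((parts F).card - 1) := by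
    rw [← h1]
    refine Fintype.sum_equiv (Equiv.prodComm _ _) _ _ ?_
    rintro ⟨u, v⟩
    simp [SimpleGraph.reachable_comm]
  have h3 : ∀ q : Fin n × Fin n, (if F.Reachable q.1 q.2 then (0 : ℝ)
        else (1 / (cls F q.1).card + 1 / (cls F q.2).card)) =
      (if F.Reachable q.1 q.2 then (0 : ℝ) else (1 / (cls F q.1).card)) +
      (if F.Reachable q.1 q.2 then (0 : ℝ) else (1 / (cls F q.2).card)) := by
    intro q; split_ifs <;> simp
  rw [Finset.sum_congr rfl fun q _ => h3 q, Finset.sum_add_distrib, h1, h2]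
  ring

lemma tc_formula (hn : 0 < n) (r : ℕ) : ∀ F : SimpleGraph (Fin n), F.IsAcyclic →
    (parts F).card = r + 1 → ec F + (r + 1) = n ∧ (tc F : ℝ) * n ^ 2 = wt F := by
  have : Nonempty (Fin n) := ⟨⟨0, hn⟩⟩
  induction r with
  | zero =>
    intro F hF hr
    have hconn : F.Connected := by
      refine ⟨fun u v => ?_⟩
      rw [← cls_eq_iff]
      obtain ⟨C, hC⟩ := Finset.card_eq_one.1 hr
      have h1 := cls_mem_parts F u
      have h2 := cls_mem_parts F v
      rw [hC, mem_singleton] at h1 h2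
      rw [h1, h2]
    have hT : F.IsTree := ⟨hconn, hF⟩
    refine ⟨tree_ec hT, ?_⟩
    have h1 : (univ.filter fun T : SimpleGraph (Fin n) => T.IsTree ∧ F ≤ T) = {F} := by
      ext T
      simp only [mem_filter, mem_univ, true_and, mem_singleton]
      constructor
      · rintro ⟨hT', hle⟩
        have := (SimpleGraph.maximal_isAcyclic_iff_isTree.2 hT)
        exact le_antisymm (this.2 hT'.isAcyclic hle) hle
      · rintro rfl; exact ⟨hT, le_rfl⟩
    obtain ⟨u⟩ := this
    have h2 : parts F = {univ} := by
      obtain ⟨C, hC⟩ := Finset.card_eq_one.1 hr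
      have h1 := cls_mem_parts F u
      have h3 : cls F u = univ := by
        ext x; simp [mem_cls, hconn.preconnected u x]
      rw [hC, mem_singleton, h3] at h1
      rw [hC, h1]
    rw [tc, h1, wt, h2]
    simp
    ring
  | succ r ih =>
    intro F hF hr
    have step : ∀ u v : Fin n, ¬ F.Reachable u v → ec F + (r + 2) = n ∧
        (tc (F ⊔ SimpleGraph.edge u v) : ℝ) * n ^ 3 =
          wt F * (1 / (cls F u).card + 1 / (cls F v).card) := by
      intro u v huv
      have hc := card_parts_sup huv
      obtain ⟨h1, h2⟩ := ih (F ⊔ SimpleGraph.edge u v) (hF.sup_edge_of_not_reachable huv)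
        (by omega)
      have hne : u ≠ v := by rintro rfl; exact huv (SimpleGraph.Reachable.refl _)
      rw [ec_sup hne (fun k => huv k.reachable)] at h1
      refine ⟨by omega, ?_⟩
      rw [← wt_sup huv, ← h2]; ring
    have hex : ∃ u v : Fin n, ¬ F.Reachable u v := by
      obtain ⟨A, hA, B, hB, hAB⟩ := Finset.one_lt_card.1 (show 1 < (parts F).card by omega)
      obtain ⟨u, -, rfl⟩ := Finset.mem_image.1 hA
      obtain ⟨v, -, rfl⟩ := Finset.mem_image.1 hB
      exact ⟨u, v, fun k => hAB (cls_eq_iff.2 k)⟩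
    obtain ⟨u, v, huv⟩ := hex
    have hec := (step u v huv).1
    refine ⟨hec, ?_⟩
    have hd := double_count F hF
    have hs := sum_nonreach F
    have h5 : (∑ q : Fin n × Fin n, if F.Reachable q.1 q.2 then (0 : ℝ)
        else (tc (F ⊔ SimpleGraph.edge q.1 q.2) : ℝ)) * n ^ 3 = wt F *
        ∑ q : Fin n × Fin n, (if F.Reachable q.1 q.2 then (0 : ℝ)
        else (1 / (cls F q.1).card + 1 / (cls F q.2).card)) := by
      rw [Finset.sum_mul, Finset.mul_sum]
      refine Finset.sum_congr rfl fun q _ => ?_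
      split_ifs with h
      · simp
      · exact (step q.1 q.2 h).2
    rw [← hd, hs, hr] at h5
    have h6 : (n : ℝ) = ec F + (r + 2) := by exact_mod_cast hec.symm
    have h7 : (n : ℝ) - 1 - ec F = r + 1 := by rw [h6]; ring
    rw [h7] at h5
    have h8 : (2 * ((r : ℝ) + 1) * n) ≠ 0 := by positivity
    apply mul_left_cancel₀ h8
    push_cast at h5
    linear_combination h5

lemma tc_formula' (hn : 0 < n) (F : SimpleGraph (Fin n)) (hF : F.IsAcyclic) :
    (tc F : ℝ) * n ^ 2 = wt F := by
  have h : 0 < (parts F).card := Finset.card_pos.2 ⟨_, cls_mem_parts F ⟨0, hn⟩⟩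
  exact (tc_formula hn ((parts F).card - 1) F hF (by omega)).2

/-- the ratio lemma -/
lemma tc_ratio (hn : 0 < n) (F : SimpleGraph (Fin n)) (hF : F.IsAcyclic) {u v : Fin n}
    (h : ¬ F.Reachable u v) :
    (tc (F ⊔ SimpleGraph.edge u v) : ℝ) * n =
      tc F * (1 / (cls F u).card + 1 / (cls F v).card) := by
  have h1 := tc_formula' hn F hF
  have h2 := tc_formula' hn _ (hF.sup_edge_of_not_reachable h)
  have h3 := wt_sup h
  have h4 : ((n : ℝ) ^ 2) ≠ 0 := by positivity
  apply mul_left_cancel₀ h4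
  rw [← h1, ← h2] at h3
  linear_combination h3

lemma tc_bot_pos (hn : 0 < n) : (0 : ℝ) < tc (⊥ : SimpleGraph (Fin n)) := by
  have h1 := tc_formula' hn (⊥ : SimpleGraph (Fin n)) SimpleGraph.isAcyclic_bot
  have h2 : (0 : ℝ) < wt (⊥ : SimpleGraph (Fin n)) := by
    apply Finset.prod_pos
    intro C hC
    obtain ⟨u, -, rfl⟩ := Finset.mem_image.1 hC
    have := cls_card_pos (⊥ : SimpleGraph (Fin n)) u
    positivity
  rw [← h1] at h2
  exact pos_of_mul_pos_left h2 (by positivity)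

lemma tc_eq_zero {F : SimpleGraph (Fin n)} (hF : ¬ F.IsAcyclic) : tc F = 0 := by
  rw [tc, Finset.card_eq_zero, Finset.filter_eq_empty_iff]
  rintro T - ⟨hT, hle⟩
  exact hF (hT.isAcyclic.anti hle)

end ERP

namespace ERP
open Finset
open scoped Classical

variable {n : ℕ}

lemma ec_bot : ec (⊥ : SimpleGraph (Fin n)) = 0 := by simp [ec]

lemma ec_eq_zero {F : SimpleGraph (Fin n)} : ec F = 0 ↔ F = ⊥ := by
  rw [ec_eq, Finset.card_eq_zero, SimpleGraph.edgeFinset_eq_empty]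

lemma ec_mono {F H : SimpleGraph (Fin n)} (h : F ≤ H) : ec F ≤ ec H := by
  rw [ec_eq, ec_eq]
  exact Finset.card_le_card (SimpleGraph.edgeFinset_mono h)

/-- edge finset, with a fixed decidability instance -/
noncomputable def eF (G : SimpleGraph (Fin n)) : Finset (Sym2 (Fin n)) :=
  univ.filter fun e => e ∈ G.edgeSet

lemma mem_eF {G : SimpleGraph (Fin n)} {e : Sym2 (Fin n)} : e ∈ eF G ↔ e ∈ G.edgeSet := by
  simp [eF]

lemma ec_eF (G : SimpleGraph (Fin n)) : ec G = (eF G).card := by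
  rw [ec_eq]
  congr 1
  ext e
  simp [mem_eF]

lemma eF_sup (F H : SimpleGraph (Fin n)) : eF (F ⊔ H) = eF F ∪ eF H := by
  ext e; simp [mem_eF]

lemma eF_inf (F H : SimpleGraph (Fin n)) : eF (F ⊓ H) = eF F ∩ eF H := by
  ext e; simp [mem_eF]

lemma eF_subset {F H : SimpleGraph (Fin n)} : eF F ⊆ eF H ↔ F ≤ H := by
  rw [← SimpleGraph.edgeSet_subset_edgeSet]
  constructor
  · intro h e he
    exact mem_eF.1 (h (mem_eF.2 he))
  · intro h e he
    exact mem_eF.2 (h (mem_eF.1 he))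

lemma eF_inj {F H : SimpleGraph (Fin n)} (h : eF F = eF H) : F = H :=
  le_antisymm (eF_subset.1 h.le) (eF_subset.1 h.ge)

lemma eF_from {s : Finset (Sym2 (Fin n))} {H : SimpleGraph (Fin n)} (hs : s ⊆ eF H) :
    eF (SimpleGraph.fromEdgeSet (s : Set (Sym2 (Fin n)))) = s := by
  ext e
  rw [mem_eF, SimpleGraph.edgeSet_fromEdgeSet]
  refine ⟨fun h => h.1, fun h => ⟨h, ?_⟩⟩
  exact H.not_isDiag_of_mem_edgeSet (mem_eF.1 (hs h))

lemma ec_sup_inf (F H : SimpleGraph (Fin n)) : ec (F ⊔ H) + ec (F ⊓ H) = ec F + ec H := by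
  rw [ec_eF, ec_eF, ec_eF, ec_eF, eF_sup, eF_inf, Finset.card_union_add_card_inter]

lemma ec_le (G : SimpleGraph (Fin n)) : ec G ≤ n.choose 2 := by
  have := G.card_edgeFinset_le_card_choose_two
  rw [ec_eq]
  simpa using this

/-- extending a graph by one ordered edge -/
lemma sum_extend (k : ℕ) (f : SimpleGraph (Fin n) → ℝ) :
    2 * ((k : ℝ) + 1) * ∑ F ∈ univ.filter (fun F : SimpleGraph (Fin n) => ec F = k + 1), f F =
      ∑ F ∈ univ.filter (fun F : SimpleGraph (Fin n) => ec F = k),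
        ∑ q : Fin n × Fin n, if q.1 ≠ q.2 ∧ ¬ F.Adj q.1 q.2 then
          f (F ⊔ SimpleGraph.edge q.1 q.2) else 0 := by
  have h1 : 2 * ((k : ℝ) + 1) * ∑ F ∈ univ.filter (fun F : SimpleGraph (Fin n) => ec F = k + 1),
      f F = ∑ F ∈ univ.filter (fun F : SimpleGraph (Fin n) => ec F = k + 1),
        ∑ q ∈ univ.filter (fun q : Fin n × Fin n => F.Adj q.1 q.2), f F := by
    rw [Finset.mul_sum]
    refine Finset.sum_congr rfl fun F hF => ?_
    rw [Finset.sum_const, card_adj, (mem_filter.1 hF).2, nsmul_eq_mul]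
    push_cast; ring
  rw [h1]
  simp_rw [← Finset.sum_filter]
  rw [Finset.sum_sigma', Finset.sum_sigma']
  refine Finset.sum_bij' (fun x _ => ⟨x.1 \ SimpleGraph.edge x.2.1 x.2.2, x.2⟩)
    (fun x _ => ⟨x.1 ⊔ SimpleGraph.edge x.2.1 x.2.2, x.2⟩) ?_ ?_ ?_ ?_ ?_
  · rintro ⟨F, u, v⟩ hx
    simp only [mem_sigma, mem_filter, mem_univ, true_and] at hx ⊢
    have hne := hx.2.ne
    have hn : ¬ (F \ SimpleGraph.edge u v).Adj u v := by
      simp [SimpleGraph.edge_adj, hne]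
    refine ⟨?_, hne, hn⟩
    have h2 := ec_sup hne hn
    rw [sdiff_sup_cancel ((SimpleGraph.edge_le_iff _).2 (Or.inr hx.2))] at h2
    omega
  · rintro ⟨F, u, v⟩ hx
    simp only [mem_sigma, mem_filter, mem_univ, true_and] at hx ⊢
    refine ⟨?_, ?_⟩
    · rw [ec_sup hx.2.1 hx.2.2, hx.1]
    · simp [SimpleGraph.edge_adj, hx.2.1]
  · rintro ⟨F, u, v⟩ hx
    simp only [mem_sigma, mem_filter, mem_univ, true_and] at hx
    have : F \ SimpleGraph.edge u v ⊔ SimpleGraph.edge u v = F :=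
      sdiff_sup_cancel ((SimpleGraph.edge_le_iff _).2 (Or.inr hx.2))
    simp only [this]
  · rintro ⟨F, u, v⟩ hx
    simp only [mem_sigma, mem_filter, mem_univ, true_and] at hx
    have : (F ⊔ SimpleGraph.edge u v) \ SimpleGraph.edge u v = F := by
      rw [sup_sdiff_right_self, SimpleGraph.sdiff_edge _ hx.2.2]
    simp only [this]
  · rintro ⟨F, u, v⟩ hx
    simp only [mem_sigma, mem_filter, mem_univ, true_and] at hx
    have : F \ SimpleGraph.edge u v ⊔ SimpleGraph.edge u v = F :=
      sdiff_sup_cancel ((SimpleGraph.edge_le_iff _).2 (Or.inr hx.2))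
    simp only [this]

/-- the binomial moments of the number of common edges of two random trees -/
noncomputable def bm (n k : ℕ) : ℝ :=
  ∑ F ∈ univ.filter (fun F : SimpleGraph (Fin n) => ec F = k),
    ((tc F : ℝ) / tc (⊥ : SimpleGraph (Fin n))) ^ 2

lemma bm_nonneg (n k : ℕ) : 0 ≤ bm n k := Finset.sum_nonneg fun _ _ => by positivity

lemma bm_zero (hn : 0 < n) : bm n 0 = 1 := by
  have h : (univ.filter fun F : SimpleGraph (Fin n) => ec F = 0) = {⊥} := by
    ext F; simp [ec_eq_zero]
  have := tc_bot_pos hn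
  rw [bm, h, Finset.sum_singleton, div_self this.ne', one_pow]

lemma card_nonisolated (F : SimpleGraph (Fin n)) :
    (univ.filter fun u : Fin n => ∃ v, F.Adj u v).card ≤ 2 * ec F := by
  rw [← card_adj]
  have : (univ.filter fun u : Fin n => ∃ v, F.Adj u v) ⊆
      (univ.filter fun q : Fin n × Fin n => F.Adj q.1 q.2).image Prod.fst := by
    intro u hu
    obtain ⟨v, hv⟩ := (mem_filter.1 hu).2
    exact mem_image.2 ⟨(u, v), by simpa using hv, rfl⟩
  exact (card_le_card this).trans card_image_le

lemma cls_isolated {F : SimpleGraph (Fin n)} {u : Fin n} (h : ¬ ∃ v, F.Adj u v) :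
    cls F u = {u} := by
  ext x
  rw [mem_cls, mem_singleton]
  constructor
  · rintro ⟨w⟩
    cases w with
    | nil => rfl
    | cons hab _ => exact (h ⟨_, hab⟩).elim
  · rintro rfl; exact SimpleGraph.Reachable.refl _

lemma good_pairs (F : SimpleGraph (Fin n)) :
    (n : ℝ) ^ 2 - n - 4 * ec F * n ≤
      (univ.filter fun q : Fin n × Fin n => q.1 ≠ q.2 ∧ (¬ ∃ v, F.Adj q.1 v) ∧
        ¬ ∃ v, F.Adj q.2 v).card := by
  set I := univ.filter fun u : Fin n => ∃ v, F.Adj u v with hI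
  have hsub : (univ : Finset (Fin n × Fin n)) ⊆
      (univ.filter fun q : Fin n × Fin n => q.1 ≠ q.2 ∧ (¬ ∃ v, F.Adj q.1 v) ∧
        ¬ ∃ v, F.Adj q.2 v) ∪ (univ.image (fun u : Fin n => (u, u)) ∪
          (I ×ˢ univ ∪ univ ×ˢ I)) := by
    rintro ⟨u, v⟩ -
    simp only [mem_union, mem_filter, mem_univ, true_and, mem_image, mem_product, hI, and_true]
    by_cases h : u = v
    · right; left; exact ⟨u, by rw [h]⟩
    · tauto
  have h1 := card_le_card hsub
  have h2 := h1.trans (card_union_le _ _)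
  have h3 := (card_union_le (univ.image (fun u : Fin n => (u, u))) (I ×ˢ univ ∪ univ ×ˢ I))
  have h4 := card_union_le (I ×ˢ (univ : Finset (Fin n))) (univ ×ˢ I)
  have h5 : (univ.image (fun u : Fin n => (u, u))).card ≤ n := by
    simpa using (card_image_le (s := (univ : Finset (Fin n))) (f := fun u => (u, u)))
  rw [card_product, card_product] at h4
  have h6 := card_nonisolated F
  rw [← hI] at h6
  simp only [card_univ, Fintype.card_prod, Fintype.card_fin] at h2 h4
  have h7 : I.card * n ≤ 2 * ec F * n := Nat.mul_le_mul_right _ h6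
  have h8 : n * I.card = I.card * n := mul_comm _ _
  have h9 : n * n ≤ (univ.filter fun q : Fin n × Fin n => q.1 ≠ q.2 ∧ (¬ ∃ v, F.Adj q.1 v) ∧
        ¬ ∃ v, F.Adj q.2 v).card + (n + (2 * ec F * n + 2 * ec F * n)) := by omega
  have h10 : (n : ℝ) * n ≤ (univ.filter fun q : Fin n × Fin n => q.1 ≠ q.2 ∧
      (¬ ∃ v, F.Adj q.1 v) ∧ ¬ ∃ v, F.Adj q.2 v).card +
        (n + (2 * ec F * n + 2 * ec F * n)) := by exact_mod_cast h9
  linarith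

lemma ext_term (hn : 0 < n) (F : SimpleGraph (Fin n)) (q : Fin n × Fin n) :
    (if q.1 ≠ q.2 ∧ ¬ F.Adj q.1 q.2 then
      ((tc (F ⊔ SimpleGraph.edge q.1 q.2) : ℝ) / tc (⊥ : SimpleGraph (Fin n))) ^ 2 else 0) ≤
        4 / n ^ 2 * ((tc F : ℝ) / tc (⊥ : SimpleGraph (Fin n))) ^ 2 := by
  split_ifs with h
  · by_cases hF : (F ⊔ SimpleGraph.edge q.1 q.2).IsAcyclic
    · have h1 := SimpleGraph.isAcyclic_sup_fromEdgeSet_iff.1 hF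
      have hr : ¬ F.Reachable q.1 q.2 := fun k => by
        rcases h1.2 k with h2 | h2
        · exact h.1 h2
        · exact h.2 h2
      have h2 := tc_ratio hn F h1.1 hr
      have h3 : (1 : ℝ) ≤ (cls F q.1).card := by exact_mod_cast cls_card_pos F q.1
      have h4 : (1 : ℝ) ≤ (cls F q.2).card := by exact_mod_cast cls_card_pos F q.2
      have h5 : (1 : ℝ) / (cls F q.1).card + 1 / (cls F q.2).card ≤ 2 := by
        have := div_le_one_of_le₀ h3 (by positivity)
        have := div_le_one_of_le₀ h4 (by positivity)
        linarith
      have hn' : (0 : ℝ) < n := by exact_mod_cast hn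
      have h6 : (tc (F ⊔ SimpleGraph.edge q.1 q.2) : ℝ) ≤ 2 / n * tc F := by
        rw [div_mul_eq_mul_div, le_div_iff₀ hn', h2, mul_comm]
        gcongr
      calc ((tc (F ⊔ SimpleGraph.edge q.1 q.2) : ℝ) / tc (⊥ : SimpleGraph (Fin n))) ^ 2
          ≤ (2 / n * tc F / tc (⊥ : SimpleGraph (Fin n))) ^ 2 := by gcongr
        _ = _ := by ring
    · rw [tc_eq_zero hF]
      simp; positivity
  · positivity

lemma bm_upper_step (hn : 0 < n) (k : ℕ) : ((k : ℝ) + 1) * bm n (k + 1) ≤ 2 * bm n k := by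
  have h := sum_extend k (fun F : SimpleGraph (Fin n) =>
    ((tc F : ℝ) / tc (⊥ : SimpleGraph (Fin n))) ^ 2)
  have h2 : ∑ F ∈ univ.filter (fun F : SimpleGraph (Fin n) => ec F = k),
        ∑ q : Fin n × Fin n, (if q.1 ≠ q.2 ∧ ¬ F.Adj q.1 q.2 then
      ((tc (F ⊔ SimpleGraph.edge q.1 q.2) : ℝ) / tc (⊥ : SimpleGraph (Fin n))) ^ 2 else 0) ≤
      4 * bm n k := by
    rw [bm, Finset.mul_sum]
    refine Finset.sum_le_sum fun F _ => ?_
    refine (Finset.sum_le_sum fun q _ => ext_term hn F q).trans ?_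
    have hn' : (n : ℝ) ≠ 0 := by positivity
    simp only [sum_const, card_univ, Fintype.card_prod, Fintype.card_fin, nsmul_eq_mul]
    apply le_of_eq
    push_cast
    field_simp
  rw [← h] at h2
  change 2 * ((k : ℝ) + 1) * bm n (k + 1) ≤ _ at h2
  linarith

lemma bm_lower_step (hn : 0 < n) (k : ℕ) :
    2 * (1 - (4 * k + 1) / n) * bm n k ≤ ((k : ℝ) + 1) * bm n (k + 1) := by
  have h := sum_extend k (fun F : SimpleGraph (Fin n) =>
    ((tc F : ℝ) / tc (⊥ : SimpleGraph (Fin n))) ^ 2)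
  have hn' : (n : ℝ) ≠ 0 := by positivity
  have h2 : 4 * (1 - (4 * k + 1) / n) * bm n k ≤
      ∑ F ∈ univ.filter (fun F : SimpleGraph (Fin n) => ec F = k),
        ∑ q : Fin n × Fin n, (if q.1 ≠ q.2 ∧ ¬ F.Adj q.1 q.2 then
      ((tc (F ⊔ SimpleGraph.edge q.1 q.2) : ℝ) / tc (⊥ : SimpleGraph (Fin n))) ^ 2 else 0) := by
    rw [bm, Finset.mul_sum]
    refine Finset.sum_le_sum fun F hF => ?_
    by_cases hac : F.IsAcyclic
    swap
    · rw [tc_eq_zero hac]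
      simp only [CharP.cast_eq_zero, zero_div, ne_eq, OfNat.ofNat_ne_zero, not_false_eq_true,
        zero_pow, mul_zero]
      exact Finset.sum_nonneg fun q _ => by positivity
    have hk := (mem_filter.1 hF).2
    have hg := good_pairs F
    rw [hk] at hg
    set S := (univ.filter fun q : Fin n × Fin n => q.1 ≠ q.2 ∧ (¬ ∃ v, F.Adj q.1 v) ∧
        ¬ ∃ v, F.Adj q.2 v) with hS
    set a := ((tc F : ℝ) / tc (⊥ : SimpleGraph (Fin n))) ^ 2 with ha
    have ha0 : 0 ≤ a := by positivity
    calc 4 * (1 - (4 * k + 1) / n) * a = ((n : ℝ) ^ 2 - n - 4 * k * n) * (4 / n ^ 2 * a) := by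
          field_simp; ring
      _ ≤ S.card * (4 / n ^ 2 * a) := by gcongr
      _ = ∑ q ∈ S, (4 / n ^ 2 * a) := by rw [sum_const, nsmul_eq_mul]
      _ = ∑ q ∈ S, (if q.1 ≠ q.2 ∧ ¬ F.Adj q.1 q.2 then
            ((tc (F ⊔ SimpleGraph.edge q.1 q.2) : ℝ) / tc (⊥ : SimpleGraph (Fin n))) ^ 2
              else 0) := by
          refine Finset.sum_congr rfl fun q hq => ?_
          obtain ⟨h1, h2, h3⟩ := (mem_filter.1 hq).2
          have hna : ¬ F.Adj q.1 q.2 := fun k => h2 ⟨_, k⟩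
          rw [if_pos ⟨h1, hna⟩]
          have hr : ¬ F.Reachable q.1 q.2 := by
            rw [← mem_cls, cls_isolated h2, mem_singleton]
            exact h1.symm
          have h4 := tc_ratio hn F hac hr
          rw [cls_isolated h2, cls_isolated h3] at h4
          have h5 : (tc (F ⊔ SimpleGraph.edge q.1 q.2) : ℝ) = tc F * 2 / n := by
            rw [eq_div_iff hn', h4]; norm_num
          rw [h5, ha]
          ring
      _ ≤ _ := Finset.sum_le_sum_of_subset_of_nonneg (subset_univ _)
          fun q _ _ => by positivity
  rw [← h] at h2
  change _ ≤ 2 * ((k : ℝ) + 1) * bm n (k + 1) at h2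
  linarith

lemma bm_le (hn : 0 < n) (k : ℕ) : bm n k ≤ 2 ^ k / k.factorial := by
  induction k with
  | zero => simp [bm_zero hn]
  | succ k ih =>
    have h := bm_upper_step hn k
    rw [Nat.factorial_succ, le_div_iff₀ (by positivity)]
    rw [le_div_iff₀ (by positivity)] at ih
    push_cast
    calc bm n (k + 1) * (((k : ℝ) + 1) * k.factorial) = ((k + 1) * bm n (k + 1)) * k.factorial := by
          ring
      _ ≤ 2 * bm n k * k.factorial := by gcongr
      _ ≤ 2 * 2 ^ k := by linarith
      _ = _ := by ring

open Filter Topology in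
lemma bm_tendsto (k : ℕ) : Tendsto (fun n => bm n k) atTop (𝓝 (2 ^ k / k.factorial)) := by
  induction k with
  | zero =>
    refine tendsto_const_nhds.congr' ?_
    filter_upwards [eventually_gt_atTop 0] with n hn
    simp [bm_zero hn]
  | succ k ih =>
    have h1 : Tendsto (fun n : ℕ => 2 * (1 - (4 * (k : ℝ) + 1) / n) * bm n k / (k + 1)) atTop
        (𝓝 (2 * (1 - 0) * (2 ^ k / k.factorial) / (k + 1))) := by
      refine (((tendsto_const_nhds.sub ?_).const_mul 2).mul ih).div_const _
      exact tendsto_const_div_atTop_nhds_zero_nat _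
    have h2 : Tendsto (fun n : ℕ => 2 * bm n k / (k + 1)) atTop
        (𝓝 (2 * (2 ^ k / k.factorial) / (k + 1))) := (ih.const_mul 2).div_const _
    have e : (2 : ℝ) ^ (k + 1) / (k + 1).factorial = 2 * (2 ^ k / k.factorial) / (k + 1) := by
      rw [Nat.factorial_succ]; push_cast; field_simp; ring
    rw [e]
    have h1' : Tendsto (fun n : ℕ => 2 * (1 - (4 * (k : ℝ) + 1) / n) * bm n k / (k + 1)) atTop
        (𝓝 (2 * (2 ^ k / k.factorial) / (k + 1))) := by simpa using h1
    refine tendsto_of_tendsto_of_tendsto_of_le_of_le' h1' h2 ?_ ?_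
    · filter_upwards [eventually_gt_atTop 0] with n hn
      rw [div_le_iff₀ (by positivity)]
      linarith [bm_lower_step hn k]
    · filter_upwards [eventually_gt_atTop 0] with n hn
      rw [le_div_iff₀ (by positivity)]
      linarith [bm_upper_step hn k]

lemma card_sub (H : SimpleGraph (Fin n)) (k : ℕ) :
    (univ.filter fun F : SimpleGraph (Fin n) => F ≤ H ∧ ec F = k).card = (ec H).choose k := by
  rw [ec_eF H, ← Finset.card_powersetCard]
  refine Finset.card_bij (fun F _ => eF F) ?_ ?_ ?_
  · intro F hF
    obtain ⟨h1, h2⟩ := (mem_filter.1 hF).2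
    rw [mem_powersetCard, ← ec_eF]
    exact ⟨eF_subset.2 h1, h2⟩
  · intro F _ F' _ h
    exact eF_inj h
  · intro s hs
    rw [mem_powersetCard] at hs
    have hs' := eF_from hs.1
    refine ⟨SimpleGraph.fromEdgeSet s, ?_, hs'⟩
    rw [mem_filter, ec_eF, hs', ← eF_subset, hs']
    exact ⟨mem_univ _, hs⟩

lemma ec_top : ec (⊤ : SimpleGraph (Fin n)) = n.choose 2 := by
  have h := SimpleGraph.card_edgeFinset_top_eq_card_choose_two (V := Fin n)
  rw [Fintype.card_fin] at h
  rw [ec_eq, ← h]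
  congr!

lemma card_super (H : SimpleGraph (Fin n)) (M : ℕ) (hM : ec H ≤ M) :
    (univ.filter fun G : SimpleGraph (Fin n) => H ≤ G ∧ ec G = M).card =
      (n.choose 2 - ec H).choose (M - ec H) := by
  have h0 : (eF (⊤ : SimpleGraph (Fin n)) \ eF H).card = n.choose 2 - ec H := by
    rw [Finset.card_sdiff_of_subset (eF_subset.2 le_top), ← ec_eF, ← ec_eF, ec_top]
  rw [← h0, ← Finset.card_powersetCard]
  refine Finset.card_bij (fun F _ => eF F \ eF H) ?_ ?_ ?_
  · intro F hF
    obtain ⟨h1, h2⟩ := (mem_filter.1 hF).2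
    rw [mem_powersetCard, Finset.card_sdiff_of_subset (eF_subset.2 h1),
      ← ec_eF, ← ec_eF, h2]
    exact ⟨sdiff_subset_sdiff (eF_subset.2 le_top) le_rfl, rfl⟩
  · intro F hF F' hF' h
    have h1 := eF_subset.2 (mem_filter.1 hF).2.1
    have h2 := eF_subset.2 (mem_filter.1 hF').2.1
    apply eF_inj
    rw [← sdiff_union_of_subset h1, ← sdiff_union_of_subset h2, h]
  · intro s hs
    rw [mem_powersetCard] at hs
    have hs' := eF_from (hs.1.trans sdiff_subset)
    have hd : Disjoint (eF H) s := by
      rw [Finset.disjoint_right]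
      exact fun e he => (mem_sdiff.1 (hs.1 he)).2
    refine ⟨H ⊔ SimpleGraph.fromEdgeSet s, ?_, ?_⟩
    · rw [mem_filter, ec_eF, eF_sup, hs', card_union_of_disjoint hd, hs.2, ← ec_eF]
      exact ⟨mem_univ _, le_sup_left, by omega⟩
    · rw [eF_sup, hs', union_sdiff_cancel_left hd]

end ERP

namespace ERP
open Finset
open scoped Classical

variable {n : ℕ}

/-- ordered pairs of spanning trees of the complete graph -/
noncomputable def tp (n : ℕ) : Finset (SimpleGraph (Fin n) × SimpleGraph (Fin n)) :=
  univ.filter fun q => q.1.IsTree ∧ q.2.IsTree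

/-- total number of trees -/
noncomputable def nt (n : ℕ) : ℕ := tc (⊥ : SimpleGraph (Fin n))

/-- the law of the number of common edges of two random trees of the complete graph -/
noncomputable def pm (n m : ℕ) : ℝ :=
  ((tp n).filter fun q => ec (q.1 ⊓ q.2) = m).card / (nt n : ℝ) ^ 2

lemma tp_inf_lt {q : SimpleGraph (Fin n) × SimpleGraph (Fin n)} (hq : q ∈ tp n) :
    ec (q.1 ⊓ q.2) < n := by
  have h1 := tree_ec (mem_filter.1 hq).2.1
  have h2 := ec_mono (inf_le_left : q.1 ⊓ q.2 ≤ q.1)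
  omega

lemma tp_sup {q : SimpleGraph (Fin n) × SimpleGraph (Fin n)} (hq : q ∈ tp n) :
    ec (q.1 ⊔ q.2) = 2 * (n - 1) - ec (q.1 ⊓ q.2) := by
  have h1 := tree_ec (mem_filter.1 hq).2.1
  have h2 := tree_ec (mem_filter.1 hq).2.2
  have h3 := ec_sup_inf q.1 q.2
  omega

lemma card_pairs_above (F : SimpleGraph (Fin n)) :
    ((tp n).filter fun q => F ≤ q.1 ⊓ q.2).card = tc F ^ 2 := by
  rw [sq, tc, ← Finset.card_product]
  congr 1
  ext ⟨a, b⟩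
  simp only [tp, mem_filter, mem_univ, true_and, mem_product, le_inf_iff]
  tauto

lemma bm_eq (n k : ℕ) :
    bm n k = (∑ q ∈ tp n, ((ec (q.1 ⊓ q.2)).choose k : ℝ)) / (nt n : ℝ) ^ 2 := by
  have h1 : ∀ q ∈ tp n, ((ec (q.1 ⊓ q.2)).choose k : ℝ) =
      ∑ F ∈ univ.filter (fun F : SimpleGraph (Fin n) => ec F = k),
        if F ≤ q.1 ⊓ q.2 then (1 : ℝ) else 0 := by
    intro q _
    rw [← card_sub, Finset.sum_boole, Finset.filter_filter]
    congr 2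
    ext F
    simp [and_comm]
  rw [Finset.sum_congr rfl h1, Finset.sum_comm, bm, Finset.sum_div]
  refine Finset.sum_congr rfl fun F _ => ?_
  rw [Finset.sum_boole, card_pairs_above, div_pow, nt]
  push_cast
  rfl

lemma inversion (N x m : ℕ) (hx : x < N) :
    ∑ k ∈ range N, (-1 : ℝ) ^ (k + m) * (k.choose m) * (x.choose k) = if x = m then 1 else 0 := by
  have h0 : ∑ k ∈ range N, (-1 : ℝ) ^ (k + m) * (k.choose m) * (x.choose k) =
      ∑ k ∈ range (x + 1), (-1 : ℝ) ^ (k + m) * (k.choose m) * (x.choose k) := by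
    symm
    apply Finset.sum_subset
    · intro k hk
      rw [mem_range] at *
      omega
    · intro k _ hk
      rw [mem_range] at hk
      rw [Nat.choose_eq_zero_of_lt (by omega : x < k)]
      simp
  rw [h0]
  by_cases hm : m ≤ x
  · obtain ⟨d, rfl⟩ := Nat.exists_eq_add_of_le hm
    rw [show m + d + 1 = m + (d + 1) by ring, Finset.sum_range_add]
    have h1 : ∑ k ∈ range m, (-1 : ℝ) ^ (k + m) * (k.choose m) * ((m + d).choose k) = 0 := by
      apply Finset.sum_eq_zero
      intro k hk
      rw [Nat.choose_eq_zero_of_lt (mem_range.1 hk)]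
      simp
    have h2 : ∀ j ∈ range (d + 1), (-1 : ℝ) ^ (m + j + m) * ((m + j).choose m) *
        ((m + d).choose (m + j)) = ((m + d).choose m) * (((-1) ^ j * (d.choose j) : ℤ) : ℝ) := by
      intro j _
      have h3 := Nat.choose_mul (n := m + d) (k := m + j) (s := m) (by omega)
      rw [show m + d - m = d by omega, show m + j - m = j by omega] at h3
      have h4 : (((m + d).choose (m + j) : ℝ)) * ((m + j).choose m) =
        ((m + d).choose m) * (d.choose j) := by exact_mod_cast h3
      have h5 : (-1 : ℝ) ^ (m + j + m) = (-1) ^ j := by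
        rw [show m + j + m = 2 * m + j by ring, pow_add, pow_mul]; simp
      rw [h5]
      push_cast
      linear_combination (-1) ^ j * h4
    rw [h1, zero_add, Finset.sum_congr rfl h2, ← Finset.mul_sum, ← Int.cast_sum,
      Int.alternating_sum_range_choose]
    by_cases hd : d = 0
    · subst hd; simp
    · simp [hd]
  · rw [if_neg (by omega)]
    apply Finset.sum_eq_zero
    intro k hk
    rw [mem_range] at hk
    rw [Nat.choose_eq_zero_of_lt (by omega : k < m)]
    simp

lemma pm_eq (n m : ℕ) :
    pm n m = ∑ k ∈ range n, (-1 : ℝ) ^ (k + m) * (k.choose m) * bm n k := by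
  have h1 : (((tp n).filter fun q => ec (q.1 ⊓ q.2) = m).card : ℝ) =
      ∑ q ∈ tp n, ∑ k ∈ range n, (-1 : ℝ) ^ (k + m) * (k.choose m) *
        ((ec (q.1 ⊓ q.2)).choose k) := by
    rw [← Finset.sum_boole]
    exact Finset.sum_congr rfl fun q hq => (inversion n _ m (tp_inf_lt hq)).symm
  rw [pm, h1, Finset.sum_comm, Finset.sum_div]
  refine Finset.sum_congr rfl fun k _ => ?_
  rw [bm_eq, ← Finset.mul_sum]
  ring

lemma pm_nonneg (n m : ℕ) : 0 ≤ pm n m := by unfold pm; positivity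

lemma pm_le_bm (n m : ℕ) : pm n m ≤ bm n m := by
  rw [pm, bm_eq, ← Finset.sum_boole]
  gcongr with q _
  split_ifs with h
  · rw [h]; simp
  · positivity

open Filter Topology in
lemma poisson_inv (m : ℕ) : HasSum (fun k : ℕ => (-1 : ℝ) ^ (k + m) * (k.choose m) *
    (2 ^ k / k.factorial)) (Real.exp (-2) * 2 ^ m / m.factorial) := by
  rw [← hasSum_nat_add_iff' m]
  have h1 : ∑ k ∈ range m, (-1 : ℝ) ^ (k + m) * (k.choose m) * (2 ^ k / k.factorial) = 0 := by
    apply Finset.sum_eq_zero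
    intro k hk
    rw [Nat.choose_eq_zero_of_lt (mem_range.1 hk)]
    simp
  rw [h1, sub_zero]
  have h2 : HasSum (fun j : ℕ => (-2 : ℝ) ^ j / j.factorial) (Real.exp (-2)) := by
    rw [Real.exp_eq_exp_ℝ]
    exact NormedSpace.expSeries_div_hasSum_exp (-2 : ℝ)
  have h3 := h2.mul_right ((2 : ℝ) ^ m / m.factorial)
  rw [mul_div_assoc]
  convert h3 using 1
  · rfl
  · funext j
    have h4 := Nat.add_choose_mul_factorial_mul_factorial j m
    have h5 : (((j + m).choose m : ℝ)) * j.factorial * m.factorial = (j + m).factorial := by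
      exact_mod_cast h4
    have h6 : (-1 : ℝ) ^ (j + m + m) = (-1) ^ j := by
      rw [show j + m + m = 2 * m + j by ring, pow_add, pow_mul]; simp
    have h7 : (((j + m).choose m : ℝ)) ≠ 0 := by
      have := Nat.choose_pos (show m ≤ j + m by omega)
      positivity
    rw [h6, ← h5, show (-2 : ℝ) = (-1) * 2 by norm_num, mul_pow]
    field_simp
    ring

open Filter Topology in
lemma pm_tendsto (m : ℕ) :
    Tendsto (fun n => pm n m) atTop (𝓝 (Real.exp (-2) * 2 ^ m / m.factorial)) := by
  have h1 : ∀ n, pm n m = ∑' k : ℕ, if k < n then (-1 : ℝ) ^ (k + m) * (k.choose m) * bm n k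
      else 0 := by
    intro n
    rw [pm_eq, tsum_eq_sum (s := range n)]
    · refine Finset.sum_congr rfl fun k hk => ?_
      rw [if_pos (mem_range.1 hk)]
    · intro k hk
      rw [if_neg (by simpa using hk)]
  simp_rw [h1]
  rw [← (poisson_inv m).tsum_eq]
  refine tendsto_tsum_of_dominated_convergence (bound := fun k : ℕ => (4 : ℝ) ^ k / k.factorial)
    (Real.summable_pow_div_factorial 4) ?_ ?_
  · intro k
    have := (bm_tendsto k).const_mul ((-1 : ℝ) ^ (k + m) * (k.choose m))
    refine this.congr' ?_
    filter_upwards [eventually_gt_atTop k] with n hn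
    rw [if_pos hn]
  · filter_upwards [eventually_gt_atTop 0] with n hn k
    split_ifs with hk
    · rw [norm_mul, norm_mul, norm_pow, norm_neg, norm_one, one_pow, one_mul,
        Real.norm_of_nonneg (bm_nonneg n k), Real.norm_of_nonneg (by positivity)]
      have h2 : ((k.choose m : ℕ) : ℝ) ≤ 2 ^ k := by exact_mod_cast Nat.choose_le_two_pow k m
      calc (k.choose m : ℝ) * bm n k ≤ 2 ^ k * (2 ^ k / k.factorial) := by
            have := bm_le hn k
            have := bm_nonneg n k
            gcongr
        _ = _ := by rw [show (4 : ℝ) = 2 * 2 by norm_num, mul_pow]; ring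
    · simp; positivity

/-! ### The uniform model -/

/-- spanning trees of `G` -/
noncomputable def tau (G : SimpleGraph (Fin n)) : ℕ :=
  (univ.filter fun T : SimpleGraph (Fin n) => T.IsTree ∧ T ≤ G).card

/-- pairs of spanning trees of `G` with `m` common edges -/
noncomputable def nm (m : ℕ) (G : SimpleGraph (Fin n)) : ℕ :=
  ((tp n).filter fun q => ec (q.1 ⊓ q.2) = m ∧ q.1 ⊔ q.2 ≤ G).card

/-- graphs with `M` edges -/
noncomputable def gM (n M : ℕ) : Finset (SimpleGraph (Fin n)) := univ.filter fun G => ec G = M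

/-- probability that a fixed set of `j` edges is contained in the uniform graph -/
noncomputable def Aj (n M j : ℕ) : ℝ :=
  ((n.choose 2 - j).choose (M - j) : ℝ) / ((n.choose 2).choose M : ℝ)

lemma card_gM (n M : ℕ) : (gM n M).card = (n.choose 2).choose M := by
  rw [← ec_top, ← card_sub]
  simp [gM]

lemma sum_super (H : SimpleGraph (Fin n)) (M : ℕ) (hM : ec H ≤ M) (hM2 : M ≤ n.choose 2) :
    (∑ G ∈ gM n M, if H ≤ G then (1 : ℝ) else 0) = Aj n M (ec H) * (n.choose 2).choose M := by
  have h2 : (0 : ℝ) < (n.choose 2).choose M := by exact_mod_cast Nat.choose_pos hM2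
  rw [Finset.sum_boole, gM, Finset.filter_filter, Aj, div_mul_cancel₀ _ h2.ne', ← card_super H M hM]
  congr 2
  ext G
  simp [and_comm]

lemma sum_tau (M : ℕ) (hM : n - 1 ≤ M) (hM2 : M ≤ n.choose 2) :
    ∑ G ∈ gM n M, (tau G : ℝ) = nt n * Aj n M (n - 1) * (n.choose 2).choose M := by
  have h1 : ∀ G ∈ gM n M, (tau G : ℝ) =
      ∑ T ∈ univ.filter (fun T : SimpleGraph (Fin n) => T.IsTree ∧ ⊥ ≤ T),
        if T ≤ G then (1 : ℝ) else 0 := by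
    intro G _
    rw [Finset.sum_boole, Finset.filter_filter, tau]
    simp
  rw [Finset.sum_congr rfl h1, Finset.sum_comm]
  have h2 : ∀ T ∈ univ.filter (fun T : SimpleGraph (Fin n) => T.IsTree ∧ ⊥ ≤ T),
      (∑ G ∈ gM n M, if T ≤ G then (1 : ℝ) else 0) =
        Aj n M (n - 1) * (n.choose 2).choose M := by
    intro T hT
    have h3 := tree_ec (mem_filter.1 hT).2.1
    have h4 : ec T = n - 1 := by omega
    rw [sum_super T M (by omega) hM2, h4]
  rw [Finset.sum_congr rfl h2, Finset.sum_const, nsmul_eq_mul, nt, tc]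
  ring

lemma sum_nm (m M : ℕ) (hn : 0 < n) (hM : 2 * (n - 1) ≤ M) (hM2 : M ≤ n.choose 2) :
    ∑ G ∈ gM n M, (nm m G : ℝ) =
      (nt n : ℝ) ^ 2 * (pm n m * Aj n M (2 * (n - 1) - m)) * (n.choose 2).choose M := by
  have h1 : ∀ G ∈ gM n M, (nm m G : ℝ) =
      ∑ q ∈ (tp n).filter (fun q => ec (q.1 ⊓ q.2) = m),
        if q.1 ⊔ q.2 ≤ G then (1 : ℝ) else 0 := by
    intro G _
    rw [Finset.sum_boole, Finset.filter_filter, nm]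
  rw [Finset.sum_congr rfl h1, Finset.sum_comm]
  have h2 : ∀ q ∈ (tp n).filter (fun q => ec (q.1 ⊓ q.2) = m),
      (∑ G ∈ gM n M, if q.1 ⊔ q.2 ≤ G then (1 : ℝ) else 0) =
        Aj n M (2 * (n - 1) - m) * (n.choose 2).choose M := by
    intro q hq
    have h3 := tp_sup (mem_filter.1 hq).1
    rw [(mem_filter.1 hq).2] at h3
    rw [sum_super _ M (by omega) hM2, h3]
  have h5 : (0 : ℝ) < nt n := tc_bot_pos hn
  rw [Finset.sum_congr rfl h2, Finset.sum_const, nsmul_eq_mul, pm]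
  field_simp

lemma tau_sq (G : SimpleGraph (Fin n)) : ((tau G : ℝ)) ^ 2 = ∑ m ∈ range n, (nm m G : ℝ) := by
  have h1 : (univ.filter fun T : SimpleGraph (Fin n) => T.IsTree ∧ T ≤ G) ×ˢ
      (univ.filter fun T : SimpleGraph (Fin n) => T.IsTree ∧ T ≤ G) =
      (tp n).filter fun q => q.1 ⊔ q.2 ≤ G := by
    ext ⟨a, b⟩
    simp only [tp, mem_filter, mem_univ, true_and, mem_product, sup_le_iff]
    tauto
  have h2 : tau G ^ 2 = ∑ m ∈ range n, nm m G := by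
    rw [sq, tau, ← Finset.card_product, h1,
      Finset.card_eq_sum_card_fiberwise (f := fun q => ec (q.1 ⊓ q.2)) (t := range n)]
    · refine Finset.sum_congr rfl fun m _ => ?_
      rw [nm, Finset.filter_filter]
      congr 1
      ext q
      simp [and_comm]
    · intro q hq
      simp only [coe_range, Set.mem_Iio]
      exact tp_inf_lt (mem_filter.1 hq).1
  exact_mod_cast h2

lemma nm_le (m : ℕ) (G : SimpleGraph (Fin n)) : (nm m G : ℝ) ≤ (tau G : ℝ) ^ 2 := by
  rw [tau_sq]
  by_cases hm : m ∈ range n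
  · exact Finset.single_le_sum (f := fun m => (nm m G : ℝ)) (fun _ _ => by positivity) hm
  · have : nm m G = 0 := by
      rw [nm, Finset.card_eq_zero, Finset.filter_eq_empty_iff]
      rintro q hq ⟨h1, -⟩
      have := tp_inf_lt hq
      simp at hm
      omega
    rw [this]
    simp only [CharP.cast_eq_zero]
    exact Finset.sum_nonneg fun _ _ => by positivity

/-- the conditional probability -/
noncomputable def rG (m : ℕ) (G : SimpleGraph (Fin n)) : ℝ :=
  if G.Connected then (nm m G : ℝ) / (tau G : ℝ) ^ 2 else if m = 0 then 1 else 0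

lemma rG_nonneg (m : ℕ) (G : SimpleGraph (Fin n)) : 0 ≤ rG m G := by
  unfold rG; split_ifs <;> positivity

lemma rG_le_one (m : ℕ) (G : SimpleGraph (Fin n)) : rG m G ≤ 1 := by
  unfold rG
  split_ifs
  · exact div_le_one_of_le₀ (nm_le m G) (by positivity)
  · exact le_rfl
  · exact zero_le_one

lemma rG_close (m : ℕ) (G : SimpleGraph (Fin n)) (b : ℝ) (hb : 0 < b) :
    |rG m G - (nm m G : ℝ) / b ^ 2| ≤ |1 - (tau G / b) ^ 2| := by
  by_cases hG : G.Connected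
  · have ht : 0 < tau G := by
      obtain ⟨T, hT, hT'⟩ := hG.exists_isTree_le
      exact Finset.card_pos.2 ⟨T, by simp [hT, hT']⟩
    have ht' : (0 : ℝ) < tau G := by exact_mod_cast ht
    have h1 : rG m G - (nm m G : ℝ) / b ^ 2 = rG m G * (1 - (tau G / b) ^ 2) := by
      rw [rG, if_pos hG]
      field_simp
    rw [h1, abs_mul, abs_of_nonneg (rG_nonneg m G)]
    exact mul_le_of_le_one_left (abs_nonneg _) (rG_le_one m G)
  · have ht : tau G = 0 := by
      rw [tau, Finset.card_eq_zero, Finset.filter_eq_empty_iff]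
      rintro T - ⟨hT, hle⟩
      exact hG (hT.connected.mono hle)
    have h2 : (nm m G : ℝ) = 0 := by
      have := nm_le m G
      rw [ht] at this
      have h3 : (0 : ℝ) ≤ nm m G := by positivity
      simp at this
      simp [this]
    rw [h2, ht]
    simp only [zero_div, sub_zero, CharP.cast_eq_zero, ne_eq, OfNat.ofNat_ne_zero,
      not_false_eq_true, zero_pow, abs_one]
    rw [abs_of_nonneg (rG_nonneg m G)]
    exact rG_le_one m G

/-- average of the conditional probability over graphs with `M` edges -/
noncomputable def gav (n M m : ℕ) : ℝ := (∑ G ∈ gM n M, rG m G) / (n.choose 2).choose M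

/-- second moment ratio -/
noncomputable def rho (n M m : ℕ) : ℝ := Aj n M (2 * (n - 1) - m) / Aj n M (n - 1) ^ 2

lemma gav_close (n M m : ℕ) (hn : 0 < n) (hM : 2 * (n - 1) ≤ M) (hM2 : M ≤ n.choose 2) :
    |gav n M m - pm n m * rho n M m| ≤
      (∑ j ∈ range n, pm n j * rho n M j - 1) +
        2 * Real.sqrt (∑ j ∈ range n, pm n j * rho n M j - 1) := by
  set D : ℝ := ((n.choose 2).choose M : ℝ) with hD
  have hD0 : 0 < D := by rw [hD]; exact_mod_cast Nat.choose_pos hM2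
  have ha : 0 < Aj n M (n - 1) := by
    unfold Aj
    have := Nat.choose_pos (show M - (n - 1) ≤ n.choose 2 - (n - 1) by omega)
    positivity
  set a := Aj n M (n - 1) with ha'
  have ht : (0 : ℝ) < nt n := tc_bot_pos hn
  set b := nt n * a with hb
  have hb0 : 0 < b := mul_pos ht ha
  set d : SimpleGraph (Fin n) → ℝ := fun G => 1 - tau G / b with hd
  set v := ∑ j ∈ range n, pm n j * rho n M j - 1 with hv
  have hcard : ((gM n M).card : ℝ) = D := by rw [card_gM]
  have hZ : ∀ j, ∑ G ∈ gM n M, (nm j G : ℝ) / b ^ 2 = pm n j * rho n M j * D := by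
    intro j
    rw [← Finset.sum_div, sum_nm j M hn hM hM2, rho, ← ha', hb, ← hD]
    field_simp
  have h1 : ∑ G ∈ gM n M, (tau G : ℝ) / b = D := by
    rw [← Finset.sum_div, sum_tau M (by omega) hM2, ← ha', ← hb, ← hD]
    field_simp
  have h2 : ∑ G ∈ gM n M, ((tau G : ℝ) / b) ^ 2 = (v + 1) * D := by
    simp_rw [div_pow, tau_sq, Finset.sum_div]
    rw [Finset.sum_comm, Finset.sum_congr rfl fun j _ => hZ j, ← Finset.sum_mul, hv]
    ring
  have h3 : ∑ G ∈ gM n M, d G ^ 2 = v * D := by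
    have : ∀ G ∈ gM n M, d G ^ 2 = 1 - 2 * ((tau G : ℝ) / b) + ((tau G : ℝ) / b) ^ 2 := by
      intro G _; simp only [hd]; ring
    rw [Finset.sum_congr rfl this, Finset.sum_add_distrib, Finset.sum_sub_distrib,
      ← Finset.mul_sum, h1, h2, Finset.sum_const, nsmul_eq_mul, hcard]
    ring
  have h4 : ∑ G ∈ gM n M, |d G| ≤ Real.sqrt v * D := by
    have h5 := sq_sum_le_card_mul_sum_sq (s := gM n M) (f := fun G => |d G|)
    simp only [sq_abs] at h5
    rw [hcard, h3] at h5
    have h6 : (∑ G ∈ gM n M, |d G|) / D ≤ Real.sqrt v := by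
      apply Real.le_sqrt_of_sq_le
      rw [div_pow, div_le_iff₀ (by positivity)]
      linarith
    rwa [div_le_iff₀ hD0] at h6
  have h7 : gav n M m - pm n m * rho n M m =
      (∑ G ∈ gM n M, (rG m G - (nm m G : ℝ) / b ^ 2)) / D := by
    rw [Finset.sum_sub_distrib, hZ, gav, ← hD]
    field_simp
  rw [h7, abs_div, abs_of_pos hD0, div_le_iff₀ hD0]
  calc |∑ G ∈ gM n M, (rG m G - (nm m G : ℝ) / b ^ 2)|
      ≤ ∑ G ∈ gM n M, |rG m G - (nm m G : ℝ) / b ^ 2| := Finset.abs_sum_le_sum_abs _ _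
    _ ≤ ∑ G ∈ gM n M, (d G ^ 2 + 2 * |d G|) := by
        refine Finset.sum_le_sum fun G _ => (rG_close m G b hb0).trans ?_
        have : 1 - ((tau G : ℝ) / b) ^ 2 = - d G ^ 2 + 2 * d G := by simp only [hd]; ring
        rw [this]
        refine (abs_add_le _ _).trans ?_
        rw [abs_neg, abs_mul, abs_of_nonneg (sq_nonneg _)]
        simp
    _ ≤ v * D + 2 * (Real.sqrt v * D) := by
        rw [Finset.sum_add_distrib, ← Finset.mul_sum, h3]
        linarith
    _ = _ := by ring

end ERP

namespace ERP
open Finset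
open scoped Classical

lemma Aj_zero (n M : ℕ) (hM : M ≤ n.choose 2) : Aj n M 0 = 1 := by
  have : (0 : ℝ) < (n.choose 2).choose M := by exact_mod_cast Nat.choose_pos hM
  simp only [Aj, Nat.sub_zero]
  exact div_self this.ne'

lemma Aj_succ (n M j : ℕ) (hj : j < M) (hM : M ≤ n.choose 2) :
    Aj n M (j + 1) * ((n.choose 2 : ℕ) - (j : ℝ)) = Aj n M j * ((M : ℝ) - j) := by
  have h := Nat.add_one_mul_choose_eq (n.choose 2 - (j + 1)) (M - (j + 1))
  rw [show n.choose 2 - (j + 1) + 1 = n.choose 2 - j by omega,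
    show M - (j + 1) + 1 = M - j by omega] at h
  have h' : ((n.choose 2 : ℕ) - (j : ℝ)) * ((n.choose 2 - (j + 1)).choose (M - (j + 1)) : ℝ) =
      ((n.choose 2 - j).choose (M - j) : ℝ) * ((M : ℝ) - j) := by
    rw [← Nat.cast_sub (by omega), ← Nat.cast_sub (by omega)]
    exact_mod_cast h
  unfold Aj
  rw [div_mul_eq_mul_div, div_mul_eq_mul_div, ← h']
  ring

lemma Aj_prod (n M : ℕ) (hM : M ≤ n.choose 2) : ∀ j, j ≤ M →
    Aj n M j = ∏ i ∈ range j, ((M : ℝ) - i) / ((n.choose 2 : ℕ) - (i : ℝ)) := by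
  intro j
  induction j with
  | zero => intro _; simp [Aj_zero n M hM]
  | succ j ih =>
    intro hj
    rw [Finset.prod_range_succ, ← ih (by omega)]
    have h1 := Aj_succ n M j (by omega) hM
    have h2 : (0 : ℝ) < ((n.choose 2 : ℕ) - (j : ℝ)) := by
      rw [sub_pos]; exact_mod_cast (by omega : j < n.choose 2)
    rw [← mul_div_assoc, eq_div_iff h2.ne', h1]

lemma Aj_pos (n M j : ℕ) (hM : M ≤ n.choose 2) : 0 < Aj n M j := by
  unfold Aj
  have := Nat.choose_pos hM
  have := Nat.choose_pos (show M - j ≤ n.choose 2 - j by omega)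
  positivity

lemma rho_pos (n M m : ℕ) (hM : M ≤ n.choose 2) : 0 < rho n M m := by
  have := Aj_pos n M (n - 1) hM
  have := Aj_pos n M (2 * (n - 1) - m) hM
  unfold rho; positivity

lemma rho_zero_eq (x M : ℕ) (hM : 2 * x < M) (hM2 : M ≤ (x + 1).choose 2) :
    rho (x + 1) M 0 = ∏ i ∈ range x, ((1 - (x : ℝ) / (M - i)) *
      (1 + (x : ℝ) / (((x + 1).choose 2 : ℕ) - i - x))) := by
  have h1 := Aj_prod (x + 1) M hM2 (x + x) (by omega)
  have hx : 0 < Aj (x + 1) M x := Aj_pos _ _ _ hM2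
  unfold rho
  rw [show 2 * (x + 1 - 1) - 0 = x + x by omega, show x + 1 - 1 = x by omega, h1,
    Finset.prod_range_add, ← Aj_prod (x + 1) M hM2 x (by omega)]
  rw [sq, mul_div_mul_left _ _ hx.ne', Aj_prod (x + 1) M hM2 x (by omega), ← Finset.prod_div_distrib]
  refine Finset.prod_congr rfl fun i hi => ?_
  have hi' : (i : ℝ) < x := by exact_mod_cast mem_range.1 hi
  have hM' : (2 : ℝ) * x < M := by exact_mod_cast hM
  have hN' : (M : ℝ) ≤ ((x + 1).choose 2 : ℕ) := by exact_mod_cast hM2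
  push_cast
  set N : ℝ := (((x + 1).choose 2 : ℕ) : ℝ)
  have e1 : (M : ℝ) - i ≠ 0 := by linarith
  have e2 : N - i ≠ 0 := by linarith
  have e3 : N - i - x ≠ 0 := by linarith
  have e4 : N - (x + i) ≠ 0 := by linarith
  field_simp
  ring

lemma rho_zero_le (x M : ℕ) (hM : 2 * x < M) (hM2 : M ≤ (x + 1).choose 2) :
    rho (x + 1) M 0 ≤ (1 - (x : ℝ) / M) ^ x * (1 + (x : ℝ) / (((x + 1).choose 2 : ℕ) - 2 * x)) ^ x := by
  rw [rho_zero_eq x M hM hM2, ← mul_pow]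
  have hM' : (2 : ℝ) * x < M := by exact_mod_cast hM
  have hN' : (M : ℝ) ≤ ((x + 1).choose 2 : ℕ) := by exact_mod_cast hM2
  set N : ℝ := (((x + 1).choose 2 : ℕ) : ℝ)
  have hx0 : (0 : ℝ) ≤ x := by positivity
  have hcst : ∀ c : ℝ, c ^ x = ∏ i ∈ range x, c := by intro c; simp
  rw [hcst]
  have hM0 : (0 : ℝ) < M := by linarith
  refine Finset.prod_le_prod (fun i hi => ?_) (fun i hi => ?_)
  · have hi' : (i : ℝ) < x := by exact_mod_cast mem_range.1 hi
    have h1 : (x : ℝ) / (M - i) ≤ 1 := by rw [div_le_one (by linarith)]; linarith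
    have h2 : 0 ≤ (x : ℝ) / (N - i - x) := div_nonneg hx0 (by linarith)
    exact mul_nonneg (by linarith) (by linarith)
  · have hi' : (i : ℝ) < x := by exact_mod_cast mem_range.1 hi
    have hi0 : (0 : ℝ) ≤ i := by positivity
    have h1 : (x : ℝ) / M ≤ (x : ℝ) / (M - i) :=
      div_le_div_of_nonneg_left hx0 (by linarith) (by linarith)
    have h2 : (x : ℝ) / (N - i - x) ≤ (x : ℝ) / (N - 2 * x) :=
      div_le_div_of_nonneg_left hx0 (by linarith) (by linarith)
    have h3 : (x : ℝ) / M ≤ 1 := by rw [div_le_one (by linarith)]; linarith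
    have h4 : 0 ≤ (x : ℝ) / (N - i - x) := div_nonneg hx0 (by linarith)
    exact mul_le_mul (by linarith) (by linarith) (by linarith) (by linarith)

lemma rho_zero_ge (x M : ℕ) (hM : 2 * x < M) (hM2 : M ≤ (x + 1).choose 2) :
    (1 - (x : ℝ) / (M - x)) ^ x * (1 + (x : ℝ) / (((x + 1).choose 2 : ℕ) - x)) ^ x ≤
      rho (x + 1) M 0 := by
  rw [rho_zero_eq x M hM hM2, ← mul_pow]
  have hM' : (2 : ℝ) * x < M := by exact_mod_cast hM
  have hN' : (M : ℝ) ≤ ((x + 1).choose 2 : ℕ) := by exact_mod_cast hM2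
  set N : ℝ := (((x + 1).choose 2 : ℕ) : ℝ)
  have hx0 : (0 : ℝ) ≤ x := by positivity
  have hcst : ∀ c : ℝ, c ^ x = ∏ i ∈ range x, c := by intro c; simp
  rw [hcst]
  have h3 : (x : ℝ) / (M - x) ≤ 1 := by rw [div_le_one (by linarith)]; linarith
  have h4 : 0 ≤ (x : ℝ) / (N - x) := div_nonneg hx0 (by linarith)
  refine Finset.prod_le_prod (fun i hi => mul_nonneg (by linarith) (by linarith)) (fun i hi => ?_)
  have hi' : (i : ℝ) < x := by exact_mod_cast mem_range.1 hi
  have hi0 : (0 : ℝ) ≤ i := by positivity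
  have h1 : (x : ℝ) / (M - i) ≤ (x : ℝ) / (M - x) :=
    div_le_div_of_nonneg_left hx0 (by linarith) (by linarith)
  have h2 : (x : ℝ) / (N - x) ≤ (x : ℝ) / (N - i - x) :=
    div_le_div_of_nonneg_left hx0 (by linarith) (by linarith)
  exact mul_le_mul (by linarith) (by linarith) (by linarith) (by linarith)

lemma rho_succ (x M m : ℕ) (hm : m + 1 ≤ 2 * x) (hM : 2 * x < M) (hM2 : M ≤ (x + 1).choose 2) :
    rho (x + 1) M (m + 1) = rho (x + 1) M m *
      ((((x + 1).choose 2 : ℕ) - ((2 * x - (m + 1) : ℕ) : ℝ)) / (M - ((2 * x - (m + 1) : ℕ) : ℝ))) := by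
  have h := Aj_succ (x + 1) M (2 * x - (m + 1)) (by omega) hM2
  rw [show 2 * x - (m + 1) + 1 = 2 * x - m by omega] at h
  have h2 : (0 : ℝ) < M - ((2 * x - (m + 1) : ℕ) : ℝ) := by
    rw [sub_pos]; exact_mod_cast (by omega)
  have hx : 0 < Aj (x + 1) M x := Aj_pos _ _ _ hM2
  unfold rho
  rw [show x + 1 - 1 = x by omega]
  generalize ((2 * x - (m + 1) : ℕ) : ℝ) = t at *
  field_simp
  linarith

/-! ### Limits -/

section limits
open Filter Topology

lemma chooseN (x : ℕ) : (((x + 1).choose 2 : ℕ) : ℝ) = (x + 1) * x / 2 := by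
  rw [Nat.cast_choose_two]; push_cast; ring

lemma lim_xN : Tendsto (fun x : ℕ => (x : ℝ) / (((x + 1).choose 2 : ℕ) : ℝ)) atTop (𝓝 0) := by
  have h := (tendsto_one_div_add_atTop_nhds_zero_nat (𝕜 := ℝ)).const_mul 2
  rw [mul_zero] at h
  refine h.congr' ?_
  filter_upwards [eventually_gt_atTop 0] with x hx
  have : (0 : ℝ) < x := by exact_mod_cast hx
  rw [chooseN]
  field_simp

lemma lim_xxN : Tendsto (fun x : ℕ => (x : ℝ) * x / (((x + 1).choose 2 : ℕ) : ℝ)) atTop (𝓝 2) := by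
  have h := (tendsto_natCast_div_add_atTop (1 : ℝ)).const_mul 2
  rw [mul_one] at h
  refine h.congr' ?_
  filter_upwards [eventually_gt_atTop 0] with x hx
  have : (0 : ℝ) < x := by exact_mod_cast hx
  rw [chooseN]
  field_simp

/-- the general exponential limit -/
lemma lim_exp (L : ℕ → ℝ) (c q : ℝ) (hq : 0 < q)
    (hL : Tendsto (fun x : ℕ => L x / (((x + 1).choose 2 : ℕ) : ℝ)) atTop (𝓝 q)) :
    Tendsto (fun x : ℕ => (1 + c * ((x : ℝ) / L x)) ^ x) atTop (𝓝 (Real.exp (c * (2 / q)))) := by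
  apply Real.tendsto_one_add_pow_exp_of_tendsto
  have h := (lim_xxN.div hL hq.ne').const_mul c
  refine h.congr' ?_
  filter_upwards [eventually_gt_atTop 0] with x hx
  have h1 : (0 : ℝ) < x := by exact_mod_cast hx
  have h2 : (0 : ℝ) < (((x + 1).choose 2 : ℕ) : ℝ) := by rw [chooseN]; positivity
  simp only [Pi.div_apply]
  rw [div_div_div_cancel_right₀ h2.ne']
  ring

variable {p : ℝ} {M : ℕ → ℕ}

lemma ev_M (hp : 0 < p)
    (hM : Tendsto (fun x : ℕ => (M x : ℝ) / (((x + 1).choose 2 : ℕ) : ℝ)) atTop (𝓝 p)) :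
    ∀ᶠ x in atTop, p / 2 * (((x + 1).choose 2 : ℕ) : ℝ) < M x - 2 * x := by
  have h : Tendsto (fun x : ℕ => (M x : ℝ) / (((x + 1).choose 2 : ℕ) : ℝ) -
      2 * ((x : ℝ) / (((x + 1).choose 2 : ℕ) : ℝ))) atTop (𝓝 (p - 2 * 0)) :=
    hM.sub (lim_xN.const_mul 2)
  have h2 := h.eventually (lt_mem_nhds (show p / 2 < p - 2 * 0 by linarith))
  filter_upwards [h2, eventually_gt_atTop 0] with x hx hx0
  have h1 : (0 : ℝ) < x := by exact_mod_cast hx0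
  have h2 : (0 : ℝ) < (((x + 1).choose 2 : ℕ) : ℝ) := by rw [chooseN]; positivity
  rw [← mul_div_assoc, ← sub_div, lt_div_iff₀ h2] at hx
  exact hx

lemma ev_M' (hp : 0 < p)
    (hM : Tendsto (fun x : ℕ => (M x : ℝ) / (((x + 1).choose 2 : ℕ) : ℝ)) atTop (𝓝 p)) :
    ∀ᶠ x in atTop, 2 * x < M x := by
  filter_upwards [ev_M hp hM] with x hx
  have : (0 : ℝ) ≤ p / 2 * (((x + 1).choose 2 : ℕ) : ℝ) := by positivity
  have : (2 : ℝ) * x < M x := by linarith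
  exact_mod_cast this

lemma rho_zero_tendsto (hp : 0 < p) (hMN : ∀ x, M x ≤ (x + 1).choose 2)
    (hM : Tendsto (fun x : ℕ => (M x : ℝ) / (((x + 1).choose 2 : ℕ) : ℝ)) atTop (𝓝 p)) :
    Tendsto (fun x => rho (x + 1) (M x) 0) atTop (𝓝 (Real.exp (2 - 2 / p))) := by
  have hN1 : Tendsto (fun x : ℕ => (((x + 1).choose 2 : ℕ) : ℝ) / (((x + 1).choose 2 : ℕ) : ℝ))
      atTop (𝓝 1) := by
    refine tendsto_const_nhds.congr' ?_
    filter_upwards [eventually_gt_atTop 0] with x hx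
    have h1 : (0 : ℝ) < x := by exact_mod_cast hx
    have h2 : (0 : ℝ) < (((x + 1).choose 2 : ℕ) : ℝ) := by rw [chooseN]; positivity
    rw [div_self h2.ne']
  have hs : ∀ (L : ℕ → ℝ) (c q : ℝ),
      Tendsto (fun x : ℕ => L x / (((x + 1).choose 2 : ℕ) : ℝ)) atTop (𝓝 q) →
      Tendsto (fun x : ℕ => (L x - c * x) / (((x + 1).choose 2 : ℕ) : ℝ)) atTop (𝓝 q) := by
    intro L c q h
    have := h.sub (lim_xN.const_mul c)
    rw [mul_zero, sub_zero] at this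
    refine this.congr fun x => ?_
    ring
  have e : Real.exp (2 - 2 / p) = Real.exp (-1 * (2 / p)) * Real.exp (1 * (2 / 1)) := by
    rw [← Real.exp_add]; congr 1; ring
  rw [e]
  have u := (lim_exp _ (-1) p hp hM).mul (lim_exp _ 1 1 one_pos (hs _ 2 _ hN1))
  have l := (lim_exp _ (-1) p hp (hs _ 1 _ hM)).mul (lim_exp _ 1 1 one_pos (hs _ 1 _ hN1))
  refine tendsto_of_tendsto_of_tendsto_of_le_of_le' l u ?_ ?_
  · filter_upwards [ev_M' hp hM] with x hx
    refine le_trans (le_of_eq ?_) (rho_zero_ge x (M x) hx (hMN x))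
    congr 2 <;> ring
  · filter_upwards [ev_M' hp hM] with x hx
    refine le_trans (rho_zero_le x (M x) hx (hMN x)) (le_of_eq ?_)
    congr 2 <;> ring

lemma rho_tendsto (hp : 0 < p) (hMN : ∀ x, M x ≤ (x + 1).choose 2)
    (hM : Tendsto (fun x : ℕ => (M x : ℝ) / (((x + 1).choose 2 : ℕ) : ℝ)) atTop (𝓝 p)) (m : ℕ) :
    Tendsto (fun x => rho (x + 1) (M x) m) atTop (𝓝 (Real.exp (2 - 2 / p) * (1 / p) ^ m)) := by
  induction m with
  | zero => simpa using rho_zero_tendsto hp hMN hM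
  | succ m ih =>
    have hj : Tendsto (fun x : ℕ => ((2 * x - (m + 1) : ℕ) : ℝ) / (((x + 1).choose 2 : ℕ) : ℝ))
        atTop (𝓝 0) := by
      have h0 := lim_xN.const_mul 2
      rw [mul_zero] at h0
      refine squeeze_zero (fun x => by positivity) (fun x => ?_) h0
      rw [← mul_div_assoc]
      gcongr
      exact_mod_cast Nat.sub_le _ _
    have h1 := (tendsto_const_nhds (x := (1 : ℝ))).sub hj
    have h2 := hM.sub hj
    rw [sub_zero] at h1 h2
    have h3 := ih.mul (h1.div h2 hp.ne')
    rw [pow_succ, ← mul_assoc]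
    refine h3.congr' ?_
    filter_upwards [ev_M' hp hM, eventually_gt_atTop (m + 1)] with x hx hxm
    rw [rho_succ x (M x) m (by omega) hx (hMN x)]
    have e1 : (0 : ℝ) < x := by exact_mod_cast (by omega : 0 < x)
    have e2 : (0 : ℝ) < (((x + 1).choose 2 : ℕ) : ℝ) := by rw [chooseN]; positivity
    simp only [Pi.div_apply]
    rw [← sub_div, one_sub_div e2.ne', div_div_div_cancel_right₀ e2.ne']

lemma rho_le (hp : 0 < p) (hMN : ∀ x, M x ≤ (x + 1).choose 2)
    (hM : Tendsto (fun x : ℕ => (M x : ℝ) / (((x + 1).choose 2 : ℕ) : ℝ)) atTop (𝓝 p)) :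
    ∀ᶠ x in atTop, ∀ m, m ≤ 2 * x →
      rho (x + 1) (M x) m ≤ rho (x + 1) (M x) 0 * (2 / p) ^ m := by
  filter_upwards [ev_M hp hM, ev_M' hp hM] with x hx hx' m
  induction m with
  | zero => simp
  | succ m ih =>
    intro hm
    rw [rho_succ x (M x) m hm hx' (hMN x), pow_succ, ← mul_assoc]
    have h1 : (((2 * x - (m + 1) : ℕ)) : ℝ) ≤ 2 * x := by exact_mod_cast Nat.sub_le _ _
    have h0 : (0 : ℝ) ≤ (((2 * x - (m + 1) : ℕ)) : ℝ) := by positivity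
    have hN : (M x : ℝ) ≤ (((x + 1).choose 2 : ℕ) : ℝ) := by exact_mod_cast hMN x
    have hN0 : (0 : ℝ) ≤ (((x + 1).choose 2 : ℕ) : ℝ) := by positivity
    generalize (((2 * x - (m + 1) : ℕ)) : ℝ) = t at *
    generalize (((x + 1).choose 2 : ℕ) : ℝ) = N at *
    have hpos : 0 ≤ p / 2 * N := by positivity
    refine mul_le_mul (ih (by omega)) ?_ ?_ ?_
    · rw [div_le_div_iff₀ (by linarith) hp]
      nlinarith
    · exact div_nonneg (by linarith) (by linarith)
    · have := rho_pos (x + 1) (M x) 0 (hMN x)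
      positivity

lemma v_tendsto (hp : 0 < p) (hMN : ∀ x, M x ≤ (x + 1).choose 2)
    (hM : Tendsto (fun x : ℕ => (M x : ℝ) / (((x + 1).choose 2 : ℕ) : ℝ)) atTop (𝓝 p)) :
    Tendsto (fun x => ∑ j ∈ range (x + 1), pm (x + 1) j * rho (x + 1) (M x) j) atTop (𝓝 1) := by
  have hsum : HasSum (fun m : ℕ => (Real.exp (-2) * 2 ^ m / m.factorial) *
      (Real.exp (2 - 2 / p) * (1 / p) ^ m)) 1 := by
    have h2 : HasSum (fun j : ℕ => (2 / p : ℝ) ^ j / j.factorial) (Real.exp (2 / p)) := by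
      rw [Real.exp_eq_exp_ℝ]
      exact NormedSpace.expSeries_div_hasSum_exp (2 / p : ℝ)
    have h3 := h2.mul_left (Real.exp (-2) * Real.exp (2 - 2 / p))
    rw [← Real.exp_add, ← Real.exp_add, show (-2 : ℝ) + (2 - 2 / p) + 2 / p = 0 by ring,
      Real.exp_zero, Real.exp_add] at h3
    have e : (fun m : ℕ => (Real.exp (-2) * 2 ^ m / m.factorial) *
      (Real.exp (2 - 2 / p) * (1 / p) ^ m)) = fun j : ℕ =>
        Real.exp (-2) * Real.exp (2 - 2 / p) * ((2 / p : ℝ) ^ j / j.factorial) := by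
      funext j
      rw [div_pow, div_pow, one_pow]
      field_simp
    rw [e]
    exact h3
  have h1 : ∀ x, ∑ j ∈ range (x + 1), pm (x + 1) j * rho (x + 1) (M x) j =
      ∑' k : ℕ, if k < x + 1 then pm (x + 1) k * rho (x + 1) (M x) k else 0 := by
    intro x
    rw [tsum_eq_sum (s := range (x + 1))]
    · refine Finset.sum_congr rfl fun k hk => ?_
      rw [if_pos (mem_range.1 hk)]
    · intro k hk
      rw [if_neg (by simpa using hk)]
  simp_rw [h1]
  rw [← hsum.tsum_eq]
  set C := Real.exp (2 - 2 / p) + 1 with hC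
  have hev := (rho_zero_tendsto hp hMN hM).eventually (gt_mem_nhds (show _ < C by
    rw [hC]; linarith))
  refine tendsto_tsum_of_dominated_convergence
    (bound := fun k : ℕ => C * ((4 / p : ℝ) ^ k / k.factorial))
    ((Real.summable_pow_div_factorial (4 / p)).mul_left C) ?_ ?_
  · intro k
    have := ((pm_tendsto k).comp (tendsto_add_atTop_nat 1)).mul (rho_tendsto hp hMN hM k)
    refine this.congr' ?_
    filter_upwards [eventually_ge_atTop k] with x hx
    rw [if_pos (by omega)]
    rfl
  · filter_upwards [hev, rho_le hp hMN hM] with x hx hle k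
    have hC0 : 0 < C := by rw [hC]; positivity
    split_ifs with hk
    · have a1 := pm_nonneg (x + 1) k
      have a2 := rho_pos (x + 1) (M x) k (hMN x)
      have a3 : pm (x + 1) k ≤ 2 ^ k / k.factorial :=
        (pm_le_bm _ _).trans (bm_le (by omega) k)
      rw [Real.norm_of_nonneg (by positivity)]
      calc pm (x + 1) k * rho (x + 1) (M x) k ≤ (2 ^ k / k.factorial) * (C * (2 / p) ^ k) := by
            have := hle k (by omega)
            have b : rho (x + 1) (M x) 0 * (2 / p) ^ k ≤ C * (2 / p) ^ k := by gcongr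
            have := this.trans b
            gcongr
        _ = _ := by
            rw [show (4 : ℝ) / p = 2 * (2 / p) by ring, mul_pow]; ring
    · simp; positivity

lemma gav_tendsto (hp : 0 < p) (hMN : ∀ x, M x ≤ (x + 1).choose 2)
    (hM : Tendsto (fun x : ℕ => (M x : ℝ) / (((x + 1).choose 2 : ℕ) : ℝ)) atTop (𝓝 p)) (m : ℕ) :
    Tendsto (fun x => gav (x + 1) (M x) m) atTop
      (𝓝 (Real.exp (-2 / p) * (2 / p) ^ m / m.factorial)) := by
  have hv := (v_tendsto hp hMN hM).sub_const 1
  rw [sub_self] at hv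
  have hs := hv.sqrt
  rw [Real.sqrt_zero] at hs
  have hb := hv.add (hs.const_mul 2)
  rw [mul_zero, add_zero] at hb
  have h1 := ((pm_tendsto m).comp (tendsto_add_atTop_nat 1)).mul (rho_tendsto hp hMN hM m)
  have hd : Tendsto (fun x => gav (x + 1) (M x) m - pm (x + 1) m * rho (x + 1) (M x) m) atTop
      (𝓝 0) := by
    refine squeeze_zero_norm' ?_ hb
    filter_upwards [ev_M' hp hM] with x hx
    exact gav_close (x + 1) (M x) m (by omega) (by omega) (hMN x)
  have h2 := hd.add h1
  have e : 0 + Real.exp (-2) * 2 ^ m / m.factorial * (Real.exp (2 - 2 / p) * (1 / p) ^ m) =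
      Real.exp (-2 / p) * (2 / p) ^ m / m.factorial := by
    rw [show -2 / p = -2 + (2 - 2 / p) by ring, Real.exp_add, div_pow 2 p, div_pow 1 p, one_pow]
    field_simp
    ring
  rw [e] at h2
  refine h2.congr fun x => ?_
  simp

end limits

end ERP

namespace ERP
open Finset
open scoped Classical

lemma rG_def (n m : ℕ) (G : SimpleGraph (Fin n)) : rG m G =
      (if G.Connected then
          (Nat.card {q : SimpleGraph (Fin n) × SimpleGraph (Fin n) //
              q.1 ≤ G ∧ q.2 ≤ G ∧ q.1.IsTree ∧ q.2.IsTree ∧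
                Nat.card (q.1 ⊓ q.2).edgeSet = m} : ℝ) /
            (Nat.card {T : SimpleGraph (Fin n) // T ≤ G ∧ T.IsTree} : ℝ) ^ 2
        else if m = 0 then 1 else 0) := by
  have h1 : Nat.card {T : SimpleGraph (Fin n) // T ≤ G ∧ T.IsTree} = tau G := by
    rw [Nat.card_eq_fintype_card, Fintype.card_subtype, tau]
    congr 1
    ext T
    simp [and_comm]
  have h2 : Nat.card {q : SimpleGraph (Fin n) × SimpleGraph (Fin n) //
              q.1 ≤ G ∧ q.2 ≤ G ∧ q.1.IsTree ∧ q.2.IsTree ∧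
                Nat.card (q.1 ⊓ q.2).edgeSet = m} = nm m G := by
    rw [Nat.card_eq_fintype_card, Fintype.card_subtype, nm]
    congr 1
    ext q
    simp only [tp, mem_filter, mem_univ, true_and, mem_product, sup_le_iff, ec]
    tauto
  rw [h1, h2, rG]

lemma er_eq (n m : ℕ) (p : ℝ) : erdosRenyiProbCommonEdgesEq n p m =
    ∑ M ∈ range (n.choose 2 + 1),
      ((n.choose 2).choose M : ℝ) * p ^ M * (1 - p) ^ (n.choose 2 - M) * gav n M m := by
  have h0 : erdosRenyiProbCommonEdgesEq n p m =
      ∑ G : SimpleGraph (Fin n), p ^ ec G * (1 - p) ^ (n.choose 2 - ec G) * rG m G := by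
    unfold erdosRenyiProbCommonEdgesEq
    refine Finset.sum_congr rfl fun G _ => ?_
    rw [rG_def]
    rfl
  rw [h0, ← Finset.sum_fiberwise_of_maps_to (g := fun G => ec G) (t := range (n.choose 2 + 1))]
  · refine Finset.sum_congr rfl fun M hM => ?_
    have hM' : M ≤ n.choose 2 := by have := mem_range.1 hM; omega
    have hD : (0 : ℝ) < (n.choose 2).choose M := by exact_mod_cast Nat.choose_pos hM'
    have h1 : ∀ G ∈ univ.filter (fun G : SimpleGraph (Fin n) => ec G = M),
        p ^ ec G * (1 - p) ^ (n.choose 2 - ec G) * rG m G =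
          p ^ M * (1 - p) ^ (n.choose 2 - M) * rG m G := by
      intro G hG
      rw [(mem_filter.1 hG).2]
    rw [Finset.sum_congr rfl h1, ← Finset.mul_sum, gav, gM]
    field_simp
  · intro G _
    have := ec_le G
    rw [mem_range]; omega

lemma gav_nonneg (n M m : ℕ) : 0 ≤ gav n M m := by
  unfold gav
  have := Finset.sum_nonneg fun G (_ : G ∈ gM n M) => rG_nonneg m G
  positivity

lemma gav_le_one (n M m : ℕ) : gav n M m ≤ 1 := by
  unfold gav
  refine div_le_one_of_le₀ ?_ (by positivity)
  refine (Finset.sum_le_sum fun G (_ : G ∈ gM n M) => rG_le_one m G).trans ?_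
  rw [Finset.sum_const, card_gM]
  simp

lemma bin_prob (N : ℕ) (p : ℝ) :
    ∑ M ∈ range (N + 1), (N.choose M : ℝ) * p ^ M * (1 - p) ^ (N - M) = 1 := by
  have := congrArg (Polynomial.eval p) (bernsteinPolynomial.sum ℝ N)
  simpa [bernsteinPolynomial, Polynomial.eval_finset_sum] using this

lemma bin_var (N : ℕ) (p : ℝ) :
    ∑ M ∈ range (N + 1), (N.choose M : ℝ) * p ^ M * (1 - p) ^ (N - M) * ((M : ℝ) - p * N) ^ 2
      = N * p * (1 - p) := by
  have := congrArg (Polynomial.eval p) (bernsteinPolynomial.variance ℝ N)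
  simp only [bernsteinPolynomial, Polynomial.eval_finset_sum, nsmul_eq_mul, Polynomial.eval_mul,
    Polynomial.eval_pow, Polynomial.eval_sub, Polynomial.eval_natCast, Polynomial.eval_X,
    Polynomial.eval_one] at this
  rw [← this]
  refine Finset.sum_congr rfl fun M _ => ?_
  ring

open Filter Topology

lemma window_uniform {p : ℝ} (hp : 0 < p) (hp1 : p < 1) (m : ℕ) (ε : ℝ) (hε : 0 < ε) :
    ∀ᶠ x : ℕ in atTop, ∀ M : ℕ, M ≤ (x + 1).choose 2 →
      ((M : ℝ) - p * (((x + 1).choose 2 : ℕ) : ℝ)) ^ 2 ≤ (((x + 1).choose 2 : ℕ) : ℝ) * x →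
      |gav (x + 1) M m - Real.exp (-2 / p) * (2 / p) ^ m / m.factorial| < ε := by
  set q := Real.exp (-2 / p) * (2 / p) ^ m / m.factorial with hq
  have key : ∀ x : ℕ, ∃ M : ℕ, M ≤ (x + 1).choose 2 ∧
      ((M : ℝ) - p * (((x + 1).choose 2 : ℕ) : ℝ)) ^ 2 ≤ (((x + 1).choose 2 : ℕ) : ℝ) * x ∧
      (|gav (x + 1) M m - q| < ε → ∀ M : ℕ, M ≤ (x + 1).choose 2 →
      ((M : ℝ) - p * (((x + 1).choose 2 : ℕ) : ℝ)) ^ 2 ≤ (((x + 1).choose 2 : ℕ) : ℝ) * x →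
      |gav (x + 1) M m - q| < ε) := by
    intro x
    by_cases h : ∀ M : ℕ, M ≤ (x + 1).choose 2 →
      ((M : ℝ) - p * (((x + 1).choose 2 : ℕ) : ℝ)) ^ 2 ≤ (((x + 1).choose 2 : ℕ) : ℝ) * x →
      |gav (x + 1) M m - q| < ε
    · refine ⟨⌊p * (((x + 1).choose 2 : ℕ) : ℝ)⌋₊, ?_, ?_, fun _ => h⟩
      · apply Nat.floor_le_of_le
        have : (0 : ℝ) ≤ (((x + 1).choose 2 : ℕ) : ℝ) := by positivity
        nlinarith
      · rcases Nat.eq_zero_or_pos x with rfl | hx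
        · simp
        · have h1 : (1 : ℝ) ≤ x := by exact_mod_cast hx
          have h2 : (1 : ℝ) ≤ (((x + 1).choose 2 : ℕ) : ℝ) := by rw [chooseN]; nlinarith
          have h3 := Nat.floor_le (show 0 ≤ p * (((x + 1).choose 2 : ℕ) : ℝ) by positivity)
          have h4 := Nat.lt_floor_add_one (p * (((x + 1).choose 2 : ℕ) : ℝ))
          have h5 : ((⌊p * (((x + 1).choose 2 : ℕ) : ℝ)⌋₊ : ℝ) - p * (((x + 1).choose 2 : ℕ) : ℝ)) ^ 2
              ≤ 1 := by
            rw [sq_le_one_iff_abs_le_one, abs_le]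
            constructor <;> linarith
          nlinarith
    · push Not at h
      obtain ⟨M, h1, h2, h3⟩ := h
      exact ⟨M, h1, h2, fun h => absurd h (not_lt.2 h3)⟩
  choose M hM1 hM2 hM3 using key
  have hlim : Tendsto (fun x : ℕ => (M x : ℝ) / (((x + 1).choose 2 : ℕ) : ℝ)) atTop (𝓝 p) := by
    have hs := lim_xN.sqrt
    rw [Real.sqrt_zero] at hs
    rw [tendsto_iff_dist_tendsto_zero]
    refine squeeze_zero' (Eventually.of_forall fun x => dist_nonneg) ?_ hs
    filter_upwards [eventually_gt_atTop 0] with x hx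
    have h1 : (0 : ℝ) < x := by exact_mod_cast hx
    have h2 : (0 : ℝ) < (((x + 1).choose 2 : ℕ) : ℝ) := by rw [chooseN]; positivity
    rw [Real.dist_eq]
    apply Real.abs_le_sqrt
    have h3 := hM2 x
    generalize (((x + 1).choose 2 : ℕ) : ℝ) = N at *
    rw [div_sub' h2.ne', div_pow, div_le_div_iff₀ (by positivity) h2]
    nlinarith
  have hg := gav_tendsto hp hM1 hlim m
  rw [← hq, Metric.tendsto_nhds] at hg
  filter_upwards [hg ε hε] with x hx
  rw [Real.dist_eq] at hx
  exact hM3 x hx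

lemma er_tendsto {p : ℝ} (hp : 0 < p) (hp1 : p < 1) (m : ℕ) :
    Tendsto (fun n => erdosRenyiProbCommonEdgesEq n p m) atTop
      (𝓝 (Real.exp (-2 / p) * (2 / p) ^ m / m.factorial)) := by
  rw [← tendsto_add_atTop_iff_nat 1, Metric.tendsto_nhds]
  intro ε hε
  set q := Real.exp (-2 / p) * (2 / p) ^ m / m.factorial with hq
  have hq0 : 0 ≤ q := by rw [hq]; positivity
  have hc : Tendsto (fun x : ℕ => (1 + q) * (1 / (x : ℝ))) atTop (𝓝 0) := by
    have := (tendsto_one_div_atTop_nhds_zero_nat (𝕜 := ℝ)).const_mul (1 + q)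
    rwa [mul_zero] at this
  have hc' := hc.eventually (gt_mem_nhds (show (0 : ℝ) < ε / 2 by linarith))
  filter_upwards [window_uniform hp hp1 m (ε / 2) (by linarith), hc', eventually_gt_atTop 0]
    with x hx hx2 hx0
  have h1 : (0 : ℝ) < x := by exact_mod_cast hx0
  rw [Real.dist_eq, er_eq]
  have h2 : (0 : ℝ) < (((x + 1).choose 2 : ℕ) : ℝ) := by rw [chooseN]; positivity
  rw [← hq] at hx
  have hpr := bin_prob ((x + 1).choose 2) p
  have hvr := bin_var ((x + 1).choose 2) p
  set B : ℕ → ℝ := fun M => (((x + 1).choose 2).choose M : ℝ) * p ^ M *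
    (1 - p) ^ ((x + 1).choose 2 - M) with hB
  have hB0 : ∀ M, 0 ≤ B M := by
    intro M
    have : 0 ≤ 1 - p := by linarith
    simp only [hB]; positivity
  change ∑ M ∈ range ((x + 1).choose 2 + 1), B M = 1 at hpr
  change ∑ M ∈ range ((x + 1).choose 2 + 1), B M * _ = _ at hvr
  change |∑ M ∈ range ((x + 1).choose 2 + 1), B M * gav (x + 1) M m - q| < ε
  have e1 : ∑ M ∈ range ((x + 1).choose 2 + 1), B M * gav (x + 1) M m - q =
      ∑ M ∈ range ((x + 1).choose 2 + 1), B M * (gav (x + 1) M m - q) := by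
    simp_rw [mul_sub]
    rw [Finset.sum_sub_distrib, ← Finset.sum_mul, hpr, one_mul]
  rw [e1]
  set c : ℝ := (1 + q) / ((((x + 1).choose 2 : ℕ) : ℝ) * x) with hcdef
  have hc0 : 0 ≤ c := by rw [hcdef]; positivity
  calc |∑ M ∈ range ((x + 1).choose 2 + 1), B M * (gav (x + 1) M m - q)|
      ≤ ∑ M ∈ range ((x + 1).choose 2 + 1), |B M * (gav (x + 1) M m - q)| :=
        Finset.abs_sum_le_sum_abs _ _
    _ ≤ ∑ M ∈ range ((x + 1).choose 2 + 1), (ε / 2 * B M +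
          c * (B M * ((M : ℝ) - p * (((x + 1).choose 2 : ℕ) : ℝ)) ^ 2)) := by
        refine Finset.sum_le_sum fun M hM => ?_
        rw [abs_mul, abs_of_nonneg (hB0 M)]
        have hMN : M ≤ (x + 1).choose 2 := by have := mem_range.1 hM; omega
        have : |gav (x + 1) M m - q| ≤ ε / 2 +
            c * ((M : ℝ) - p * (((x + 1).choose 2 : ℕ) : ℝ)) ^ 2 := by
          by_cases hw : ((M : ℝ) - p * (((x + 1).choose 2 : ℕ) : ℝ)) ^ 2 ≤
              (((x + 1).choose 2 : ℕ) : ℝ) * x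
          · have a1 := hx M hMN hw
            have a2 : 0 ≤ c * ((M : ℝ) - p * (((x + 1).choose 2 : ℕ) : ℝ)) ^ 2 := by positivity
            linarith
          · push Not at hw
            have a1 : |gav (x + 1) M m - q| ≤ 1 + q := by
              have := gav_nonneg (x + 1) M m
              have := gav_le_one (x + 1) M m
              rw [abs_le]; constructor <;> linarith
            have a2 : 1 + q = c * ((((x + 1).choose 2 : ℕ) : ℝ) * x) := by
              rw [hcdef]; field_simp
            have a3 := mul_le_mul_of_nonneg_left hw.le hc0
            linarith
        calc B M * |gav (x + 1) M m - q| ≤ B M * (ε / 2 +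
            c * ((M : ℝ) - p * (((x + 1).choose 2 : ℕ) : ℝ)) ^ 2) :=
              mul_le_mul_of_nonneg_left this (hB0 M)
          _ = _ := by ring
    _ = ε / 2 + c * ((((x + 1).choose 2 : ℕ) : ℝ) * p * (1 - p)) := by
        rw [Finset.sum_add_distrib, ← Finset.mul_sum, ← Finset.mul_sum, hpr, hvr, mul_one]
    _ ≤ ε / 2 + (1 + q) * (1 / (x : ℝ)) := by
        have a1 : c * ((((x + 1).choose 2 : ℕ) : ℝ) * p * (1 - p)) =
            (1 + q) * (1 / (x : ℝ)) * (p * (1 - p)) := by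
          rw [hcdef]; field_simp
        have a2 : p * (1 - p) ≤ 1 := by nlinarith
        rw [a1]
        have a3 : (1 + q) * (1 / (x : ℝ)) * (p * (1 - p)) ≤ (1 + q) * (1 / (x : ℝ)) * 1 := by
          gcongr
        linarith
    _ < ε := by linarith

end ERP

/-- Fix a real `0 < p < 1` and `m ≥ 0`.  For `G ~ G(n,p)` and `X` the
number of common edges of two independent uniformly random spanning trees of `G`
(with `X = 0` if `G` is disconnected), `P(X = m) → e^(−2/p) (2/p)^m / m!` as `n → ∞`;
that is, `X` converges in distribution to a Poisson distribution of mean `2/p`. -/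
theorem erdos_renyi_poisson_limit (p : ℝ) (hp : 0 < p) (hp1 : p < 1) (m : ℕ) :
    Filter.Tendsto (fun n => erdosRenyiProbCommonEdgesEq n p m) Filter.atTop
      (nhds (Real.exp (-2 / p) * (2 / p) ^ m / m.factorial)) := by
  exact ERP.er_tendsto hp hp1 m
end
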